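/- arXiv:2006.15200 — 2 statements merged into one kernel-verified Lean document; each statement's English description precedes it below -/
import Mathlib

section
/- Let a and b be nonzero integers that are multiplicatively independent. Then, as x → ∞, the number of primes p ≤ x for which max{ℓ_a(p), ℓ_b(p), ℓ_{ab}(p), ℓ_{a²b}(p), ℓ_{ab²}(p)} ≤ p^{8/15}/exp(2√(log p)) is o(x/log x). (Primes dividing ab may be placed in the exceptional set.) -/
open Filter Asymptotics

namespace OrdAux

/-- Divisibility lemma: pairwise lcms divisible by `D` force a large product. -/
lemma prod_ge (D : ℕ) (hD : 0 < D) (o : Fin 5 → ℕ) (ho : ∀ i, 0 < o i)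
    (h : ∀ i j, i ≠ j → D ∣ Nat.lcm (o i) (o j)) : D ^ 4 ≤ ∏ i, o i := by
  have he : ∀ i, ∃ f, D = Nat.gcd D (o i) * f := fun i => Nat.gcd_dvd_left D (o i)
  choose f hf using he
  have hfD : ∀ i, f i ∣ D := fun i => ⟨_, by rw [mul_comm]; exact hf i⟩
  have hcop : ∀ i j, i ≠ j → Nat.Coprime (f i) (f j) := by
    intro i j hij
    by_contra hne
    obtain ⟨q, hq, hqi, hqj⟩ := Nat.Prime.not_coprime_iff_dvd.1 hne
    obtain ⟨s, hs⟩ := hqi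
    obtain ⟨t, ht⟩ := hqj
    have hqD : q ∣ D := (Dvd.intro _ hs.symm).trans (hfD i)
    obtain ⟨E, hE⟩ := hqD
    have h1 : Nat.gcd D (o i) ∣ E := ⟨s, by
      have := hf i
      rw [hs] at this
      apply Nat.eq_of_mul_eq_mul_left hq.pos
      rw [← hE]
      calc D = Nat.gcd D (o i) * (q * s) := this
        _ = _ := by ring⟩
    have h2 : Nat.gcd D (o j) ∣ E := ⟨t, by
      have := hf j
      rw [ht] at this
      apply Nat.eq_of_mul_eq_mul_left hq.pos
      rw [← hE]
      calc D = Nat.gcd D (o j) * (q * t) := this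
        _ = _ := by ring⟩
    have h3 : D ∣ E := by
      have h4 : Nat.lcm (Nat.gcd D (o i)) (Nat.gcd D (o j)) = Nat.gcd D (Nat.lcm (o i) (o j)) := by
        have hi := (ho i).ne'
        have hj := (ho j).ne'
        have gi := Nat.gcd_ne_zero_left (n := o i) hD.ne'
        have gj := Nat.gcd_ne_zero_left (n := o j) hD.ne'
        apply Nat.eq_of_factorization_eq (Nat.lcm_ne_zero gi gj) (Nat.gcd_ne_zero_left hD.ne')
        intro q
        rw [Nat.factorization_lcm gi gj, Nat.factorization_gcd hD.ne' hi,
          Nat.factorization_gcd hD.ne' hj, Nat.factorization_gcd hD.ne' (Nat.lcm_ne_zero hi hj),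
          Nat.factorization_lcm hi hj]
        simp only [Finsupp.sup_apply, Finsupp.inf_apply]
        omega
      have h5 := Nat.lcm_dvd h1 h2
      rw [h4, Nat.gcd_eq_left (h i j hij)] at h5
      exact h5
    have hE0 : 0 < E := by
      rcases Nat.eq_zero_or_pos E with h0 | h0
      · subst h0; omega
      · exact h0
    have := Nat.le_of_dvd hE0 h3
    have := hq.two_le
    nlinarith
  have hprod : ∏ i, f i ∣ D := by
    apply Finset.prod_dvd_of_isRelPrime
    · intro i _ j _ hij
      exact Nat.coprime_iff_isRelPrime.1 (hcop i j hij)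
    · intro i _; exact hfD i
  have h1 : D ^ 5 = (∏ i, Nat.gcd D (o i)) * ∏ i, f i := by
    rw [← Finset.prod_mul_distrib]
    rw [Finset.prod_congr rfl (fun i _ => (hf i).symm)]
    simp
  have h2 : (∏ i, Nat.gcd D (o i)) ≤ ∏ i, o i :=
    Finset.prod_le_prod' fun i _ => Nat.gcd_le_right _ (ho i)
  have h3 := Nat.le_of_dvd hD hprod
  have h4 : D ^ 4 * D ≤ (∏ i, o i) * D := by
    calc D ^ 4 * D = D ^ 5 := by ring
      _ ≤ _ := by rw [h1]; exact Nat.mul_le_mul h2 h3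
  exact Nat.le_of_mul_le_mul_right h4 hD

/-- Five directions in a monoid. -/
lemma dvd_six {M : Type*} [CommMonoid M] (a b : M) (o : Fin 5 → ℕ)
    (ho : o = ![orderOf a, orderOf b, orderOf (a * b), orderOf (a ^ 2 * b), orderOf (a * b ^ 2)])
    (i j : Fin 5) (hij : i ≠ j) :
    Nat.lcm (orderOf a) (orderOf b) ∣ 6 * Nat.lcm (o i) (o j) := by
  have key : ∀ i : Fin 5, ∀ m, o i ∣ m →
      (![a ^ m, b ^ m, a ^ m * b ^ m, (a ^ m) ^ 2 * b ^ m, a ^ m * (b ^ m) ^ 2] : Fin 5 → M) i = 1 := by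
    intro i m hm
    subst ho
    fin_cases i
    · exact orderOf_dvd_iff_pow_eq_one.1 hm
    · exact orderOf_dvd_iff_pow_eq_one.1 hm
    · have := orderOf_dvd_iff_pow_eq_one.1 hm
      rw [mul_pow] at this; exact this
    · have := orderOf_dvd_iff_pow_eq_one.1 hm
      rw [mul_pow, ← pow_mul, mul_comm 2 m, pow_mul] at this; exact this
    · have := orderOf_dvd_iff_pow_eq_one.1 hm
      rw [mul_pow, ← pow_mul, mul_comm 2 m, pow_mul] at this; exact this
  have h1 := key i _ (Nat.dvd_lcm_left (o i) (o j))
  have h2 := key j _ (Nat.dvd_lcm_right (o i) (o j))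
  set m := Nat.lcm (o i) (o j)
  suffices H : (a ^ m) ^ 6 = 1 ∧ (b ^ m) ^ 6 = 1 by
    apply Nat.lcm_dvd
    · apply orderOf_dvd_of_pow_eq_one; rw [mul_comm, pow_mul]; exact H.1
    · apply orderOf_dvd_of_pow_eq_one; rw [mul_comm, pow_mul]; exact H.2
  generalize a ^ m = α at *
  generalize b ^ m = β at *
  have hA : ∀ x y : M, x = 1 → x * y = 1 → y = 1 := by rintro x y rfl h; simpa using h
  have hB : ∀ x y : M, x = 1 → x ^ 2 * y = 1 → y = 1 := by rintro x y rfl h; simpa using h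
  have hC : ∀ x y : M, x = 1 → x * y ^ 2 = 1 → y ^ 2 = 1 := by rintro x y rfl h; simpa using h
  have hD : ∀ x y : M, x * y = 1 → x ^ 2 * y = 1 → x = 1 := by
    intro x y h h'
    rw [pow_two, mul_assoc, h, mul_one] at h'; exact h'
  have hE : ∀ x y : M, x ^ 2 * y = 1 → x * y ^ 2 = 1 → x ^ 3 = 1 := by
    intro x y h h'
    calc x ^ 3 = x ^ 3 * (x * y ^ 2) := by rw [h', mul_one]
      _ = (x ^ 2 * y) ^ 2 := by
        rw [mul_pow, ← pow_mul, ← mul_assoc, ← pow_succ]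
      _ = 1 := by rw [h, one_pow]
  have p1 : ∀ x : M, x = 1 → x ^ 6 = 1 := by rintro x rfl; simp
  have p2 : ∀ x : M, x ^ 2 = 1 → x ^ 6 = 1 := by
    intro x h; rw [show 6 = 2 * 3 from rfl, pow_mul, h, one_pow]
  have p3 : ∀ x : M, x ^ 3 = 1 → x ^ 6 = 1 := by
    intro x h; rw [show 6 = 3 * 2 from rfl, pow_mul, h, one_pow]
  have main : ∀ i j : Fin 5, i < j →
      (![α, β, α * β, α ^ 2 * β, α * β ^ 2] : Fin 5 → M) i = 1 →
      (![α, β, α * β, α ^ 2 * β, α * β ^ 2] : Fin 5 → M) j = 1 → α ^ 6 = 1 ∧ β ^ 6 = 1 := by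
    clear h1 h2 key
    intro i j hij h1 h2
    fin_cases i <;> fin_cases j <;> first | (exact absurd hij (by decide)) | skip
    all_goals simp at h1 h2
    · exact ⟨p1 _ h1, p1 _ h2⟩
    · exact ⟨p1 _ h1, p1 _ (hA _ _ h1 h2)⟩
    · exact ⟨p1 _ h1, p1 _ (hB _ _ h1 h2)⟩
    · exact ⟨p1 _ h1, p2 _ (hC _ _ h1 h2)⟩
    · rw [mul_comm] at h2; exact ⟨p1 _ (hA _ _ h1 h2), p1 _ h1⟩
    · rw [mul_comm] at h2; exact ⟨p2 _ (hC _ _ h1 h2), p1 _ h1⟩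
    · rw [mul_comm] at h2; exact ⟨p1 _ (hB _ _ h1 h2), p1 _ h1⟩
    · have := hD _ _ h1 h2
      exact ⟨p1 _ this, p1 _ (hA _ _ this h1)⟩
    · rw [mul_comm] at h1 h2
      have := hD _ _ h1 h2
      exact ⟨p1 _ (hA _ _ this h1), p1 _ this⟩
    · refine ⟨p3 _ (hE _ _ h1 h2), p3 _ (hE β α ?_ ?_)⟩
      · rw [mul_comm]; exact h2
      · rw [mul_comm]; exact h1
  rcases lt_or_gt_of_ne hij with h | h
  · exact main i j h h1 h2
  · exact main j i h h2 h1

lemma lcm_bound {M : Type*} [CommMonoid M] (a b : M) (o : Fin 5 → ℕ)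
    (ho : o = ![orderOf a, orderOf b, orderOf (a * b), orderOf (a ^ 2 * b), orderOf (a * b ^ 2)])
    (hpos : ∀ i, 0 < o i) :
    ∃ D' : ℕ, Nat.lcm (orderOf a) (orderOf b) ≤ 6 * D' ∧ D' ^ 4 ≤ ∏ i, o i := by
  set D := Nat.lcm (orderOf a) (orderOf b) with hDdef
  have hD : 0 < D := by
    apply Nat.lcm_pos
    · have := hpos 0; rw [ho] at this; exact this
    · have := hpos 1; rw [ho] at this; exact this
  have hg : 0 < Nat.gcd D 6 := Nat.gcd_pos_of_pos_left _ hD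
  refine ⟨D / Nat.gcd D 6, ?_, ?_⟩
  · calc D = Nat.gcd D 6 * (D / Nat.gcd D 6) := (Nat.mul_div_cancel' (Nat.gcd_dvd_left _ _)).symm
      _ ≤ _ := Nat.mul_le_mul_right _ (Nat.gcd_le_right _ (by norm_num))
  · apply prod_ge _ (Nat.div_pos (Nat.gcd_le_left _ hD) hg) o hpos
    intro i j hij
    have h := dvd_six a b o ho i j hij
    rw [← hDdef] at h
    have hc : Nat.Coprime (D / Nat.gcd D 6) (6 / Nat.gcd D 6) := Nat.coprime_div_gcd_div_gcd hg
    apply hc.dvd_of_dvd_mul_left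
    apply Nat.dvd_of_mul_dvd_mul_left hg
    rw [← mul_assoc, Nat.mul_div_cancel' (Nat.gcd_dvd_left _ _),
      Nat.mul_div_cancel' (Nat.gcd_dvd_right _ _)]
    exact h

/-- The auxiliary integer. -/
def Q (a b : ℤ) (N : ℕ) : ℤ :=
  ∏ ij ∈ (Finset.range (N + 1) ×ˢ Finset.range (N + 1)).erase (0, 0),
    ((a ^ ij.1 * b ^ ij.2 - 1) * (a ^ ij.1 - b ^ ij.2))

lemma Q_ne_zero (a b : ℤ) (ha : a ≠ 0) (hb : b ≠ 0)
    (hind : ∀ m n : ℤ, (a : ℚ) ^ m * (b : ℚ) ^ n = 1 → m = 0 ∧ n = 0) (N : ℕ) :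
    Q a b N ≠ 0 := by
  have hbQ : (b : ℚ) ≠ 0 := by exact_mod_cast hb
  rw [Q, Finset.prod_ne_zero_iff]
  rintro ⟨i, j⟩ hij
  have hne := Finset.ne_of_mem_erase hij
  apply mul_ne_zero
  · intro h
    apply hne
    have h' : (a : ℚ) ^ (i : ℤ) * (b : ℚ) ^ (j : ℤ) = 1 := by
      rw [zpow_natCast, zpow_natCast]; exact_mod_cast sub_eq_zero.1 h
    have := hind _ _ h'
    ext <;> simp <;> omega
  · intro h
    apply hne
    have h' : (a : ℚ) ^ (i : ℤ) * (b : ℚ) ^ (-(j : ℤ)) = 1 := by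
      rw [zpow_neg, zpow_natCast, zpow_natCast]
      have : (a : ℚ) ^ i = (b : ℚ) ^ j := by exact_mod_cast sub_eq_zero.1 h
      rw [this, mul_inv_cancel₀ (pow_ne_zero _ hbQ)]
    have := hind _ _ h'
    ext <;> simp <;> omega

lemma Q_bound (a b : ℤ) (ha : a ≠ 0) (hb : b ≠ 0) (N : ℕ) :
    (Q a b N).natAbs ≤ 2 ^ (2 * (a * b).natAbs * (N + 1) ^ 3) := by
  set M := (a * b).natAbs with hM
  have hA : 1 ≤ a.natAbs := Int.natAbs_pos.2 ha
  have hB : 1 ≤ b.natAbs := Int.natAbs_pos.2 hb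
  have hMab : M = a.natAbs * b.natAbs := Int.natAbs_mul a b
  have hM1 : 1 ≤ M := by rw [hMab]; exact Nat.mul_pos hA hB
  have hterm : ∀ ij ∈ (Finset.range (N + 1) ×ˢ Finset.range (N + 1)).erase (0, 0),
      ((a ^ ij.1 * b ^ ij.2 - 1) * (a ^ ij.1 - b ^ ij.2)).natAbs ≤ (2 ^ (M * (N + 1))) ^ 2 := by
    rintro ⟨i, j⟩ hij
    have h := Finset.mem_of_mem_erase hij
    simp only [Finset.mem_product, Finset.mem_range] at h
    have hp1 : a.natAbs ^ i ≤ a.natAbs ^ N := Nat.pow_le_pow_right hA (by omega)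
    have hp2 : b.natAbs ^ j ≤ b.natAbs ^ N := Nat.pow_le_pow_right hB (by omega)
    have hq1 : 1 ≤ a.natAbs ^ N := Nat.one_le_pow _ _ hA
    have hq2 : 1 ≤ b.natAbs ^ N := Nat.one_le_pow _ _ hB
    have hMN : M ^ N = a.natAbs ^ N * b.natAbs ^ N := by rw [hMab, mul_pow]
    have hbig : 2 * M ^ N ≤ 2 ^ (M * (N + 1)) := by
      have h1 : M ≤ 2 ^ M := Nat.lt_two_pow_self.le
      calc 2 * M ^ N ≤ 2 ^ M * (2 ^ M) ^ N := by
            apply Nat.mul_le_mul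
            · calc 2 = 2 ^ 1 := rfl
                _ ≤ 2 ^ M := Nat.pow_le_pow_right (by norm_num) hM1
            · exact Nat.pow_le_pow_left h1 _
        _ = _ := by rw [← pow_mul, ← pow_add]; ring_nf
    rw [Int.natAbs_mul, pow_two]
    apply Nat.mul_le_mul
    · refine le_trans ?_ hbig
      refine (Int.natAbs_sub_le _ _).trans ?_
      rw [Int.natAbs_mul, Int.natAbs_pow, Int.natAbs_pow]
      simp only [Int.natAbs_one]
      have := Nat.mul_le_mul hp1 hp2
      have := Nat.mul_le_mul hq1 hq2
      rw [hMN]; omega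
    · refine le_trans ?_ hbig
      refine (Int.natAbs_sub_le _ _).trans ?_
      rw [Int.natAbs_pow, Int.natAbs_pow]
      rw [hMN]; nlinarith
  rw [Q, ← Int.natAbsHom_apply, map_prod]
  refine (Finset.prod_le_pow_card _ _ _ hterm).trans ?_
  rw [← pow_mul, ← pow_mul]
  apply Nat.pow_le_pow_right (by norm_num)
  have hcard : ((Finset.range (N + 1) ×ˢ Finset.range (N + 1)).erase (0, 0)).card ≤ (N+1)^2 := by
    refine (Finset.card_le_card (Finset.erase_subset _ _)).trans ?_
    simp [pow_two]
  calc M * (N + 1) * (2 * _) ≤ M * (N+1) * (2 * (N+1)^2) :=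
        Nat.mul_le_mul_left _ (Nat.mul_le_mul_left _ hcard)
    _ = 2 * M * (N + 1) ^ 3 := by ring

lemma card_primeFactors_le (n k : ℕ) (hn : n ≠ 0) (h : n ≤ 2 ^ k) : n.primeFactors.card ≤ k := by
  have h1 : 2 ^ n.primeFactors.card ≤ ∏ p ∈ n.primeFactors, p := by
    apply Finset.pow_card_le_prod
    intro p hp
    exact (Nat.prime_of_mem_primeFactors hp).two_le
  have h2 := Nat.le_of_dvd (Nat.pos_of_ne_zero hn) (Nat.prod_primeFactors_dvd n)
  exact (Nat.pow_le_pow_iff_right (by norm_num : 1 < 2)).1 (h1.trans (h2.trans h))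

lemma dvd_Q (a b : ℤ) (p : ℕ) [Fact p.Prime] (ha : (a : ZMod p) ≠ 0) (hb : (b : ZMod p) ≠ 0)
    (N : ℕ) (hN : Nat.lcm (orderOf (a : ZMod p)) (orderOf (b : ZMod p)) < (N + 1) ^ 2)
    (hD : 0 < Nat.lcm (orderOf (a : ZMod p)) (orderOf (b : ZMod p))) :
    (p : ℤ) ∣ Q a b N := by
  set D := Nat.lcm (orderOf (a : ZMod p)) (orderOf (b : ZMod p)) with hDd
  have haD : (a : ZMod p) ^ D = 1 := orderOf_dvd_iff_pow_eq_one.1 (Nat.dvd_lcm_left _ _)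
  have hbD : (b : ZMod p) ^ D = 1 := orderOf_dvd_iff_pow_eq_one.1 (Nat.dvd_lcm_right _ _)
  have hcard : (Polynomial.nthRootsFinset D (1 : ZMod p)).card ≤ D := by
    rw [Polynomial.nthRootsFinset_def]
    exact (Multiset.toFinset_card_le _).trans (Polynomial.card_nthRoots _ _)
  obtain ⟨⟨i, j⟩, hx, ⟨i', j'⟩, hy, hne, heq⟩ := Finset.exists_ne_map_eq_of_card_lt_of_maps_to
    (s := Finset.range (N + 1) ×ˢ Finset.range (N + 1))
    (t := Polynomial.nthRootsFinset D (1 : ZMod p))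
    (f := fun ij => (a : ZMod p) ^ ij.1 * (b : ZMod p) ^ ij.2)
    (by
      rw [Finset.card_product, Finset.card_range, ← pow_two]
      omega)
    (by
      rintro ⟨i, j⟩ _
      simp only [Finset.mem_coe]
      rw [Polynomial.mem_nthRootsFinset hD, mul_pow, ← pow_mul, ← pow_mul, mul_comm i, mul_comm j,
        pow_mul, pow_mul, haD, hbD, one_pow, one_pow, one_mul])
  simp only [Finset.mem_product, Finset.mem_range] at hx hy heq
  -- reduce to a single pair
  have fin : ∀ I J : ℕ, I ≤ N → J ≤ N → (I, J) ≠ (0, 0) →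
      ((a : ZMod p) ^ I * (b : ZMod p) ^ J = 1 ∨ (a : ZMod p) ^ I = (b : ZMod p) ^ J) →
      (p : ℤ) ∣ Q a b N := by
    intro I J hI hJ h0 h
    have hmem : (I, J) ∈ (Finset.range (N + 1) ×ˢ Finset.range (N + 1)).erase (0, 0) := by
      rw [Finset.mem_erase, Finset.mem_product, Finset.mem_range, Finset.mem_range]
      exact ⟨h0, by simp; omega, by simp; omega⟩
    refine dvd_trans ?_ (Finset.dvd_prod_of_mem _ hmem)
    rw [← ZMod.intCast_zmod_eq_zero_iff_dvd]
    push_cast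
    rcases h with h | h
    · rw [h]; simp
    · rw [h]; simp
  have hne' : i ≠ i' ∨ j ≠ j' := by
    by_contra! hc
    exact hne (by rw [hc.1, hc.2])
  have main : ∀ i j i' j' : ℕ, i' ≤ i → i ≤ N → j ≤ N → j' ≤ N → (i ≠ i' ∨ j ≠ j') →
      (a : ZMod p) ^ i * (b : ZMod p) ^ j = (a : ZMod p) ^ i' * (b : ZMod p) ^ j' →
      (p : ℤ) ∣ Q a b N := by
    intro i j i' j' hi hiN hjN hjN' hne heq
    obtain ⟨I, rfl⟩ := Nat.exists_eq_add_of_le hi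
    have hai : (a : ZMod p) ^ i' ≠ 0 := pow_ne_zero _ ha
    rw [pow_add, mul_assoc] at heq
    have heq' := mul_left_cancel₀ hai heq
    rcases le_total j' j with hj | hj
    · obtain ⟨J, rfl⟩ := Nat.exists_eq_add_of_le hj
      apply fin I J (by omega) (by omega) (by simp; omega)
      left
      have hbj : (b : ZMod p) ^ j' ≠ 0 := pow_ne_zero _ hb
      apply mul_left_cancel₀ hbj
      rw [mul_one]
      refine Eq.trans ?_ heq'
      rw [pow_add]; ring
    · obtain ⟨J, rfl⟩ := Nat.exists_eq_add_of_le hj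
      apply fin I J (by omega) (by omega) (by simp; omega)
      right
      have hbj : (b : ZMod p) ^ j ≠ 0 := pow_ne_zero _ hb
      apply mul_right_cancel₀ hbj
      rw [heq', pow_add]; ring
  rcases le_total i' i with h | h
  · exact main i j i' j' h (by omega) (by omega) (by omega) hne' heq
  · exact main i' j' i j h (by omega) (by omega) (by omega) (by omega) heq.symm

/-- The threshold. -/
noncomputable def r (x : ℝ) : ℝ :=
  3 * (Real.exp (Real.log x / 3) * Real.exp (-(Real.sqrt (Real.log x) / 2)))

lemma bad_dvd (a b : ℤ) (x : ℝ) (hx : 1 < x) (p : ℕ) (hp : p.Prime) (hpx : (p : ℝ) ≤ x)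
    (hpl : Real.log x / 4 ≤ Real.log p)
    (hab : ¬ (p : ℤ) ∣ a * b)
    (h : (max (max (max (max (orderOf ((a : ZMod p)))
            (orderOf ((b : ZMod p))))
            (orderOf (((a * b : ℤ) : ZMod p))))
            (orderOf (((a ^ 2 * b : ℤ) : ZMod p))))
            (orderOf (((a * b ^ 2 : ℤ) : ZMod p))) : ℝ)
          ≤ (p : ℝ) ^ ((8 : ℝ) / 15) / Real.exp (2 * Real.sqrt (Real.log p))) :
    (p : ℤ) ∣ Q a b ⌊r x⌋₊ := by
  have : Fact p.Prime := ⟨hp⟩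
  have hab' : (a : ZMod p) * (b : ZMod p) ≠ 0 := by
    intro h0
    apply hab
    rw [← ZMod.intCast_zmod_eq_zero_iff_dvd]
    push_cast; exact h0
  have ha := left_ne_zero_of_mul hab'
  have hb := right_ne_zero_of_mul hab'
  push_cast at h
  set o : Fin 5 → ℕ := ![orderOf (a : ZMod p), orderOf (b : ZMod p),
    orderOf ((a : ZMod p) * b), orderOf ((a : ZMod p) ^ 2 * b), orderOf ((a : ZMod p) * b ^ 2)] with ho
  set L : ℝ := (p : ℝ) ^ ((8 : ℝ) / 15) / Real.exp (2 * Real.sqrt (Real.log p)) with hL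
  have hord : ∀ y : ZMod p, y ≠ 0 → 0 < orderOf y := by
    intro y hy
    have := orderOf_pos (Units.mk0 y hy)
    rwa [← orderOf_units, Units.val_mk0] at this
  have hpos : ∀ i, 0 < o i := by
    intro i
    fin_cases i
    · exact hord _ ha
    · exact hord _ hb
    · exact hord _ hab'
    · exact hord _ (mul_ne_zero (pow_ne_zero _ ha) hb)
    · exact hord _ (mul_ne_zero ha (pow_ne_zero _ hb))
  have hle : ∀ i, (o i : ℝ) ≤ L := by
    simp only [max_le_iff] at h
    obtain ⟨⟨⟨⟨h1, h2⟩, h3⟩, h4⟩, h5⟩ := h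
    intro i
    fin_cases i
    · exact h1
    · exact h2
    · exact h3
    · exact h4
    · exact h5
  obtain ⟨D', hD1, hD2⟩ := lcm_bound (a : ZMod p) (b : ZMod p) o ho hpos
  have hprod : (D' : ℝ) ^ 4 ≤ L ^ 5 := by
    calc (D' : ℝ) ^ 4 ≤ ((∏ i, o i : ℕ) : ℝ) := by exact_mod_cast hD2
      _ = ∏ i, (o i : ℝ) := by push_cast; rfl
      _ ≤ ∏ i : Fin 5, L := Finset.prod_le_prod (fun i _ => Nat.cast_nonneg _) (fun i _ => hle i)
      _ = L ^ 5 := by simp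
  have hp0 : (0 : ℝ) < p := by exact_mod_cast hp.pos
  have hlx : 0 < Real.log x := Real.log_pos hx
  have hlp : Real.log p ≤ Real.log x := Real.log_le_log hp0 hpx
  have hsq : Real.sqrt (Real.log x) / 2 ≤ Real.sqrt (Real.log p) := by
    apply Real.le_sqrt_of_sq_le
    rw [div_pow, Real.sq_sqrt hlx.le]; linarith
  have hL5 : L ^ 5 ≤ (Real.exp (Real.log x / 3 * 2 - Real.sqrt (Real.log x))) ^ 4 := by
    rw [hL, Real.rpow_def_of_pos hp0, ← Real.exp_sub, ← Real.exp_nat_mul, ← Real.exp_nat_mul]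
    apply Real.exp_le_exp.2
    have := Real.sqrt_nonneg (Real.log x)
    push_cast
    linarith
  have hD' : (D' : ℝ) ≤ Real.exp (Real.log x / 3 * 2 - Real.sqrt (Real.log x)) :=
    le_of_pow_le_pow_left₀ (by norm_num) (Real.exp_pos _).le (hprod.trans hL5)
  have hr2 : (r x) ^ 2 = 9 * Real.exp (Real.log x / 3 * 2 - Real.sqrt (Real.log x)) := by
    rw [r, ← Real.exp_add, mul_pow, ← Real.exp_nat_mul]
    norm_num
    ring
  have hr0 : 0 ≤ r x := by unfold r; positivity
  apply dvd_Q a b p ha hb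
  · have h1 : ((Nat.lcm (orderOf (a : ZMod p)) (orderOf (b : ZMod p)) : ℕ) : ℝ) ≤ 6 * D' := by
      exact_mod_cast hD1
    have h2 : r x < (⌊r x⌋₊ : ℝ) + 1 := Nat.lt_floor_add_one _
    have h3 : (r x) ^ 2 < ((⌊r x⌋₊ : ℝ) + 1) ^ 2 := by gcongr
    have h4 := Real.exp_pos (Real.log x / 3 * 2 - Real.sqrt (Real.log x))
    have : ((Nat.lcm (orderOf (a : ZMod p)) (orderOf (b : ZMod p)) : ℕ) : ℝ)
        < ((⌊r x⌋₊ : ℝ) + 1) ^ 2 := by linarith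
    exact_mod_cast this
  · exact Nat.lcm_pos (hord _ ha) (hord _ hb)

lemma count (a b : ℤ) (ha : a ≠ 0) (hb : b ≠ 0)
    (hind : ∀ m n : ℤ, (a : ℚ) ^ m * (b : ℚ) ^ n = 1 → m = 0 ∧ n = 0) (x : ℝ) (hx : 1 < x) :
    (Nat.card {p : ℕ |
        Nat.Prime p ∧ (p : ℝ) ≤ x ∧ ¬ (p : ℤ) ∣ a * b ∧
        (max (max (max (max (orderOf ((a : ZMod p)))
            (orderOf ((b : ZMod p))))
            (orderOf (((a * b : ℤ) : ZMod p))))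
            (orderOf (((a ^ 2 * b : ℤ) : ZMod p))))
            (orderOf (((a * b ^ 2 : ℤ) : ZMod p))) : ℝ)
          ≤ (p : ℝ) ^ ((8 : ℝ) / 15) / Real.exp (2 * Real.sqrt (Real.log p))} : ℝ)
      ≤ (Real.exp (Real.log x / 4) + 1) + 2 * (a * b).natAbs * (8 * (1 + (r x) ^ 3)) := by
  classical
  set N := ⌊r x⌋₊ with hN
  set S := {p : ℕ |
        Nat.Prime p ∧ (p : ℝ) ≤ x ∧ ¬ (p : ℤ) ∣ a * b ∧
        (max (max (max (max (orderOf ((a : ZMod p)))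
            (orderOf ((b : ZMod p))))
            (orderOf (((a * b : ℤ) : ZMod p))))
            (orderOf (((a ^ 2 * b : ℤ) : ZMod p))))
            (orderOf (((a * b ^ 2 : ℤ) : ZMod p))) : ℝ)
          ≤ (p : ℝ) ^ ((8 : ℝ) / 15) / Real.exp (2 * Real.sqrt (Real.log p))} with hS
  set T : Finset ℕ := Finset.range (⌊Real.exp (Real.log x / 4)⌋₊ + 1) ∪ (Q a b N).natAbs.primeFactors
  have hQ0 : (Q a b N).natAbs ≠ 0 := Int.natAbs_ne_zero.2 (Q_ne_zero a b ha hb hind N)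
  have hsub : S ⊆ (T : Set ℕ) := by
    rintro p ⟨hp, hpx, hab, h⟩
    rw [Finset.mem_coe, Finset.mem_union]
    have hp0 : (0 : ℝ) < p := by exact_mod_cast hp.pos
    by_cases hpl : Real.log x / 4 ≤ Real.log p
    · right
      rw [Nat.mem_primeFactors]
      exact ⟨hp, Int.natCast_dvd.1 (bad_dvd a b x hx p hp hpx hpl hab h), hQ0⟩
    · left
      rw [Finset.mem_range]
      apply Nat.lt_succ_of_le
      apply Nat.le_floor
      rw [← Real.log_le_iff_le_exp hp0]
      exact (not_le.1 hpl).le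
  have h1 : Nat.card S ≤ T.card := by
    rw [Nat.card_coe_set_eq, ← Set.ncard_coe_finset]
    exact Set.ncard_le_ncard hsub (Finset.finite_toSet T)
  have h2 : T.card ≤ (⌊Real.exp (Real.log x / 4)⌋₊ + 1) + 2 * (a * b).natAbs * (N + 1) ^ 3 := by
    refine (Finset.card_union_le _ _).trans ?_
    rw [Finset.card_range]
    exact Nat.add_le_add_left (card_primeFactors_le _ _ hQ0 (Q_bound a b ha hb N)) _
  have h3 : (Nat.card S : ℝ) ≤ ((⌊Real.exp (Real.log x / 4)⌋₊ : ℝ) + 1)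
      + 2 * (a * b).natAbs * ((N : ℝ) + 1) ^ 3 := by exact_mod_cast h1.trans h2
  refine h3.trans ?_
  have hr0 : 0 ≤ r x := by unfold r; positivity
  have h4 : (N : ℝ) ≤ r x := Nat.floor_le hr0
  have h5 : ((N : ℝ) + 1) ^ 3 ≤ 8 * (1 + (r x) ^ 3) := by
    have : ((N : ℝ) + 1) ^ 3 ≤ (r x + 1) ^ 3 := by gcongr
    nlinarith [mul_nonneg (add_nonneg hr0 zero_le_one) (sq_nonneg (r x - 1))]
  gcongr
  exact Nat.floor_le (Real.exp_pos _).le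

lemma asym (C : ℝ) :
    (fun x : ℝ => (Real.exp (Real.log x / 4) + 1) + 2 * C * (8 * (1 + (r x) ^ 3)))
      =o[atTop] (fun x : ℝ => x / Real.log x) := by
  have hlog := Real.tendsto_log_atTop
  have hs : Tendsto (fun x : ℝ => Real.sqrt (Real.log x)) atTop atTop :=
    Real.tendsto_sqrt_atTop.comp hlog
  -- the first term
  have e1 : (fun x : ℝ => Real.exp (Real.log x / 4)) =o[atTop] (fun x : ℝ => x / Real.log x) := by
    rw [isLittleO_iff_tendsto']
    · have h := (Real.tendsto_pow_mul_exp_neg_atTop_nhds_zero 1).comp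
        (hlog.const_mul_atTop (show (0:ℝ) < 3/4 by norm_num))
      have h' := h.const_mul (4/3 : ℝ)
      rw [mul_zero] at h'
      refine h'.congr' ?_
      filter_upwards [eventually_gt_atTop 1] with x hx
      have hx0 : 0 < x := by linarith
      have : Real.exp (Real.log x / 4) = x * Real.exp (-(3/4 * Real.log x)) := by
        nth_rewrite 2 [← Real.exp_log hx0]
        rw [← Real.exp_add]; ring_nf
      have hl : Real.log x ≠ 0 := (Real.log_pos hx).ne'
      rw [this]
      simp only [Function.comp]
      field_simp
    · filter_upwards [eventually_gt_atTop 1] with x hx h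
      have := div_pos (by linarith : 0 < x) (Real.log_pos hx)
      linarith
  have e2 : (fun x : ℝ => (1 : ℝ)) =o[atTop] (fun x : ℝ => x / Real.log x) := by
    refine IsBigO.trans_isLittleO ?_ e1
    apply IsBigO.of_bound 1
    filter_upwards [eventually_gt_atTop 1] with x hx
    rw [one_mul, norm_one, Real.norm_of_nonneg (Real.exp_pos _).le]
    apply Real.one_le_exp
    have := Real.log_pos hx
    positivity
  have e3 : (fun x : ℝ => (r x) ^ 3) =o[atTop] (fun x : ℝ => x / Real.log x) := by
    rw [isLittleO_iff_tendsto']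
    · have h := (Real.tendsto_pow_mul_exp_neg_atTop_nhds_zero 2).comp
        (hs.const_mul_atTop (show (0:ℝ) < 3/2 by norm_num))
      have h' := h.const_mul (12 : ℝ)
      rw [mul_zero] at h'
      refine h'.congr' ?_
      filter_upwards [eventually_gt_atTop 1] with x hx
      have hx0 : 0 < x := by linarith
      have hl := Real.log_pos hx
      have : (r x) ^ 3 = 27 * (x * Real.exp (-(3/2 * Real.sqrt (Real.log x)))) := by
        rw [r, ← Real.exp_add, mul_pow, ← Real.exp_nat_mul]
        nth_rewrite 3 [← Real.exp_log hx0]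
        rw [← Real.exp_add]
        norm_num
        ring_nf
      rw [this]
      simp only [Function.comp]
      rw [mul_pow, Real.sq_sqrt hl.le]
      have := hl.ne'
      field_simp
      norm_num
    · filter_upwards [eventually_gt_atTop 1] with x hx h
      have := div_pos (by linarith : 0 < x) (Real.log_pos hx)
      linarith
  exact (e1.add e2).add (((e2.add e3).const_mul_left 8).const_mul_left (2 * C))

end OrdAux

/-- **Theorem 1.** Let `a` and `b` be nonzero, multiplicatively independent integers.
For almost all primes `p` (all but `o(x/log x)` of the primes `p ≤ x`, where primes
dividing `ab` may be placed in the exceptional set), at least one of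
`a, b, ab, a²b, ab²` has multiplicative order mod `p` exceeding
`p^(8/15) / exp(2√(log p))`. -/
theorem stmt_0 (a b : ℤ) (ha : a ≠ 0) (hb : b ≠ 0)
    (hind : ∀ m n : ℤ, (a : ℚ) ^ m * (b : ℚ) ^ n = 1 → m = 0 ∧ n = 0) :
    (fun x : ℝ => (Nat.card {p : ℕ |
        Nat.Prime p ∧ (p : ℝ) ≤ x ∧ ¬ (p : ℤ) ∣ a * b ∧
        (max (max (max (max (orderOf ((a : ZMod p)))
            (orderOf ((b : ZMod p))))
            (orderOf (((a * b : ℤ) : ZMod p))))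
            (orderOf (((a ^ 2 * b : ℤ) : ZMod p))))
            (orderOf (((a * b ^ 2 : ℤ) : ZMod p))) : ℝ)
          ≤ (p : ℝ) ^ ((8 : ℝ) / 15) / Real.exp (2 * Real.sqrt (Real.log p))} : ℝ))
      =o[atTop] (fun x : ℝ => x / Real.log x) := by

  refine IsBigO.trans_isLittleO ?_ (OrdAux.asym ((a * b).natAbs : ℝ))
  apply IsBigO.of_bound 1
  filter_upwards [eventually_gt_atTop 1] with x hx
  have h := OrdAux.count a b ha hb hind x hx
  rw [one_mul, Real.norm_of_nonneg (Nat.cast_nonneg _)]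
  exact h.trans (le_abs_self _)
end

section
/- Let ε(x) be a positive-valued function of x ≥ 2 that tends to 0 as x → ∞, and let a and b be nonzero integers that are multiplicatively independent. Then, as x → ∞, the number of primes p ≤ x for which max{ℓ_a(p), ℓ_b(p), ℓ_{ab}(p), ℓ_{a²b}(p), ℓ_{ab²}(p)} ≤ p^{8/15 + ε(p)} is o(x/log x). -/
open Filter Asymptotics

lemma fac_sum (s : Finset ℕ) (hs : ∀ p ∈ s, p.Prime) (T : Finset ℕ)
    (hT : ∀ n ∈ T, n ≠ 0 ∧ n.primeFactors ⊆ s) :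
    ∑ n ∈ T, (1 / (n : ℝ)) ≤ ∏ p ∈ s, (1 - 1 / (p : ℝ))⁻¹ := by
  let f : ℕ →* ℝ := 
    { toFun := fun n => 1 / (n : ℝ), map_one' := by simp, map_mul' := by intro x y; push_cast; ring }
  have h1 : ∀ {p : ℕ}, p.Prime → ‖f p‖ < 1 := by
    intro p hp
    have : (1 : ℝ) < p := by exact_mod_cast hp.one_lt
    simp only [f, MonoidHom.coe_mk, OneHom.coe_mk]
    rw [Real.norm_of_nonneg (by positivity), div_lt_one (by linarith)]
    exact this
  obtain ⟨h2, h3⟩ := EulerProduct.summable_and_hasSum_factoredNumbers_prod_filter_prime_geometric h1 s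
  have h4 : (s.filter Nat.Prime) = s := by
    rw [Finset.filter_eq_self]; exact hs
  rw [h4] at h3
  have hmem : ∀ n ∈ T, n ∈ Nat.factoredNumbers s := fun n hn =>
    Nat.mem_factoredNumbers_of_primeFactors_subset (hT n hn).1 (hT n hn).2
  have h5 := sum_le_hasSum (T.subtype (fun n => n ∈ Nat.factoredNumbers s)) 
    (fun i _ => by simp only [f, MonoidHom.coe_mk, OneHom.coe_mk]; positivity) h3
  refine le_trans (le_of_eq ?_) h5
  rw [Finset.sum_subtype_of_mem (fun n => f n) hmem]
  simp [f]

lemma tot_prod (n : ℕ) (hn : n ≠ 0) : ∏ p ∈ n.primeFactors, (1 - 1 / (p : ℝ))⁻¹ = n / (Nat.totient n : ℝ) := by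
  have h := Nat.totient_eq_mul_prod_factors n
  have h2 : (Nat.totient n : ℝ) = n * ∏ p ∈ n.primeFactors, (1 - 1 / (p : ℝ)) := by
    have : ((Nat.totient n : ℚ) : ℝ) = ((n * ∏ p ∈ n.primeFactors, (1 - (p : ℚ)⁻¹) : ℚ) : ℝ) := by rw [h]
    push_cast at this
    simpa using this
  rw [h2, Finset.prod_inv_distrib]
  have : (n : ℝ) ≠ 0 := by exact_mod_cast hn
  rw [mul_comm, ← div_div, div_right_comm, div_self this, one_div]

/-- sifting moduli -/
def selL (d Z : ℕ) : Finset ℕ := (Finset.Icc 1 Z).filter (fun m => Squarefree m ∧ Nat.Coprime m d)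

noncomputable def selS (d Z : ℕ) : ℝ := ∑ m ∈ selL d Z, 1 / (Nat.totient m : ℝ)

lemma selS_lower (d Z : ℕ) (hd : d ≠ 0) :
    ∑ n ∈ Finset.Icc 1 Z, 1 / (n : ℝ) ≤ (d / (Nat.totient d : ℝ)) * selS d Z := by
  classical
  let r : ℕ → ℕ := fun n => ∏ p ∈ n.primeFactors.filter (fun p => ¬ p ∣ d), p
  have hrdvd : ∀ n, r n ∣ n := fun n => 
    (Finset.prod_dvd_prod_of_subset _ _ _ (Finset.filter_subset _ _)).trans (Nat.prod_primeFactors_dvd n)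
  have hrsq : ∀ n, Squarefree (r n) := fun n => 
    Squarefree.squarefree_of_dvd (Finset.prod_dvd_prod_of_subset _ _ _ (Finset.filter_subset _ _))
      (Nat.squarefree_iff_prime_squarefree.2 (by
        intro x hx hxx
        have := (UniqueFactorizationMonoid.squarefree_radical (a := n))
        rw [Nat.radical_eq_prod_primeFactors] at this
        exact hx.one_lt.ne' (Nat.isUnit_iff.1 (this x hxx))))
  have hrpf : ∀ n, (r n).primeFactors = n.primeFactors.filter (fun p => ¬ p ∣ d) := fun n => 
    Nat.primeFactors_prod (fun p hp => Nat.prime_of_mem_primeFactors (Finset.mem_filter.1 hp).1)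
  have hmaps : ∀ n ∈ Finset.Icc 1 Z, r n ∈ selL d Z := by
    intro n hn
    rw [Finset.mem_Icc] at hn
    simp only [selL, Finset.mem_filter, Finset.mem_Icc]
    refine ⟨⟨Nat.pos_of_dvd_of_pos (hrdvd n) hn.1, (Nat.le_of_dvd hn.1 (hrdvd n)).trans hn.2⟩, hrsq n, ?_⟩
    apply Nat.Coprime.prod_left
    intro p hp
    rw [Finset.mem_filter] at hp
    exact (Nat.Prime.coprime_iff_not_dvd (Nat.prime_of_mem_primeFactors hp.1)).2 hp.2
  rw [← Finset.sum_fiberwise_of_maps_to hmaps, selS, Finset.mul_sum]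
  apply Finset.sum_le_sum
  intro k hk
  simp only [selL, Finset.mem_filter, Finset.mem_Icc] at hk
  obtain ⟨⟨hk1, hkZ⟩, hksq, hkd⟩ := hk
  have hk0 : k ≠ 0 := by omega
  have hinj : Set.InjOn (fun n => n / k) ((Finset.Icc 1 Z).filter (fun n => r n = k) : Finset ℕ) := by
    intro n hn m hm h
    simp only [Finset.coe_filter, Set.mem_ofPred_eq] at hn hm
    have h1 : k ∣ n := hn.2 ▸ hrdvd n
    have h2 : k ∣ m := hm.2 ▸ hrdvd m
    exact (Nat.div_left_inj h1 h2).1 h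
  have key := fac_sum (k.primeFactors ∪ d.primeFactors)
    (by intro p hp; rcases Finset.mem_union.1 hp with h | h <;> exact Nat.prime_of_mem_primeFactors h)
    (((Finset.Icc 1 Z).filter (fun n => r n = k)).image (fun n => n / k)) (by
      intro m hm
      rw [Finset.mem_image] at hm
      obtain ⟨n, hn, rfl⟩ := hm
      rw [Finset.mem_filter, Finset.mem_Icc] at hn
      have h1 : k ∣ n := hn.2 ▸ hrdvd n
      refine ⟨(Nat.div_pos (Nat.le_of_dvd hn.1.1 h1) (by omega)).ne', ?_⟩
      intro p hp
      have hpp := Nat.prime_of_mem_primeFactors hp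
      have hpn : p ∣ n := (Nat.dvd_of_mem_primeFactors hp).trans (Nat.div_dvd_of_dvd h1)
      rw [Finset.mem_union]
      by_cases hpd : p ∣ d
      · right; exact Nat.mem_primeFactors.2 ⟨hpp, hpd, hd⟩
      · left
        rw [← hn.2, hrpf, Finset.mem_filter]
        exact ⟨Nat.mem_primeFactors.2 ⟨hpp, hpn, by omega⟩, hpd⟩)
  rw [Finset.sum_image hinj, Finset.prod_union hkd.disjoint_primeFactors, tot_prod k hk0, tot_prod d hd] at key
  have hkR : (0 : ℝ) < k := by exact_mod_cast hk1
  calc ∑ n ∈ (Finset.Icc 1 Z).filter (fun n => r n = k), 1 / (n : ℝ)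
      = (1 / k) * ∑ n ∈ (Finset.Icc 1 Z).filter (fun n => r n = k), 1 / ((n / k : ℕ) : ℝ) := by
        rw [Finset.mul_sum]
        apply Finset.sum_congr rfl
        intro n hn
        rw [Finset.mem_filter] at hn
        have h1 : k ∣ n := hn.2 ▸ hrdvd n
        rw [Nat.cast_div h1 hkR.ne']
        field_simp
    _ ≤ (1 / k) * (k / (Nat.totient k : ℝ) * (d / (Nat.totient d : ℝ))) := by gcongr
    _ = _ := by
      have : (0:ℝ) < Nat.totient k := by exact_mod_cast Nat.totient_pos.2 hk1
      field_simp

open ArithmeticFunction in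
lemma mu_inv (d Z k m : ℕ) (hk : k ∈ selL d Z) (hm : m ∈ selL d Z) :
    ∑ l ∈ selL d Z, (if k ∣ l ∧ l ∣ m then ((moebius (m / l) : ℤ) : ℝ) else 0) = if k = m then 1 else 0 := by
  classical
  have hm' := hm
  simp only [selL, Finset.mem_filter, Finset.mem_Icc] at hk hm
  by_cases hkm : k ∣ m
  · obtain ⟨t, rfl⟩ := hkm
    have ht : t ≠ 0 := by rintro rfl; simp at hm
    have hk0 : 0 < k := hk.1.1
    have h1 : ∑ s ∈ t.divisors, ((moebius (t / s) : ℤ) : ℝ) = if t = 1 then 1 else 0 := by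
      have h2 := Nat.sum_div_divisors t (fun s => ((moebius s : ℤ) : ℝ))
      rw [h2]
      have h3 : ((zeta : ArithmeticFunction ℤ) * moebius) t = (1 : ArithmeticFunction ℤ) t := by rw [coe_zeta_mul_moebius]
      rw [coe_zeta_mul_apply, one_apply] at h3
      exact_mod_cast h3
    rw [← Finset.sum_filter]
    have h4 : (selL d Z).filter (fun l => k ∣ l ∧ l ∣ k * t) = t.divisors.image (fun s => k * s) := by
      ext l
      simp only [Finset.mem_filter, Finset.mem_image, Nat.mem_divisors]
      constructor
      · rintro ⟨_, ⟨s, rfl⟩, h⟩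
        exact ⟨s, ⟨Nat.dvd_of_mul_dvd_mul_left hk0 h, ht⟩, rfl⟩
      · rintro ⟨s, ⟨h, _⟩, rfl⟩
        have hd : k * s ∣ k * t := Nat.mul_dvd_mul_left k h
        refine ⟨?_, Dvd.intro _ rfl, hd⟩
        simp only [selL, Finset.mem_filter, Finset.mem_Icc]
        exact ⟨⟨Nat.pos_of_dvd_of_pos hd hm.1.1, (Nat.le_of_dvd hm.1.1 hd).trans hm.1.2⟩,
          hm.2.1.squarefree_of_dvd hd, Nat.Coprime.coprime_dvd_left hd hm.2.2⟩
    rw [h4, Finset.sum_image (by intro a _ b _ h; exact Nat.eq_of_mul_eq_mul_left hk0 h)]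
    have h5 : ∀ s, k * t / (k * s) = t / s := fun s => Nat.mul_div_mul_left _ _ hk0
    simp only [h5, h1]
    congr 1
    apply propext
    constructor
    · rintro rfl; simp
    · intro h
      exact (Nat.eq_of_mul_eq_mul_left hk0 (by simpa using h)).symm
  · rw [if_neg (by rintro rfl; exact hkm dvd_rfl)]
    apply Finset.sum_eq_zero
    intro l _
    rw [if_neg]
    rintro ⟨h1, h2⟩; exact hkm (h1.trans h2)

lemma cnt_ap (d l N : ℕ) (hl : 0 < l) (hc : Nat.Coprime l d) :
    |(((Finset.Icc 1 N).filter (fun n => l ∣ d * n + 1)).card : ℝ) - N / l| ≤ 1 := by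
  obtain ⟨v, hv⟩ : ∃ v : ℕ, l ∣ d * v + 1 := by
    have : IsUnit (d : ZMod l) := (ZMod.isUnit_iff_coprime d l).2 hc.symm
    obtain ⟨u, hu⟩ := this
    have : NeZero l := ⟨hl.ne'⟩
    refine ⟨((-(u⁻¹ : (ZMod l)ˣ) : ZMod l)).val, ?_⟩
    rw [← ZMod.natCast_eq_zero_iff]
    push_cast
    rw [ZMod.natCast_zmod_val, ← hu]
    simp
  have h1 : (Finset.Icc 1 N).filter (fun n => l ∣ d * n + 1) = (Finset.Ioc 0 N).filter (fun n => n ≡ v [MOD l]) := by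
    ext n
    simp only [Finset.mem_filter, Finset.mem_Icc, Finset.mem_Ioc, Nat.succ_le_iff]
    apply and_congr_right
    intro _
    have h2 : d * v + 1 ≡ 0 [MOD l] := (Nat.modEq_zero_iff_dvd).2 hv
    rw [← Nat.modEq_zero_iff_dvd]
    constructor
    · intro h
      have := (h.trans h2.symm).add_right_cancel' 1
      exact Nat.ModEq.cancel_left_of_coprime hc this
    · intro h
      exact ((h.mul_left d).add_right 1).trans h2
  have h3 := Nat.Ioc_filter_modEq_card 0 N hl v
  rw [h1]
  have hlR : (0 : ℝ) < l := by exact_mod_cast hl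
  have hmono : ⌊((0 : ℕ) - (v:ℚ)) / l⌋ ≤ ⌊((N : ℚ) - v) / l⌋ := by
    apply Int.floor_le_floor
    gcongr
    simp
  rw [max_eq_left (by linarith)] at h3
  have h4 : (((Finset.Ioc 0 N).filter (fun n => n ≡ v [MOD l])).card : ℚ) = (⌊((N : ℚ) - v) / l⌋ : ℚ) - ⌊((0 : ℕ) - (v:ℚ)) / l⌋ := by
    exact_mod_cast h3
  have h5 : |(((Finset.Ioc 0 N).filter (fun n => n ≡ v [MOD l])).card : ℚ) - N / l| ≤ 1 := by
    rw [h4]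
    have a1 := Int.floor_le (((N : ℚ) - v) / l)
    have a2 := Int.lt_floor_add_one (((N : ℚ) - v) / l)
    have a3 := Int.floor_le (((0 : ℕ) - (v:ℚ)) / l)
    have a4 := Int.lt_floor_add_one (((0 : ℕ) - (v:ℚ)) / l)
    have e1 : ((N : ℚ) - v) / l = N / l - v / l := by ring
    have e2 : (((0 : ℕ) : ℚ) - (v:ℚ)) / l = - (v / l) := by push_cast; ring
    rw [e1] at a1 a2 ⊢
    rw [e2] at a3 a4 ⊢
    rw [abs_le]
    constructor <;> linarith
  have h6 : ((|(((Finset.Ioc 0 N).filter (fun n => n ≡ v [MOD l])).card : ℚ) - N / l| : ℚ) : ℝ) ≤ ((1 : ℚ) : ℝ) := by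
    exact_mod_cast h5
  push_cast at h6
  exact h6

open ArithmeticFunction in
noncomputable def selY (d Z m : ℕ) : ℝ := ((moebius m : ℤ) : ℝ) / (Nat.totient m * selS d Z)

open ArithmeticFunction in
noncomputable def selW (d Z l : ℕ) : ℝ :=
  l * ∑ m ∈ selL d Z, if l ∣ m then ((moebius (m / l) : ℤ) : ℝ) * selY d Z m else 0

lemma one_mem_selL (d Z : ℕ) (hZ : 1 ≤ Z) : 1 ∈ selL d Z := by
  simp [selL, hZ]

lemma selS_pos (d Z : ℕ) (hZ : 1 ≤ Z) : 0 < selS d Z := by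
  unfold selS
  apply Finset.sum_pos'
  · intro i _; positivity
  · exact ⟨1, one_mem_selL d Z hZ, by simp⟩

lemma mu_abs {m : ℕ} (hm : Squarefree m) : |((ArithmeticFunction.moebius m : ℤ) : ℝ)| = 1 := by
  have := ArithmeticFunction.abs_moebius_eq_one_of_squarefree hm
  exact_mod_cast this

lemma sel_abs_y (d Z : ℕ) (hZ : 1 ≤ Z) : ∑ m ∈ selL d Z, |selY d Z m| = 1 := by
  have hS := selS_pos d Z hZ
  have : ∀ m ∈ selL d Z, |selY d Z m| = (1 / Nat.totient m) / selS d Z := by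
    intro m hm
    simp only [selL, Finset.mem_filter] at hm
    rw [selY, abs_div, mu_abs hm.2.1, abs_of_nonneg (by positivity), div_div]
  rw [Finset.sum_congr rfl this, ← Finset.sum_div]
  exact div_self hS.ne'

lemma selW_one (d Z : ℕ) (hZ : 1 ≤ Z) : selW d Z 1 = 1 := by
  rw [← sel_abs_y d Z hZ, selW]
  simp only [Nat.cast_one, one_mul, one_dvd, if_true, Nat.div_one]
  apply Finset.sum_congr rfl
  intro m hm
  have hS := selS_pos d Z hZ
  simp only [selL, Finset.mem_filter] at hm
  have h := mu_abs hm.2.1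
  rw [selY, abs_div, h, abs_of_nonneg (by positivity : (0:ℝ) ≤ Nat.totient m * selS d Z), mul_div_assoc']
  congr 1
  rw [← sq, ← sq_abs, h]; norm_num

lemma selW_abs (d Z l : ℕ) (hZ : 1 ≤ Z) : |selW d Z l| ≤ l := by
  rw [selW, abs_mul, Nat.abs_cast]
  have : |∑ m ∈ selL d Z, if l ∣ m then ((ArithmeticFunction.moebius (m / l) : ℤ) : ℝ) * selY d Z m else 0| ≤ 1 := by
    refine (Finset.abs_sum_le_sum_abs _ _).trans ?_
    rw [← sel_abs_y d Z hZ]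
    apply Finset.sum_le_sum
    intro m _
    split_ifs
    · rw [abs_mul]
      have : |((ArithmeticFunction.moebius (m / l) : ℤ) : ℝ)| ≤ 1 := by
        exact_mod_cast ArithmeticFunction.abs_moebius_le_one
      exact mul_le_of_le_one_left (abs_nonneg _) this
    · simp
  exact mul_le_of_le_one_right (by positivity) this

lemma sel_inv (d Z k : ℕ) (hk : k ∈ selL d Z) :
    ∑ l ∈ selL d Z, (if k ∣ l then selW d Z l / l else 0) = selY d Z k := by
  have h1 : ∀ l ∈ selL d Z, (if k ∣ l then selW d Z l / l else 0) =
      ∑ m ∈ selL d Z, selY d Z m * (if k ∣ l ∧ l ∣ m then ((ArithmeticFunction.moebius (m / l) : ℤ) : ℝ) else 0) := by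
    intro l hl
    simp only [selL, Finset.mem_filter, Finset.mem_Icc] at hl
    have : (l : ℝ) ≠ 0 := by have := hl.1.1; positivity
    split_ifs with h
    · rw [selW, mul_div_cancel_left₀ _ this]
      apply Finset.sum_congr rfl
      intro m _
      simp only [h, true_and]
      split_ifs <;> ring
    · simp [h]
  rw [Finset.sum_congr rfl h1, Finset.sum_comm]
  simp only [← Finset.mul_sum]
  rw [Finset.sum_congr rfl (fun m hm => by rw [mu_inv d Z k m hk hm])]
  simp [hk]

lemma sel_main (d Z : ℕ) (hZ : 1 ≤ Z) :
    ∑ l₁ ∈ selL d Z, ∑ l₂ ∈ selL d Z, selW d Z l₁ * selW d Z l₂ / (Nat.lcm l₁ l₂ : ℝ) = 1 / selS d Z := by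
  have hS := selS_pos d Z hZ
  have h1 : ∀ l₁ ∈ selL d Z, ∀ l₂ ∈ selL d Z, selW d Z l₁ * selW d Z l₂ / (Nat.lcm l₁ l₂ : ℝ) =
      ∑ k ∈ selL d Z, (Nat.totient k : ℝ) * ((if k ∣ l₁ then selW d Z l₁ / l₁ else 0) * (if k ∣ l₂ then selW d Z l₂ / l₂ else 0)) := by
    intro l₁ h₁ l₂ h₂
    have h₁' := h₁
    simp only [selL, Finset.mem_filter, Finset.mem_Icc] at h₁ h₂
    have p1 : (l₁ : ℝ) ≠ 0 := by have := h₁.1.1; positivity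
    have p2 : (l₂ : ℝ) ≠ 0 := by have := h₂.1.1; positivity
    have h3 : ∀ k ∈ selL d Z, (Nat.totient k : ℝ) * ((if k ∣ l₁ then selW d Z l₁ / l₁ else 0) * (if k ∣ l₂ then selW d Z l₂ / l₂ else 0))
       = (selW d Z l₁ / l₁) * (selW d Z l₂ / l₂) * (if k ∣ Nat.gcd l₁ l₂ then (Nat.totient k : ℝ) else 0) := by
      intro k _
      simp only [Nat.dvd_gcd_iff]
      by_cases a : k ∣ l₁ <;> by_cases b : k ∣ l₂ <;> simp [a, b] <;> ring
    rw [Finset.sum_congr rfl h3, ← Finset.mul_sum, ← Finset.sum_filter]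
    have h4 : (selL d Z).filter (fun k => k ∣ Nat.gcd l₁ l₂) = (Nat.gcd l₁ l₂).divisors := by
      ext k
      simp only [Finset.mem_filter, Nat.mem_divisors]
      have g0 : Nat.gcd l₁ l₂ ≠ 0 := (Nat.gcd_pos_of_pos_left _ h₁.1.1).ne'
      constructor
      · rintro ⟨_, h⟩; exact ⟨h, g0⟩
      · rintro ⟨h, _⟩
        refine ⟨?_, h⟩
        have hd : k ∣ l₁ := h.trans (Nat.gcd_dvd_left _ _)
        simp only [selL, Finset.mem_filter, Finset.mem_Icc]
        exact ⟨⟨Nat.pos_of_dvd_of_pos hd h₁.1.1, (Nat.le_of_dvd h₁.1.1 hd).trans h₁.1.2⟩,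
          h₁.2.1.squarefree_of_dvd hd, Nat.Coprime.coprime_dvd_left hd h₁.2.2⟩
    rw [h4]
    have h5 : ∑ k ∈ (Nat.gcd l₁ l₂).divisors, (Nat.totient k : ℝ) = Nat.gcd l₁ l₂ := by
      exact_mod_cast Nat.sum_totient _
    rw [h5]
    have h6 : (Nat.gcd l₁ l₂ : ℝ) * Nat.lcm l₁ l₂ = l₁ * l₂ := by exact_mod_cast Nat.gcd_mul_lcm l₁ l₂
    have h7 : (Nat.lcm l₁ l₂ : ℝ) ≠ 0 := by
      intro h; rw [h] at h6; exact mul_ne_zero p1 p2 (by rw [← h6]; simp)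
    rw [div_mul_div_comm, div_mul_eq_mul_div, div_eq_div_iff h7 (mul_ne_zero p1 p2)]
    linear_combination -(selW d Z l₁ * selW d Z l₂) * h6
  rw [Finset.sum_congr rfl (fun l₁ h₁ => Finset.sum_congr rfl (fun l₂ h₂ => h1 l₁ h₁ l₂ h₂))]
  have h2 : ∀ k ∈ selL d Z, (Nat.totient k : ℝ) * selY d Z k ^ 2 = (1 / Nat.totient k) / selS d Z ^ 2 := by
    intro k hk
    simp only [selL, Finset.mem_filter, Finset.mem_Icc] at hk
    have h := mu_abs hk.2.1
    have h3 : ((ArithmeticFunction.moebius k : ℤ) : ℝ) ^ 2 = 1 := by rw [← sq_abs, h]; norm_num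
    have : (0:ℝ) < Nat.totient k := by exact_mod_cast Nat.totient_pos.2 hk.1.1
    rw [selY, div_pow, h3]
    field_simp
  calc _ = ∑ k ∈ selL d Z, (Nat.totient k : ℝ) * selY d Z k ^ 2 := by
        rw [Finset.sum_congr rfl (fun l₁ _ => Finset.sum_comm), Finset.sum_comm]
        apply Finset.sum_congr rfl
        intro k hk
        rw [← sel_inv d Z k hk, sq, Finset.sum_mul_sum, Finset.mul_sum]
        simp_rw [Finset.mul_sum]
    _ = _ := by
        rw [Finset.sum_congr rfl h2, ← Finset.sum_div]
        change selS d Z / _ = _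
        field_simp

lemma sieve_bound (d Z N : ℕ) (hZ : 1 ≤ Z) :
    (((Finset.Icc 1 N).filter (fun n => (d * n + 1).Prime ∧ Z < d * n + 1)).card : ℝ) ≤
      N / selS d Z + (Z : ℝ) ^ 4 := by
  classical
  have h1 : (((Finset.Icc 1 N).filter (fun n => (d * n + 1).Prime ∧ Z < d * n + 1)).card : ℝ) ≤
      ∑ n ∈ Finset.Icc 1 N, (∑ l ∈ selL d Z, if l ∣ d * n + 1 then selW d Z l else 0) ^ 2 := by
    rw [Finset.card_eq_sum_ones, Nat.cast_sum, Finset.sum_filter]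
    apply Finset.sum_le_sum
    intro n _
    split_ifs with h
    · have : ∑ l ∈ selL d Z, (if l ∣ d * n + 1 then selW d Z l else 0) = selW d Z 1 := by
        rw [Finset.sum_eq_single 1]
        · simp
        · intro l hl hl1
          rw [if_neg]
          intro hd
          simp only [selL, Finset.mem_filter, Finset.mem_Icc] at hl
          rcases (Nat.dvd_prime h.1).1 hd with h2 | h2
          · exact hl1 h2
          · omega
        · intro h3; exact absurd (one_mem_selL d Z hZ) h3
      rw [this, selW_one d Z hZ]; simp
    · positivity
  refine h1.trans ?_
  have h2 : ∑ n ∈ Finset.Icc 1 N, (∑ l ∈ selL d Z, if l ∣ d * n + 1 then selW d Z l else 0) ^ 2 =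
      ∑ l₁ ∈ selL d Z, ∑ l₂ ∈ selL d Z, selW d Z l₁ * selW d Z l₂ *
        (((Finset.Icc 1 N).filter (fun n => Nat.lcm l₁ l₂ ∣ d * n + 1)).card : ℝ) := by
    simp_rw [sq, Finset.sum_mul_sum]
    rw [Finset.sum_comm]
    apply Finset.sum_congr rfl
    intro l₁ _
    rw [Finset.sum_comm]
    apply Finset.sum_congr rfl
    intro l₂ _
    rw [Finset.card_eq_sum_ones, Nat.cast_sum, Finset.sum_filter, Finset.mul_sum]
    apply Finset.sum_congr rfl
    intro n _
    simp only [Nat.lcm_dvd_iff]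
    by_cases a : l₁ ∣ d * n + 1 <;> by_cases b : l₂ ∣ d * n + 1 <;> simp [a, b]
  rw [h2]
  have h3 : (N : ℝ) / selS d Z = ∑ l₁ ∈ selL d Z, ∑ l₂ ∈ selL d Z, selW d Z l₁ * selW d Z l₂ * (N / (Nat.lcm l₁ l₂ : ℝ)) := by
    have := sel_main d Z hZ
    rw [div_eq_mul_one_div, ← this, Finset.mul_sum]
    apply Finset.sum_congr rfl; intro l₁ _
    rw [Finset.mul_sum]
    apply Finset.sum_congr rfl; intro l₂ _
    ring
  have h4 : (Z : ℝ) ^ 4 ≥ ∑ l₁ ∈ selL d Z, ∑ l₂ ∈ selL d Z, (Z : ℝ) * Z := by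
    simp only [Finset.sum_const, nsmul_eq_mul]
    have : ((selL d Z).card : ℝ) ≤ Z := by
      have h := Finset.card_filter_le (Finset.Icc 1 Z) (fun m => Squarefree m ∧ Nat.Coprime m d)
      simp only [Nat.card_Icc, Nat.add_sub_cancel] at h
      exact_mod_cast h
    calc ((selL d Z).card : ℝ) * ((selL d Z).card * ((Z:ℝ) * Z)) ≤ Z * (Z * (Z * Z)) := by gcongr
      _ = _ := by ring
  rw [h3]
  refine le_trans ?_ (add_le_add_right h4 _)
  rw [← Finset.sum_add_distrib]
  apply Finset.sum_le_sum; intro l₁ h₁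
  rw [← Finset.sum_add_distrib]
  apply Finset.sum_le_sum; intro l₂ h₂
  simp only [selL, Finset.mem_filter, Finset.mem_Icc] at h₁ h₂
  have w1 : |selW d Z l₁| ≤ Z := (selW_abs d Z l₁ hZ).trans (by exact_mod_cast h₁.1.2)
  have w2 : |selW d Z l₂| ≤ Z := (selW_abs d Z l₂ hZ).trans (by exact_mod_cast h₂.1.2)
  have hc : Nat.Coprime (Nat.lcm l₁ l₂) d := 
    Nat.Coprime.coprime_dvd_left (Nat.lcm_dvd_mul _ _) (Nat.Coprime.mul_left h₁.2.2 h₂.2.2)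
  have h5 := cnt_ap d (Nat.lcm l₁ l₂) N (Nat.lcm_pos h₁.1.1 h₂.1.1) hc
  set c : ℝ := (((Finset.Icc 1 N).filter (fun n => Nat.lcm l₁ l₂ ∣ d * n + 1)).card : ℝ)
  set e : ℝ := (N : ℝ) / (Nat.lcm l₁ l₂ : ℝ)
  have h6 : selW d Z l₁ * selW d Z l₂ * (c - e) ≤ Z * Z * 1 := by
    refine (le_abs_self _).trans ?_
    rw [abs_mul, abs_mul]
    gcongr
  linarith

/-- number of primes up to x congruent to 1 mod d -/
noncomputable def pset (x : ℝ) : Finset ℕ := (Finset.range (⌊x⌋₊ + 1)).filter Nat.Prime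

noncomputable def pc (x : ℝ) (d : ℕ) : ℕ := ((pset x).filter (fun p => d ∣ p - 1)).card

lemma pc_trivial (x : ℝ) (hx : 0 ≤ x) (d : ℕ) (hd : 0 < d) : (pc x d : ℝ) ≤ x / d := by
  have h1 : pc x d ≤ ((Finset.Icc 1 ⌊x⌋₊).filter (fun n => d ∣ n)).card := by
    apply Finset.card_le_card_of_injOn (fun p => p - 1)
    · intro p hp
      simp only [pset, Finset.coe_filter, Finset.mem_filter, Finset.mem_range, Set.mem_ofPred_eq, Finset.mem_Icc] at hp ⊢
      have := hp.1.2.two_le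
      exact ⟨by omega, hp.2⟩
    · intro p hp q hq h
      simp only [pset, Finset.coe_filter, Finset.mem_filter, Finset.mem_range, Set.mem_ofPred_eq] at hp hq
      have := hp.1.2.two_le
      have := hq.1.2.two_le
      simp only at h
      omega
  have h2 : ((Finset.Icc 1 ⌊x⌋₊).filter (fun n => d ∣ n)).card = ⌊x⌋₊ / d := by
    rw [← Nat.Ioc_filter_dvd_card_eq_div]; rfl
  have hdR : (0:ℝ) < d := by exact_mod_cast hd
  calc (pc x d : ℝ) ≤ ((⌊x⌋₊ / d : ℕ) : ℝ) := by exact_mod_cast h1.trans h2.le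
    _ ≤ (⌊x⌋₊ : ℝ) / d := Nat.cast_div_le
    _ ≤ x / d := by gcongr; exact Nat.floor_le hx

lemma pc_sieve (x : ℝ) (hx : 0 ≤ x) (d Z : ℕ) (hd : 0 < d) (hZ : 1 ≤ Z) :
    (pc x d : ℝ) ≤ (x / d) / selS d Z + (Z : ℝ) ^ 4 + Z := by
  classical
  set N := ⌊x / d⌋₊
  have hdR : (0:ℝ) < d := by exact_mod_cast hd
  have h1 : (pset x).filter (fun p => d ∣ p - 1) ⊆
      (((Finset.Icc 1 N).filter (fun n => (d * n + 1).Prime ∧ Z < d * n + 1)).image (fun n => d * n + 1)) ∪ Finset.Icc 1 Z := by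
    intro p hp
    simp only [pset, Finset.mem_filter, Finset.mem_range] at hp
    obtain ⟨⟨hpx, hpp⟩, hdp⟩ := hp
    have h2 := hpp.two_le
    rw [Finset.mem_union]
    by_cases hpZ : p ≤ Z
    · right; simp; omega
    · left
      obtain ⟨n, hn⟩ := hdp
      have hpn : p = d * n + 1 := by omega
      rw [Finset.mem_image]
      refine ⟨n, ?_, hpn.symm⟩
      simp only [Finset.mem_filter, Finset.mem_Icc]
      refine ⟨⟨?_, ?_⟩, hpn ▸ hpp, by omega⟩
      · rcases Nat.eq_zero_or_pos n with h | h
        · subst h; simp at hpn; omega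
        · exact h
      · apply Nat.le_floor
        rw [le_div_iff₀ hdR]
        have h3 : (p : ℝ) ≤ x := (Nat.le_floor_iff hx).1 (by omega)
        rw [hpn] at h3; push_cast at h3
        linarith
  have h2 : pc x d ≤ ((Finset.Icc 1 N).filter (fun n => (d * n + 1).Prime ∧ Z < d * n + 1)).card + Z := by
    refine (Finset.card_le_card h1).trans ((Finset.card_union_le _ _).trans ?_)
    exact Nat.add_le_add Finset.card_image_le (by simp)
  have h3 : (pc x d : ℝ) ≤ (((Finset.Icc 1 N).filter (fun n => (d * n + 1).Prime ∧ Z < d * n + 1)).card : ℝ) + Z := by exact_mod_cast h2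
  have h4 := sieve_bound d Z N hZ
  have hS := selS_pos d Z hZ
  have h5 : (N : ℝ) / selS d Z ≤ (x / d) / selS d Z := by
    gcongr; exact Nat.floor_le (by positivity)
  linarith

lemma BT : ∃ C : ℝ, 0 < C ∧ ∀ᶠ x : ℝ in atTop, ∀ d : ℕ, 0 < d → (d : ℝ) ≤ x ^ (9/10 : ℝ) →
    (pc x d : ℝ) ≤ C * (x / Real.log x) * (1 / Nat.totient d) := by
  refine ⟨101, by norm_num, ?_⟩
  have hlim : ∀ᶠ x : ℝ in atTop, Real.log x ≤ (1/2) * x ^ (6/100 : ℝ) := by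
    have := (isLittleO_log_rpow_atTop (r := 6/100) (by norm_num)).bound (c := 1/2) (by norm_num)
    filter_upwards [this, eventually_ge_atTop 1] with x hx h1
    rw [Real.norm_of_nonneg (Real.log_nonneg h1), Real.norm_of_nonneg (by positivity)] at hx
    exact hx
  filter_upwards [hlim, eventually_ge_atTop 3] with x hlx hx d hd hdx
  have hx0 : (0:ℝ) < x := by linarith
  have hlog : 0 < Real.log x := Real.log_pos (by linarith)
  set z := x ^ (1/100 : ℝ) with hz
  have hz1 : 1 ≤ z := Real.one_le_rpow (by linarith) (by norm_num)
  set Z := ⌊z⌋₊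
  have hZ : 1 ≤ Z := Nat.le_floor (by simpa using hz1)
  have h1 := pc_sieve x hx0.le d Z hd hZ
  have h2 := selS_lower d Z hd.ne'
  have hS := selS_pos d Z hZ
  have hdR : (0:ℝ) < d := by exact_mod_cast hd
  have hphi : (0:ℝ) < Nat.totient d := by exact_mod_cast Nat.totient_pos.2 hd
  have hphid : (Nat.totient d : ℝ) ≤ d := by exact_mod_cast Nat.totient_le d
  have h3 : Real.log x / 100 ≤ ∑ n ∈ Finset.Icc 1 Z, 1 / (n : ℝ) := by
    have h := log_add_one_le_harmonic Z
    rw [harmonic_eq_sum_Icc] at h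
    push_cast at h
    simp only [one_div]
    refine le_trans ?_ h
    have : Real.log z = Real.log x / 100 := by rw [hz, Real.log_rpow hx0]; ring
    rw [← this]
    apply Real.log_le_log (by linarith)
    exact (Nat.lt_floor_add_one z).le
  have h4 : (x / d) / selS d Z ≤ 100 * (x / Real.log x) * (1 / Nat.totient d) := by
    have h5 : Real.log x / 100 ≤ d / Nat.totient d * selS d Z := h3.trans h2
    rw [div_div, div_le_iff₀ (by positivity)]
    have : 100 * (x / Real.log x) * (1 / Nat.totient d) * (d * selS d Z) = 100 * x / Real.log x * (d / Nat.totient d * selS d Z) := by ring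
    rw [this]
    calc x = 100 * x / Real.log x * (Real.log x / 100) := by field_simp
      _ ≤ _ := by gcongr
  have h6 : (Z : ℝ) ^ 4 + Z ≤ 2 * x ^ (4/100 : ℝ) := by
    have hZz : (Z : ℝ) ≤ z := Nat.floor_le (by linarith)
    have e : z ^ 4 = x ^ (4/100 : ℝ) := by
      rw [hz, ← Real.rpow_natCast, ← Real.rpow_mul hx0.le]; norm_num
    have : (Z : ℝ) ^ 4 ≤ z ^ 4 := by gcongr
    have h7 : z ≤ z ^ 4 := le_self_pow₀ hz1 (by norm_num)
    linarith
  have h7 : 2 * x ^ (4/100 : ℝ) ≤ 1 * (x / Real.log x) * (1 / Nat.totient d) := by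
    have e1 : x ^ (4/100 : ℝ) * x ^ (6/100 : ℝ) * x ^ (9/10 : ℝ) = x := by
      rw [← Real.rpow_add hx0, ← Real.rpow_add hx0]; norm_num
    rw [one_mul, div_mul_div_comm, mul_one, le_div_iff₀ (by positivity)]
    calc 2 * x ^ (4/100 : ℝ) * (Real.log x * Nat.totient d) ≤ 2 * x ^ (4/100 : ℝ) * ((1/2) * x ^ (6/100 : ℝ) * x ^ (9/10 : ℝ)) := by
          gcongr
          exact hphid.trans hdx
      _ = x := by linear_combination e1
  calc (pc x d : ℝ) ≤ 100 * (x / Real.log x) * (1 / Nat.totient d) + 1 * (x / Real.log x) * (1 / Nat.totient d) := by linarith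
    _ = _ := by ring

lemma log4_pos : 0 < Real.log 4 := Real.log_pos (by norm_num)

lemma abel_theta (u v : ℕ) (huv : u ≤ v) (f : ℕ → ℝ) (hf : ∀ n, u < n → f (n + 1) ≤ f n)
    (hf0 : ∀ n, u < n → 0 ≤ f n) :
    ∑ q ∈ (Finset.Ioc u v).filter Nat.Prime, Real.log q * f q ≤
      Real.log 4 * (∑ n ∈ Finset.Ioc u v, f n + u * f (u + 1)) := by
  have key : ∑ q ∈ (Finset.Ioc u v).filter Nat.Prime, Real.log q * f q 
      + (Real.log 4 * v - Chebyshev.theta v) * f (v + 1) ≤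
      Real.log 4 * (∑ n ∈ Finset.Ioc u v, f n + u * f (u + 1)) := by
    induction v, huv using Nat.le_induction with
    | base =>
      simp only [Finset.Ioc_self, Finset.filter_empty, Finset.sum_empty, zero_add]
      have := Chebyshev.theta_nonneg u
      have h2 := hf0 (u + 1) (by omega)
      nlinarith
    | succ v huv ih =>
      have h1 : Chebyshev.theta ((v + 1 : ℕ) : ℝ) = Chebyshev.theta v + (if (v + 1).Prime then Real.log ((v + 1 : ℕ) : ℝ) else 0) := by
        unfold Chebyshev.theta
        rw [Nat.floor_natCast, Nat.floor_natCast, Finset.sum_filter, Finset.sum_filter, ← Finset.insert_Ioc_right_eq_Ioc_add_one (Nat.zero_le v),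
          Finset.sum_insert (by simp)]
        ring
      have h2 : ∑ q ∈ (Finset.Ioc u (v + 1)).filter Nat.Prime, Real.log q * f q = 
          ∑ q ∈ (Finset.Ioc u v).filter Nat.Prime, Real.log q * f q + (if (v + 1).Prime then Real.log ((v + 1 : ℕ) : ℝ) else 0) * f (v + 1) := by
        rw [Finset.sum_filter, Finset.sum_filter, ← Finset.insert_Ioc_right_eq_Ioc_add_one huv, Finset.sum_insert (by simp)]
        split_ifs <;> ring
      have h3 : ∑ n ∈ Finset.Ioc u (v + 1), f n = ∑ n ∈ Finset.Ioc u v, f n + f (v + 1) := by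
        rw [← Finset.insert_Ioc_right_eq_Ioc_add_one huv, Finset.sum_insert (by simp)]; ring
      have h4 := Chebyshev.theta_le_log4_mul_x (x := ((v + 1 : ℕ) : ℝ)) (by positivity)
      have h5 := hf (v + 1) (by omega)
      rw [h2, h3]
      set w := (if (v + 1).Prime then Real.log ((v + 1 : ℕ) : ℝ) else 0)
      have h6 : (Real.log 4 * ((v + 1 : ℕ) : ℝ) - Chebyshev.theta ((v + 1 : ℕ) : ℝ)) * f (v + 1 + 1) ≤ (Real.log 4 * ((v + 1 : ℕ) : ℝ) - Chebyshev.theta ((v + 1 : ℕ) : ℝ)) * f (v + 1) := by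
        apply mul_le_mul_of_nonneg_left h5; linarith
      have h7 : (Real.log 4 * ((v + 1 : ℕ) : ℝ) - Chebyshev.theta ((v + 1 : ℕ) : ℝ)) * f (v + 1) = (Real.log 4 * v - Chebyshev.theta v) * f (v + 1) + Real.log 4 * f (v + 1) - w * f (v + 1) := by
        rw [h1]; push_cast; ring
      linarith
  have h1 := Chebyshev.theta_le_log4_mul_x (x := (v : ℝ)) (by positivity)
  have h2 := hf0 (v + 1) (by omega)
  nlinarith

lemma M1 (a b : ℝ) (ha : 0 < a) (hab : a ≤ b) (s : Finset ℕ) (hs : ∀ q ∈ s, q.Prime ∧ a ≤ q ∧ (q : ℝ) ≤ b) :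
    ∑ q ∈ s, Real.log q / q ≤ Real.log 4 * (Real.log (b / a) + 2) := by
  classical
  have hl : 0 ≤ Real.log (b / a) := Real.log_nonneg ((one_le_div ha).2 hab)
  have h4 := log4_pos
  rcases s.eq_empty_or_nonempty with rfl | ⟨q0, hq0⟩
  · simp; positivity
  obtain ⟨u, hu1, hua, huq⟩ : ∃ u : ℕ, 1 ≤ u ∧ a / 2 ≤ u ∧ ∀ q ∈ s, u < q := by
    by_cases h : a ≤ 2
    · exact ⟨1, le_rfl, by push_cast; linarith, fun q hq => (hs q hq).1.one_lt⟩
    · push Not at h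
      have hc : 2 < ⌈a⌉₊ := by rw [Nat.lt_ceil]; exact_mod_cast h
      refine ⟨⌈a⌉₊ - 1, by omega, ?_, ?_⟩
      · have := Nat.le_ceil a
        rw [Nat.cast_sub (by omega)]; push_cast; linarith
      · intro q hq
        have : ⌈a⌉₊ ≤ q := Nat.ceil_le.2 (hs q hq).2.1
        omega
  have hqv : ∀ q ∈ s, q ≤ ⌊b⌋₊ := fun q hq => Nat.le_floor (hs q hq).2.2
  have huv : u ≤ ⌊b⌋₊ := (huq q0 hq0).le.trans (hqv q0 hq0)
  have hu0 : (0:ℝ) < u := by exact_mod_cast hu1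
  have h1 := abel_theta u ⌊b⌋₊ huv (fun n => 1 / (n : ℝ)) 
    (fun n hn => by
      have : (0:ℝ) < n := by exact_mod_cast (by omega : 0 < n)
      push_cast
      apply one_div_le_one_div_of_le this; linarith) (fun n _ => by positivity)
  have h2 : ∑ q ∈ s, Real.log q / q ≤ ∑ q ∈ (Finset.Ioc u ⌊b⌋₊).filter Nat.Prime, Real.log q * (1 / (q:ℝ)) := by
    simp_rw [mul_one_div]
    apply Finset.sum_le_sum_of_subset_of_nonneg
    · intro q hq
      simp only [Finset.mem_filter, Finset.mem_Ioc]
      exact ⟨⟨huq q hq, hqv q hq⟩, (hs q hq).1⟩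
    · intro q _ _
      have := Real.log_natCast_nonneg q
      positivity
  have h3 : ∀ v : ℕ, u ≤ v → ∑ n ∈ Finset.Ioc u v, 1 / (n : ℝ) ≤ Real.log v - Real.log u := by
    intro v hv
    induction v, hv using Nat.le_induction with
    | base => simp
    | succ v hv ih =>
      rw [← Finset.insert_Ioc_right_eq_Ioc_add_one hv, Finset.sum_insert (by simp)]
      have hv0 : (0:ℝ) < v := by exact_mod_cast (by omega : 0 < v)
      have := Real.one_sub_inv_le_log_of_pos (x := ((v + 1 : ℕ) : ℝ) / v) (by positivity)
      rw [Real.log_div (by positivity) (by positivity)] at this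
      have e : 1 - (((v + 1 : ℕ) : ℝ) / v)⁻¹ = 1 / ((v + 1 : ℕ) : ℝ) := by
        push_cast; field_simp; ring
      linarith
  have h5 := h3 _ huv
  have h6 : (u : ℝ) * (1 / ((u + 1 : ℕ) : ℝ)) ≤ 1 := by
    rw [mul_one_div, div_le_one (by positivity)]; push_cast; linarith
  have hb : 0 < b := by linarith
  have h7 : Real.log ⌊b⌋₊ ≤ Real.log b := by
    apply Real.log_le_log
    · exact_mod_cast (by omega : 0 < ⌊b⌋₊)
    · exact Nat.floor_le hb.le
  have h8 : Real.log a - Real.log 2 ≤ Real.log u := by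
    rw [← Real.log_div ha.ne' (by norm_num)]
    exact Real.log_le_log (by positivity) hua
  have h9 : Real.log 2 ≤ 1 := by linarith [Real.log_two_lt_d9]
  rw [Real.log_div hb.ne' ha.ne']
  calc _ ≤ _ := h2
    _ ≤ _ := h1
    _ ≤ _ := by
      apply mul_le_mul_of_nonneg_left _ h4.le
      linarith

lemma M2 (z w : ℝ) (hz : 4 ≤ z) (hzw : z ≤ w) (s : Finset ℕ) (hs : ∀ q ∈ s, q.Prime ∧ z < q ∧ (q : ℝ) ≤ w) :
    ∑ q ∈ s, 1 / ((q : ℝ) - 1) ≤ Real.log 4 * (Real.log (Real.log w / Real.log z) + 2) := by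
  classical
  have h4 := log4_pos
  have hlz : 0 < Real.log z := Real.log_pos (by linarith)
  have hlw : 0 < Real.log w := Real.log_pos (by linarith)
  set u := ⌊z⌋₊
  set v := ⌊w⌋₊
  have hu : 4 ≤ u := Nat.le_floor (by exact_mod_cast hz)
  have huv : u ≤ v := Nat.floor_le_floor hzw
  have h1 := abel_theta u v huv (fun n => 1 / (((n : ℝ) - 1) * Real.log n)) 
    (fun n hn => by
      have h0 : (4:ℝ) < n := by exact_mod_cast (by omega : 4 < n)
      have : 0 < Real.log n := Real.log_pos (by linarith)
      push_cast
      apply one_div_le_one_div_of_le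
      · apply mul_pos _ this; linarith
      · apply mul_le_mul
        · linarith
        · apply Real.log_le_log <;> linarith
        · exact this.le
        · linarith) 
    (fun n hn => by
      have h0 : (4:ℝ) < n := by exact_mod_cast (by omega : 4 < n)
      have : 0 < Real.log n := Real.log_pos (by linarith)
      have : 0 < (n:ℝ) - 1 := by linarith
      positivity)
  have h2 : ∑ q ∈ s, 1 / ((q : ℝ) - 1) ≤ ∑ q ∈ (Finset.Ioc u v).filter Nat.Prime, Real.log q * (1 / (((q : ℝ) - 1) * Real.log q)) := by
    calc ∑ q ∈ s, 1 / ((q : ℝ) - 1) = ∑ q ∈ s, Real.log q * (1 / (((q : ℝ) - 1) * Real.log q)) := by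
          apply Finset.sum_congr rfl
          intro q hq
          have : 0 < Real.log q := Real.log_pos (by linarith [(hs q hq).2.1])
          field_simp
      _ ≤ _ := by
        apply Finset.sum_le_sum_of_subset_of_nonneg
        · intro q hq
          simp only [Finset.mem_filter, Finset.mem_Ioc]
          exact ⟨⟨(Nat.floor_lt (by linarith)).2 (hs q hq).2.1, Nat.le_floor (hs q hq).2.2⟩, (hs q hq).1⟩
        · intro q hq _
          simp only [Finset.mem_filter, Finset.mem_Ioc] at hq
          have h0 : (1:ℝ) ≤ q := by exact_mod_cast hq.2.one_lt.le
          have := Real.log_natCast_nonneg q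
          have : 0 ≤ (q:ℝ) - 1 := by linarith
          positivity
  have h3 : ∀ v : ℕ, u ≤ v → ∑ n ∈ Finset.Ioc u v, 1 / (((n : ℝ) - 1) * Real.log n) ≤ Real.log (Real.log ((v:ℝ) - 1)) - Real.log (Real.log ((u:ℝ) - 1)) := by
    intro v hv
    induction v, hv using Nat.le_induction with
    | base => simp
    | succ v hv ih =>
      rw [← Finset.insert_Ioc_right_eq_Ioc_add_one hv, Finset.sum_insert (by simp)]
      have hv0 : (4:ℝ) ≤ v := by exact_mod_cast (by omega : 4 ≤ v)
      have a0 : 0 < Real.log ((v:ℝ) - 1) := Real.log_pos (by linarith)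
      have a1 : 0 < Real.log (v:ℝ) := Real.log_pos (by linarith)
      have a2 : Real.log (v:ℝ) ≤ Real.log ((v:ℝ) + 1) := by apply Real.log_le_log <;> linarith
      have b1 := Real.one_sub_inv_le_log_of_pos (x := (v : ℝ) / (v - 1)) (div_pos (by linarith) (by linarith))
      rw [Real.log_div (by linarith) (by linarith)] at b1
      have e : 1 - ((v : ℝ) / (v - 1))⁻¹ = 1 / v := by field_simp; ring
      rw [e] at b1
      have b2 := Real.one_sub_inv_le_log_of_pos (x := Real.log v / Real.log ((v:ℝ) - 1)) (div_pos a1 a0)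
      rw [Real.log_div a1.ne' a0.ne', inv_div] at b2
      have b3 : 1 / ((v:ℝ) * Real.log v) ≤ 1 - Real.log ((v:ℝ) - 1) / Real.log v := by
        have : 1 - Real.log ((v:ℝ) - 1) / Real.log v = (Real.log v - Real.log ((v:ℝ) - 1)) / Real.log v := by field_simp
        rw [this, ← div_div]
        gcongr
      have b4 : 1 / ((((v + 1 : ℕ) : ℝ) - 1) * Real.log ((v + 1 : ℕ) : ℝ)) ≤ 1 / ((v:ℝ) * Real.log v) := by
        push_cast
        rw [add_sub_cancel_right]
        apply one_div_le_one_div_of_le (by positivity)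
        gcongr
      push_cast at b4 ⊢
      rw [add_sub_cancel_right] at b4 ⊢
      linarith
  have h5 := h3 _ huv
  have hu4 : (4:ℝ) ≤ u := by exact_mod_cast hu
  have hv4 : (4:ℝ) ≤ v := by exact_mod_cast hu.trans huv
  have h6 : (u : ℝ) * (1 / ((((u + 1 : ℕ) : ℝ) - 1) * Real.log ((u + 1 : ℕ) : ℝ))) ≤ 1 := by
    push_cast
    rw [add_sub_cancel_right]
    have : 1 ≤ Real.log ((u:ℝ) + 1) := by
      rw [Real.le_log_iff_exp_le (by linarith)]
      linarith [Real.exp_one_lt_d9]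
    rw [mul_one_div, div_le_one (by positivity)]
    nlinarith
  have h7 : Real.log (Real.log ((v:ℝ) - 1)) ≤ Real.log (Real.log w) := by
    apply Real.log_le_log (Real.log_pos (by linarith))
    apply Real.log_le_log (by linarith)
    have := Nat.floor_le (show 0 ≤ w by linarith)
    linarith
  have h8 : Real.log (Real.log z) - Real.log 2 ≤ Real.log (Real.log ((u:ℝ) - 1)) := by
    rw [← Real.log_div hlz.ne' (by norm_num)]
    apply Real.log_le_log (by positivity)
    rw [div_le_iff₀ (by norm_num), mul_comm, ← Real.log_rpow (by linarith)]
    apply Real.log_le_log (by linarith)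
    have : z < u + 1 := Nat.lt_floor_add_one z
    norm_num
    nlinarith
  have h9 : Real.log 2 ≤ 1 := by linarith [Real.log_two_lt_d9]
  rw [Real.log_div hlw.ne' hlz.ne']
  calc _ ≤ _ := h2
    _ ≤ _ := h1
    _ ≤ _ := by
      apply mul_le_mul_of_nonneg_left _ h4.le
      linarith

/-- Weight of a set of primes. -/
noncomputable def gw (c : ℝ) (S : Finset ℕ) : ℝ := ∏ q ∈ S, c / ((q : ℝ) - 1)

lemma gw_nonneg (c : ℝ) (hc : 0 ≤ c) (S : Finset ℕ) (hS : ∀ q ∈ S, q.Prime) : 0 ≤ gw c S := by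
  apply Finset.prod_nonneg
  intro q hq
  have : (1:ℝ) ≤ q := by exact_mod_cast (hS q hq).one_lt.le
  apply div_nonneg hc (by linarith)

lemma gw_sum (c : ℝ) (hc : 0 ≤ c) (P : Finset ℕ) (hP : ∀ q ∈ P, q.Prime) :
    ∑ S ∈ P.powerset, gw c S ≤ Real.exp (c * ∑ q ∈ P, 1 / ((q : ℝ) - 1)) := by
  unfold gw
  rw [← Finset.prod_one_add, Finset.mul_sum, Real.exp_sum]
  apply Finset.prod_le_prod
  · intro q hq
    have : (1:ℝ) ≤ q := by exact_mod_cast (hP q hq).one_lt.le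
    have := div_nonneg hc (by linarith : (0:ℝ) ≤ q - 1)
    linarith
  · intro q hq
    have := Real.add_one_le_exp (c * (1 / ((q:ℝ) - 1)))
    rw [mul_one_div] at this ⊢
    linarith

lemma T2 (c lo hi : ℝ) (hc : 0 ≤ c) (hlo : 1 < lo) (hlh : lo ≤ hi) (P : Finset ℕ)
    (hP : ∀ q ∈ P, q.Prime) :
    ∑ S ∈ P.powerset.filter (fun S => lo ≤ ((∏ q ∈ S, q : ℕ) : ℝ) ∧ ((∏ q ∈ S, q : ℕ) : ℝ) ≤ hi), gw c S
      ≤ (1 / Real.log lo) * (2 * c * (Real.log 4 * (Real.log (hi / lo) + 2))) *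
        Real.exp (c * ∑ q ∈ P, 1 / ((q : ℝ) - 1)) := by
  set W : Finset ℕ → Prop := fun S => lo ≤ ((∏ q ∈ S, q : ℕ) : ℝ) ∧ ((∏ q ∈ S, q : ℕ) : ℝ) ≤ hi with hW
  have hll : 0 < Real.log lo := Real.log_pos hlo
  have h1 : Real.log lo * ∑ S ∈ P.powerset.filter W, gw c S ≤
      ∑ S ∈ P.powerset.filter W, ∑ q ∈ S, Real.log q * gw c S := by
    rw [Finset.mul_sum]
    apply Finset.sum_le_sum
    intro S hS
    rw [Finset.mem_filter, Finset.mem_powerset] at hS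
    rw [← Finset.sum_mul]
    apply mul_le_mul_of_nonneg_right _ (gw_nonneg c hc S (fun q hq => hP q (hS.1 hq)))
    rw [← Real.log_prod]
    · apply Real.log_le_log (by linarith)
      have := hS.2.1
      push_cast at this
      exact this
    · intro q hq
      exact_mod_cast (hP q (hS.1 hq)).ne_zero
  have h2 : ∑ S ∈ P.powerset.filter W, ∑ q ∈ S, Real.log q * gw c S =
      ∑ q ∈ P, ∑ S ∈ (P.powerset.filter W).filter (fun S => q ∈ S), Real.log q * gw c S := by
    apply Finset.sum_comm'
    intro S q
    simp only [Finset.mem_filter, Finset.mem_powerset]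
    constructor
    · rintro ⟨h, h'⟩
      exact ⟨⟨h, h'⟩, h.1 h'⟩
    · rintro ⟨⟨h, h'⟩, _⟩
      exact ⟨h, h'⟩
  have h3 : ∀ q ∈ P, ∑ S ∈ (P.powerset.filter W).filter (fun S => q ∈ S), Real.log q * gw c S ≤
      ∑ T ∈ P.powerset.filter (fun T => lo ≤ (q:ℝ) * ((∏ r ∈ T, r : ℕ) : ℝ) ∧ (q:ℝ) * ((∏ r ∈ T, r : ℕ) : ℝ) ≤ hi),
        gw c T * (c * (Real.log q / (q - 1))) := by
    intro q hq
    have hq1 : (1:ℝ) ≤ q := by exact_mod_cast (hP q hq).one_lt.le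
    have hinj : Set.InjOn (fun S : Finset ℕ => S.erase q) ((P.powerset.filter W).filter (fun S => q ∈ S)) := by
      intro S hS T hT h
      simp only [Finset.coe_filter, Finset.mem_filter, Set.mem_ofPred_eq] at hS hT
      simp only at h
      rw [← Finset.insert_erase hS.2, h, Finset.insert_erase hT.2]
    calc _ = ∑ S ∈ (P.powerset.filter W).filter (fun S => q ∈ S), gw c (S.erase q) * (c * (Real.log q / (q - 1))) := by
          apply Finset.sum_congr rfl
          intro S hS
          rw [Finset.mem_filter] at hS
          unfold gw
          rw [← Finset.mul_prod_erase S _ hS.2]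
          ring
      _ = ∑ T ∈ ((P.powerset.filter W).filter (fun S => q ∈ S)).image (fun S => S.erase q), gw c T * (c * (Real.log q / (q - 1))) := by
          rw [Finset.sum_image hinj]
      _ ≤ _ := by
          apply Finset.sum_le_sum_of_subset_of_nonneg
          · intro T hT
            rw [Finset.mem_image] at hT
            obtain ⟨S, hS, rfl⟩ := hT
            simp only [Finset.mem_filter, Finset.mem_powerset] at hS ⊢
            have e : (q : ℝ) * ((∏ r ∈ S.erase q, r : ℕ) : ℝ) = ((∏ r ∈ S, r : ℕ) : ℝ) := by
              rw [← Finset.mul_prod_erase S (fun r => r) hS.2]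
              push_cast
              rfl
            rw [e]
            exact ⟨(Finset.erase_subset _ _).trans hS.1.1, hS.1.2⟩
          · intro T hT _
            rw [Finset.mem_filter, Finset.mem_powerset] at hT
            apply mul_nonneg (gw_nonneg c hc T (fun r hr => hP r (hT.1 hr)))
            apply mul_nonneg hc
            apply div_nonneg (Real.log_natCast_nonneg q) (by linarith)
  have h4 : ∑ q ∈ P, ∑ T ∈ P.powerset.filter (fun T => lo ≤ (q:ℝ) * ((∏ r ∈ T, r : ℕ) : ℝ) ∧ (q:ℝ) * ((∏ r ∈ T, r : ℕ) : ℝ) ≤ hi),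
        gw c T * (c * (Real.log q / (q - 1))) =
      ∑ T ∈ P.powerset, ∑ q ∈ P.filter (fun q : ℕ => lo ≤ (q:ℝ) * ((∏ r ∈ T, r : ℕ) : ℝ) ∧ (q:ℝ) * ((∏ r ∈ T, r : ℕ) : ℝ) ≤ hi),
        gw c T * (c * (Real.log q / (q - 1))) := by
    apply Finset.sum_comm'
    intro S q
    simp only [Finset.mem_filter]
    tauto
  have h5 : ∀ T ∈ P.powerset, ∑ q ∈ P.filter (fun q : ℕ => lo ≤ (q:ℝ) * ((∏ r ∈ T, r : ℕ) : ℝ) ∧ (q:ℝ) * ((∏ r ∈ T, r : ℕ) : ℝ) ≤ hi),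
        gw c T * (c * (Real.log q / (q - 1))) ≤ gw c T * (2 * c * (Real.log 4 * (Real.log (hi / lo) + 2))) := by
    intro T hT
    rw [Finset.mem_powerset] at hT
    rw [← Finset.mul_sum]
    apply mul_le_mul_of_nonneg_left _ (gw_nonneg c hc T (fun r hr => hP r (hT hr)))
    rw [← Finset.mul_sum]
    set m : ℝ := ((∏ r ∈ T, r : ℕ) : ℝ) with hm
    have hm0 : 0 < m := by
      rw [hm]
      exact_mod_cast Finset.prod_pos (fun r hr => (hP r (hT hr)).pos)
    have := M1 (lo / m) (hi / m) (by positivity) (by gcongr) (P.filter (fun q : ℕ => lo ≤ (q:ℝ) * m ∧ (q:ℝ) * m ≤ hi)) (by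
      intro q hq
      rw [Finset.mem_filter] at hq
      refine ⟨hP q hq.1, ?_, ?_⟩
      · rw [div_le_iff₀ hm0]; exact hq.2.1
      · rw [le_div_iff₀ hm0]; exact hq.2.2)
    rw [div_div_div_cancel_right₀ hm0.ne'] at this
    have h6 : ∑ q ∈ P.filter (fun q : ℕ => lo ≤ (q:ℝ) * m ∧ (q:ℝ) * m ≤ hi), Real.log q / ((q:ℝ) - 1) ≤
        ∑ q ∈ P.filter (fun q : ℕ => lo ≤ (q:ℝ) * m ∧ (q:ℝ) * m ≤ hi), 2 * (Real.log q / (q:ℝ)) := by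
      apply Finset.sum_le_sum
      intro q hq
      rw [Finset.mem_filter] at hq
      have hq1 : (2:ℝ) ≤ q := by exact_mod_cast (hP q hq.1).two_le
      have := Real.log_natCast_nonneg q
      rw [← mul_div_assoc, div_le_div_iff₀ (by linarith) (by linarith)]
      nlinarith
    rw [← Finset.mul_sum] at h6
    calc _ ≤ c * (2 * (Real.log 4 * (Real.log (hi / lo) + 2))) := by
          apply mul_le_mul_of_nonneg_left _ hc
          linarith
      _ = _ := by ring
  have h6 : Real.log lo * ∑ S ∈ P.powerset.filter W, gw c S ≤
      (2 * c * (Real.log 4 * (Real.log (hi / lo) + 2))) *  Real.exp (c * ∑ q ∈ P, 1 / ((q : ℝ) - 1)) := by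
    calc _ ≤ _ := h1
      _ = _ := h2
      _ ≤ _ := Finset.sum_le_sum h3
      _ = _ := h4
      _ ≤ _ := Finset.sum_le_sum h5
      _ ≤ _ := by
        rw [← Finset.sum_mul, mul_comm]
        apply mul_le_mul_of_nonneg_left (gw_sum c hc P hP)
        have := log4_pos
        have : 0 ≤ Real.log (hi / lo) := Real.log_nonneg (by rw [le_div_iff₀ (by linarith)]; linarith)
        positivity
  rw [mul_assoc, div_mul_eq_mul_div, one_mul, le_div_iff₀ hll]
  linarith

lemma tot_primes (S : Finset ℕ) (hS : ∀ q ∈ S, q.Prime) :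
    1 / (Nat.totient (∏ q ∈ S, q) : ℝ) = gw 1 S := by
  induction S using Finset.induction_on with
  | empty => simp [gw]
  | insert a s ha ih =>
    have h1 := hS a (Finset.mem_insert_self _ _)
    have ih' := ih (fun q hq => hS q (Finset.mem_insert_of_mem hq))
    have hcop : Nat.Coprime a (∏ q ∈ s, q) := by
      apply Nat.Coprime.prod_right
      intro q hq
      rw [Nat.coprime_primes h1 (hS q (Finset.mem_insert_of_mem hq))]
      rintro rfl
      exact ha hq
    unfold gw at *
    rw [Finset.prod_insert ha, Finset.prod_insert ha, Nat.totient_mul hcop, Nat.totient_prime h1, ← ih']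
    push_cast [Nat.cast_sub h1.one_lt.le]
    rw [div_mul_div_comm, one_mul]

lemma esymm_step (P : Finset ℕ) (hP : ∀ q ∈ P, q.Prime) (k : ℕ) :
    ((k : ℝ) + 1) * ∑ S ∈ P.powersetCard (k+1), gw 1 S ≤
      (∑ q ∈ P, 1 / ((q : ℝ) - 1)) * ∑ S ∈ P.powersetCard k, gw 1 S := by
  have h1 : ((k : ℝ) + 1) * ∑ S ∈ P.powersetCard (k+1), gw 1 S =
      ∑ S ∈ P.powersetCard (k+1), ∑ q ∈ S, gw 1 S := by
    rw [Finset.mul_sum]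
    apply Finset.sum_congr rfl
    intro S hS
    rw [Finset.mem_powersetCard] at hS
    rw [Finset.sum_const, hS.2, nsmul_eq_mul]
    push_cast
    rfl
  have h2 : ∑ S ∈ P.powersetCard (k+1), ∑ q ∈ S, gw 1 S =
      ∑ q ∈ P, ∑ S ∈ (P.powersetCard (k+1)).filter (fun S => q ∈ S), gw 1 S := by
    apply Finset.sum_comm'
    intro S q
    simp only [Finset.mem_filter, Finset.mem_powersetCard]
    constructor
    · rintro ⟨h, h'⟩
      exact ⟨⟨h, h'⟩, h.1 h'⟩
    · rintro ⟨⟨h, h'⟩, _⟩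
      exact ⟨h, h'⟩
  rw [h1, h2, Finset.sum_mul]
  apply Finset.sum_le_sum
  intro q hq
  have hq1 : (1:ℝ) ≤ q := by exact_mod_cast (hP q hq).one_lt.le
  have hinj : Set.InjOn (fun S : Finset ℕ => S.erase q) ((P.powersetCard (k+1)).filter (fun S => q ∈ S)) := by
    intro S hS T hT h
    simp only [Finset.coe_filter, Set.mem_ofPred_eq] at hS hT
    simp only at h
    rw [← Finset.insert_erase hS.2, h, Finset.insert_erase hT.2]
  calc _ = ∑ S ∈ (P.powersetCard (k+1)).filter (fun S => q ∈ S), (1 / ((q:ℝ) - 1)) * gw 1 (S.erase q) := by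
        apply Finset.sum_congr rfl
        intro S hS
        rw [Finset.mem_filter] at hS
        unfold gw
        rw [← Finset.mul_prod_erase S _ hS.2]
    _ = ∑ T ∈ ((P.powersetCard (k+1)).filter (fun S => q ∈ S)).image (fun S => S.erase q), (1 / ((q:ℝ) - 1)) * gw 1 T := by
        rw [Finset.sum_image hinj]
    _ ≤ _ := by
        rw [← Finset.mul_sum]
        apply mul_le_mul_of_nonneg_left _ (by apply div_nonneg zero_le_one; linarith)
        apply Finset.sum_le_sum_of_subset_of_nonneg
        · intro T hT
          rw [Finset.mem_image] at hT
          obtain ⟨S, hS, rfl⟩ := hT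
          simp only [Finset.mem_filter, Finset.mem_powersetCard] at hS ⊢
          refine ⟨(Finset.erase_subset _ _).trans hS.1.1, ?_⟩
          rw [Finset.card_erase_of_mem hS.2, hS.1.2]
          rfl
        · intro T hT _
          rw [Finset.mem_powersetCard] at hT
          exact gw_nonneg 1 zero_le_one T (fun r hr => hP r (hT.1 hr))

lemma esymm_le (P : Finset ℕ) (hP : ∀ q ∈ P, q.Prime) (k : ℕ) :
    (k.factorial : ℝ) * ∑ S ∈ P.powersetCard k, gw 1 S ≤ (∑ q ∈ P, 1 / ((q : ℝ) - 1)) ^ k := by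
  have h0 : 0 ≤ ∑ q ∈ P, 1 / ((q : ℝ) - 1) := by
    apply Finset.sum_nonneg
    intro q hq
    have hq1 : (1:ℝ) ≤ q := by exact_mod_cast (hP q hq).one_lt.le
    apply div_nonneg zero_le_one; linarith
  induction k with
  | zero => simp [gw]
  | succ k ih =>
    have := esymm_step P hP k
    rw [Nat.factorial_succ, pow_succ]
    push_cast
    calc _ = (k.factorial : ℝ) * (((k : ℝ) + 1) * ∑ S ∈ P.powersetCard (k+1), gw 1 S) := by ring
      _ ≤ (k.factorial : ℝ) * ((∑ q ∈ P, 1 / ((q : ℝ) - 1)) * ∑ S ∈ P.powersetCard k, gw 1 S) := by gcongr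
      _ = (∑ q ∈ P, 1 / ((q : ℝ) - 1)) * ((k.factorial : ℝ) * ∑ S ∈ P.powersetCard k, gw 1 S) := by ring
      _ ≤ (∑ q ∈ P, 1 / ((q : ℝ) - 1)) * _ := mul_le_mul_of_nonneg_left ih h0
      _ = _ := by ring

lemma prod_dvd_of (S : Finset ℕ) (hS : ∀ q ∈ S, q.Prime) (n : ℕ) (h : ∀ q ∈ S, q ∣ n) : (∏ q ∈ S, q) ∣ n :=
  Finset.prod_primes_dvd n (fun q hq => (hS q hq).prime) h

lemma T1 (x B w : ℝ) (hBT : ∀ d : ℕ, 0 < d → (d : ℝ) ≤ x ^ (9/10 : ℝ) →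
      (pc x d : ℝ) ≤ B * (1 / Nat.totient d))
    (hB : 0 ≤ B) (P : Finset ℕ) (hP : ∀ q ∈ P, q.Prime) (hPw : ∀ q ∈ P, (q : ℝ) ≤ w)
    (k t : ℕ) (hw : w ^ k ≤ x ^ (9/10 : ℝ)) :
    (((pset x).filter (fun p => t ≤ (P.filter (fun q => q ∣ p - 1)).card)).card : ℝ) * ((t + 1 - k : ℕ) : ℝ) ^ k ≤
      B * (∑ q ∈ P, 1 / ((q : ℝ) - 1)) ^ k := by
  have h1 : (((pset x).filter (fun p => t ≤ (P.filter (fun q => q ∣ p - 1)).card)).card : ℝ) * (t.choose k : ℝ) ≤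
      B * ∑ S ∈ P.powersetCard k, gw 1 S := by
    calc _ ≤ ∑ p ∈ pset x, (((P.powersetCard k).filter (fun S => (∏ q ∈ S, q) ∣ p - 1)).card : ℝ) := by
          rw [← nsmul_eq_mul]
          refine (Finset.card_nsmul_le_sum _ (fun p => (((P.powersetCard k).filter (fun S => (∏ q ∈ S, q) ∣ p - 1)).card : ℝ)) _ ?_).trans ?_
          · intro p hp
            rw [Finset.mem_filter] at hp
            have : t.choose k ≤ ((P.filter (fun q => q ∣ p - 1)).powersetCard k).card := by
              rw [Finset.card_powersetCard]
              exact Nat.choose_le_choose k hp.2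
            refine le_trans (Nat.cast_le.mpr this) (Nat.cast_le.mpr (Finset.card_le_card ?_))
            intro S hS
            rw [Finset.mem_powersetCard] at hS
            rw [Finset.mem_filter, Finset.mem_powersetCard]
            refine ⟨⟨hS.1.trans (Finset.filter_subset _ _), hS.2⟩, ?_⟩
            apply prod_dvd_of
            · intro q hq
              exact hP q (Finset.mem_filter.mp (hS.1 hq)).1
            · intro q hq
              exact (Finset.mem_filter.mp (hS.1 hq)).2
          · apply Finset.sum_le_sum_of_subset_of_nonneg (Finset.filter_subset _ _)
            intros
            positivity
      _ = ∑ S ∈ P.powersetCard k, (pc x (∏ q ∈ S, q) : ℝ) := by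
          unfold pc
          simp only [Finset.card_filter]
          push_cast
          rw [Finset.sum_comm]
      _ ≤ _ := by
          rw [Finset.mul_sum]
          apply Finset.sum_le_sum
          intro S hS
          rw [Finset.mem_powersetCard] at hS
          have hS1 : ∀ q ∈ S, q.Prime := fun q hq => hP q (hS.1 hq)
          rw [← tot_primes S hS1]
          apply hBT
          · exact Finset.prod_pos (fun q hq => (hS1 q hq).pos)
          · refine le_trans ?_ hw
            push_cast
            rw [← hS.2]
            rw [← Finset.prod_const]
            apply Finset.prod_le_prod
            · intros
              positivity
            · intro q hq
              exact hPw q (hS.1 hq)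
  have h2 : ((t + 1 - k : ℕ) : ℝ) ^ k ≤ k.factorial * t.choose k := by
    have := Nat.pow_sub_le_descFactorial t k
    rw [Nat.descFactorial_eq_factorial_mul_choose] at this
    exact_mod_cast this
  calc _ ≤ (((pset x).filter (fun p => t ≤ (P.filter (fun q => q ∣ p - 1)).card)).card : ℝ) * (k.factorial * t.choose k) := by gcongr
    _ = k.factorial * ((((pset x).filter (fun p => t ≤ (P.filter (fun q => q ∣ p - 1)).card)).card : ℝ) * (t.choose k : ℝ)) := by ring
    _ ≤ k.factorial * (B * ∑ S ∈ P.powersetCard k, gw 1 S) := by gcongr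
    _ = B * (k.factorial * ∑ S ∈ P.powersetCard k, gw 1 S) := by ring
    _ ≤ _ := by
      apply mul_le_mul_of_nonneg_left _ hB
      exact esymm_le P hP k

lemma mem_pset {x : ℝ} (hx : 0 ≤ x) {p : ℕ} : p ∈ pset x ↔ p.Prime ∧ (p : ℝ) ≤ x := by
  unfold pset
  rw [Finset.mem_filter, Finset.mem_range, Nat.lt_succ_iff, Nat.le_floor_iff hx, and_comm]

open scoped Classical in
lemma T4 (x z : ℝ) (hx : 0 ≤ x) (hz : 2 ≤ z) :
    (((pset x).filter (fun p => ∃ q : ℕ, q.Prime ∧ z < q ∧ q ^ 2 ∣ p - 1)).card : ℝ) ≤ 2 * x / z := by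
  classical
  set u := ⌊z⌋₊ with hu
  have hu2 : 2 ≤ u := Nat.le_floor (by exact_mod_cast hz)
  set v := max u ⌊x⌋₊ with hv
  have h1 : ((pset x).filter (fun p => ∃ q : ℕ, q.Prime ∧ z < q ∧ q ^ 2 ∣ p - 1)) ⊆
      (Finset.Ioc u v).biUnion (fun q => (pset x).filter (fun p => q ^ 2 ∣ p - 1)) := by
    intro p hp
    rw [Finset.mem_filter] at hp
    obtain ⟨hp, q, hq, hzq, hd⟩ := hp
    rw [Finset.mem_biUnion]
    refine ⟨q, ?_, Finset.mem_filter.mpr ⟨hp, hd⟩⟩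
    rw [mem_pset hx] at hp
    rw [Finset.mem_Ioc]
    refine ⟨(Nat.floor_lt (by linarith)).mpr hzq, le_trans ?_ (le_max_right _ _)⟩
    rw [Nat.le_floor_iff hx]
    refine le_trans ?_ hp.2
    have := Nat.le_of_dvd (by have := hp.1.two_le; omega) hd
    have : q ≤ p := by nlinarith [hq.one_lt, Nat.sub_le p 1]
    exact_mod_cast this
  have h2 : (((pset x).filter (fun p => ∃ q : ℕ, q.Prime ∧ z < q ∧ q ^ 2 ∣ p - 1)).card : ℝ) ≤
      ∑ q ∈ Finset.Ioc u v, (pc x (q ^ 2) : ℝ) := by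
    have := (Finset.card_le_card h1).trans Finset.card_biUnion_le
    unfold pc
    exact_mod_cast this
  have h3 := sum_Ioc_inv_sq_le_sub (α := ℝ) (k := u) (n := v) (by omega) (le_max_left _ _)
  have hz2 : z < u + 1 := Nat.lt_floor_add_one z
  have hur : (2:ℝ) ≤ u := by exact_mod_cast hu2
  calc _ ≤ _ := h2
    _ ≤ ∑ q ∈ Finset.Ioc u v, x * ((q:ℝ)^2)⁻¹ := by
      apply Finset.sum_le_sum
      intro q hq
      rw [Finset.mem_Ioc] at hq
      have := pc_trivial x hx (q^2) (by have : 0 < q := by omega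
                                        positivity)
      push_cast at this
      exact this
    _ ≤ x * (u:ℝ)⁻¹ := by
      rw [← Finset.mul_sum]
      apply mul_le_mul_of_nonneg_left _ hx
      have : 0 ≤ (v:ℝ)⁻¹ := by positivity
      linarith
    _ ≤ _ := by
      have hz0 : 0 < z := by linarith
      have hu0 : (0:ℝ) < u := by linarith
      rw [← div_eq_mul_inv, div_le_div_iff₀ hu0 hz0]
      nlinarith

/-- z-smooth part. -/
noncomputable def sm (z : ℝ) (n : ℕ) : ℕ := ∏ q ∈ n.primeFactors.filter (fun q : ℕ => (q : ℝ) ≤ z), q ^ n.factorization q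

open scoped Classical in
lemma bigpow (x z y : ℝ) (hx : 0 ≤ x) (hz : 1 ≤ z) (hy : 0 < y) :
    (((pset x).filter (fun p => ∃ q : ℕ, q.Prime ∧ (q:ℝ) ≤ z ∧ ∃ j, y < (q:ℝ) ^ j ∧ q ^ j ∣ p - 1)).card : ℝ) ≤ z * (x / y) := by
  classical
  set Q := ((Finset.Icc 1 ⌊z⌋₊).filter Nat.Prime) with hQ
  have key : ∀ q : ℕ, q.Prime → ∃ j : ℕ, y < (q:ℝ) ^ j ∧ ∀ i, y < (q:ℝ)^i → j ≤ i := by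
    intro q hq
    have hq1 : (1:ℝ) < q := by exact_mod_cast hq.one_lt
    have he : ∃ j : ℕ, y < (q:ℝ) ^ j := pow_unbounded_of_one_lt y hq1
    exact ⟨Nat.find he, Nat.find_spec he, fun i hi => Nat.find_min' he hi⟩
  choose! J hJ using key
  have h1 : ((pset x).filter (fun p => ∃ q : ℕ, q.Prime ∧ (q:ℝ) ≤ z ∧ ∃ j, y < (q:ℝ) ^ j ∧ q ^ j ∣ p - 1)) ⊆
      Q.biUnion (fun q => (pset x).filter (fun p => q ^ (J q) ∣ p - 1)) := by
    intro p hp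
    rw [Finset.mem_filter] at hp
    obtain ⟨hp, q, hq, hzq, j, hj, hd⟩ := hp
    rw [Finset.mem_biUnion]
    refine ⟨q, ?_, Finset.mem_filter.mpr ⟨hp, (pow_dvd_pow q ((hJ q hq).2 j hj)).trans hd⟩⟩
    rw [hQ, Finset.mem_filter, Finset.mem_Icc]
    exact ⟨⟨hq.one_lt.le, Nat.le_floor hzq⟩, hq⟩
  have h2 : (((pset x).filter (fun p => ∃ q : ℕ, q.Prime ∧ (q:ℝ) ≤ z ∧ ∃ j, y < (q:ℝ) ^ j ∧ q ^ j ∣ p - 1)).card : ℝ) ≤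
      ∑ q ∈ Q, (pc x (q ^ (J q)) : ℝ) := by
    have := (Finset.card_le_card h1).trans Finset.card_biUnion_le
    unfold pc
    exact_mod_cast this
  calc _ ≤ _ := h2
    _ ≤ ∑ q ∈ Q, x / y := by
      apply Finset.sum_le_sum
      intro q hq
      rw [hQ, Finset.mem_filter] at hq
      have := pc_trivial x hx (q^(J q)) (by have := hq.2.pos
                                            positivity)
      refine this.trans ?_
      push_cast
      have := (hJ q hq.2).1
      gcongr
    _ ≤ z * (x / y) := by
      rw [Finset.sum_const, nsmul_eq_mul]
      apply mul_le_mul_of_nonneg_right _ (by positivity)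
      refine le_trans ?_ (Nat.floor_le (by linarith : 0 ≤ z))
      have : Q.card ≤ (Finset.Icc 1 ⌊z⌋₊).card := Finset.card_filter_le _ _
      simp at this
      exact_mod_cast this

lemma geo_inv (q : ℕ) (hq : 2 ≤ q) (N : ℕ) : ∑ j ∈ Finset.Icc 1 N, 1 / (Nat.totient (q ^ j) : ℝ) ≤ 4 / q ∨ ¬ q.Prime := by
  by_cases hp : q.Prime
  swap
  · right; exact hp
  left
  have hq2 : (2:ℝ) ≤ q := by exact_mod_cast hq
  have h1 : ∀ j ∈ Finset.Icc 1 N, 1 / (Nat.totient (q ^ j) : ℝ) ≤ (2 / q) * (1/2) ^ (j - 1) := by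
    intro j hj
    rw [Finset.mem_Icc] at hj
    rw [Nat.totient_prime_pow hp (by omega)]
    push_cast [Nat.cast_sub hp.one_lt.le]
    have h3 : (q:ℝ) / 2 ≤ q - 1 := by linarith
    have h4 : (2:ℝ) ^ (j-1) ≤ (q:ℝ) ^ (j-1) := by gcongr
    calc 1 / ((q:ℝ) ^ (j-1) * (q - 1)) ≤ 1 / (2 ^ (j-1) * (q/2)) := by gcongr
      _ = _ := by field_simp; rw [← mul_pow]; norm_num
  refine (Finset.sum_le_sum h1).trans ?_
  rw [← Finset.mul_sum]
  have h2 : ∑ j ∈ Finset.Icc 1 N, ((1:ℝ)/2) ^ (j-1) = ∑ j ∈ Finset.range N, ((1:ℝ)/2) ^ j := by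
    rw [← Finset.Ico_add_one_right_eq_Icc, Finset.sum_Ico_eq_sum_range]
    simp
  rw [h2]
  have h3 : ∑ j ∈ Finset.range N, ((1:ℝ)/2) ^ j ≤ 2 := sum_geometric_two_le N
  calc _ ≤ (2 / (q:ℝ)) * 2 := by gcongr
    _ = _ := by ring

lemma T3 (x B z T : ℝ) (hBT : ∀ d : ℕ, 0 < d → (d : ℝ) ≤ x ^ (9/10 : ℝ) →
      (pc x d : ℝ) ≤ B * (1 / Nat.totient d))
    (hB : 0 ≤ B) (hx : 1 ≤ x) (hz : 1 ≤ z) (hT : 0 < T) :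
    (((pset x).filter (fun p => Real.exp T < sm z (p - 1))).card : ℝ) ≤
      z * (x / x ^ (9/10 : ℝ)) + 4 * B * (Real.log 4 * (Real.log z + 2)) / T := by
  classical
  set y := x ^ (9/10 : ℝ) with hy
  have hy0 : 0 < y := by positivity
  set E := ((pset x).filter (fun p => ∃ q : ℕ, q.Prime ∧ (q:ℝ) ≤ z ∧ ∃ j, y < (q:ℝ) ^ j ∧ q ^ j ∣ p - 1)) with hE
  set F := ((pset x).filter (fun p => Real.exp T < sm z (p - 1))) with hF
  set Q := ((Finset.Icc 1 ⌊z⌋₊).filter Nat.Prime) with hQ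
  set N := ⌊x⌋₊ with hN
  set G : ℕ → ℝ := fun n => ∑ q ∈ Q, ∑ j ∈ (Finset.Icc 1 N).filter (fun j => (q:ℝ) ^ j ≤ y), if q ^ j ∣ n then Real.log q else 0 with hG
  have hE1 := bigpow x z y (by linarith) hz hy0
  have h1 : ∀ p ∈ F \ E, T ≤ G (p - 1) := by
    intro p hp
    rw [Finset.mem_sdiff, hF, hE, Finset.mem_filter, Finset.mem_filter] at hp
    obtain ⟨⟨hp, hsm⟩, hne⟩ := hp
    have hne' : ∀ q : ℕ, q.Prime → (q:ℝ) ≤ z → ∀ j, q ^ j ∣ p - 1 → (q:ℝ)^j ≤ y := by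
      intro q hq hqz j hj
      by_contra hcon
      exact hne ⟨hp, q, hq, hqz, j, not_le.mp hcon, hj⟩
    rw [mem_pset (by linarith)] at hp
    set n := p - 1 with hn
    have hn0 : n ≠ 0 := by have := hp.1.two_le; omega
    have hnN : n ≤ N := by
      rw [hN, Nat.le_floor_iff (by linarith)]
      refine le_trans ?_ hp.2
      exact_mod_cast Nat.sub_le p 1
    have hsm0 : (0:ℝ) < sm z n := lt_trans (Real.exp_pos T) hsm
    have h2 : T ≤ Real.log (sm z n) := by
      rw [Real.le_log_iff_exp_le hsm0]
      exact hsm.le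
    refine h2.trans ?_
    unfold sm
    push_cast
    rw [Real.log_prod (by
      intro q hq
      rw [Finset.mem_filter, Nat.mem_primeFactors] at hq
      have := hq.1.1.ne_zero
      positivity)]
    rw [hG]
    have hsub : n.primeFactors.filter (fun q : ℕ => (q : ℝ) ≤ z) ⊆ Q := by
      intro q hq
      rw [Finset.mem_filter, Nat.mem_primeFactors] at hq
      rw [hQ, Finset.mem_filter, Finset.mem_Icc]
      exact ⟨⟨hq.1.1.one_lt.le, Nat.le_floor hq.2⟩, hq.1.1⟩
    refine le_trans ?_ (Finset.sum_le_sum_of_subset_of_nonneg hsub ?_)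
    · apply Finset.sum_le_sum
      intro q hq
      rw [Finset.mem_filter, Nat.mem_primeFactors] at hq
      rw [Real.log_pow, ← Finset.sum_filter, Finset.sum_const, nsmul_eq_mul]
      apply mul_le_mul_of_nonneg_right _ (Real.log_natCast_nonneg q)
      have hc : (Finset.Icc 1 (n.factorization q)).card ≤ (((Finset.Icc 1 N).filter (fun j => (q:ℝ) ^ j ≤ y)).filter (fun j => q ^ j ∣ n)).card := by
        apply Finset.card_le_card
        intro j hj
        rw [Finset.mem_Icc] at hj
        have hd : q ^ j ∣ n := (hq.1.1.pow_dvd_iff_le_factorization hn0).mpr hj.2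
        rw [Finset.mem_filter, Finset.mem_filter, Finset.mem_Icc]
        refine ⟨⟨⟨hj.1, ?_⟩, hne' q hq.1.1 hq.2 j hd⟩, hd⟩
        have := Nat.le_of_dvd (by omega) hd
        have := (Nat.lt_pow_self hq.1.1.one_lt (n := j)).le
        omega
      simp only [Nat.card_Icc, add_tsub_cancel_right] at hc
      exact_mod_cast hc
    · intro q _ _
      apply Finset.sum_nonneg
      intro j _
      split_ifs
      · exact Real.log_natCast_nonneg q
      · rfl
  have hG0 : ∀ n, 0 ≤ G n := by
    intro n
    apply Finset.sum_nonneg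
    intro q _
    apply Finset.sum_nonneg
    intro j _
    split_ifs
    · exact Real.log_natCast_nonneg q
    · rfl
  have h2 : ((F \ E).card : ℝ) * T ≤ ∑ p ∈ pset x, G (p - 1) := by
    rw [← nsmul_eq_mul]
    refine (Finset.card_nsmul_le_sum _ (fun p => G (p-1)) _ h1).trans ?_
    apply Finset.sum_le_sum_of_subset_of_nonneg
    · exact Finset.sdiff_subset.trans (Finset.filter_subset _ _)
    · intros; exact hG0 _
  have h3 : ∑ p ∈ pset x, G (p - 1) = ∑ q ∈ Q, ∑ j ∈ (Finset.Icc 1 N).filter (fun j => (q:ℝ) ^ j ≤ y), Real.log q * pc x (q ^ j) := by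
    rw [hG, Finset.sum_comm]
    apply Finset.sum_congr rfl
    intro q _
    rw [Finset.sum_comm]
    apply Finset.sum_congr rfl
    intro j _
    rw [← Finset.sum_filter, Finset.sum_const, nsmul_eq_mul, mul_comm]
    rfl
  have h4 : ∑ p ∈ pset x, G (p - 1) ≤ 4 * B * (Real.log 4 * (Real.log z + 2)) := by
    rw [h3]
    calc _ ≤ ∑ q ∈ Q, (4 * B) * (Real.log q / q) := by
          apply Finset.sum_le_sum
          intro q hq
          rw [hQ, Finset.mem_filter] at hq
          have hl := Real.log_natCast_nonneg q
          calc _ ≤ ∑ j ∈ (Finset.Icc 1 N).filter (fun j => (q:ℝ) ^ j ≤ y), Real.log q * (B * (1 / Nat.totient (q^j))) := by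
                apply Finset.sum_le_sum
                intro j hj
                rw [Finset.mem_filter] at hj
                apply mul_le_mul_of_nonneg_left _ hl
                apply hBT
                · have := hq.2.pos
                  positivity
                · push_cast
                  exact hj.2
            _ ≤ ∑ j ∈ (Finset.Icc 1 N), Real.log q * (B * (1 / Nat.totient (q^j))) := by
                apply Finset.sum_le_sum_of_subset_of_nonneg (Finset.filter_subset _ _)
                intros
                positivity
            _ = Real.log q * B * ∑ j ∈ (Finset.Icc 1 N), (1 / (Nat.totient (q^j) : ℝ)) := by
                rw [Finset.mul_sum]
                apply Finset.sum_congr rfl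
                intros
                ring
            _ ≤ Real.log q * B * (4 / q) := by
                apply mul_le_mul_of_nonneg_left _ (by positivity)
                rcases geo_inv q hq.2.two_le N with h | h
                · exact h
                · exact absurd hq.2 h
            _ = _ := by ring
      _ ≤ _ := by
          rw [← Finset.mul_sum]
          apply mul_le_mul_of_nonneg_left _ (by positivity)
          have := M1 1 z one_pos hz Q (by
            intro q hq
            rw [hQ, Finset.mem_filter, Finset.mem_Icc] at hq
            refine ⟨hq.2, by exact_mod_cast hq.1.1, ?_⟩
            exact (Nat.le_floor_iff (by linarith)).mp hq.1.2)
          rw [div_one] at this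
          exact this
  have h5 : ((F \ E).card : ℝ) ≤ 4 * B * (Real.log 4 * (Real.log z + 2)) / T := by
    rw [le_div_iff₀ hT]
    exact h2.trans h4
  have h6 : (F.card : ℝ) ≤ E.card + (F \ E).card := by
    have : F.card ≤ (E ∪ F \ E).card := Finset.card_le_card (by
      intro p hp
      by_cases h : p ∈ E
      · exact Finset.mem_union_left _ h
      · exact Finset.mem_union_right _ (Finset.mem_sdiff.mpr ⟨hp, h⟩))
    exact_mod_cast this.trans (Finset.card_union_le _ _)
  linarith

lemma omega_le (n c : ℕ) (hn : n ≠ 0) (h : n ≤ 2 ^ c) : n.primeFactors.card ≤ c := by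
  have h1 : 2 ^ n.primeFactors.card ≤ ∏ q ∈ n.primeFactors, q := by
    rw [← Finset.prod_const]
    apply Finset.prod_le_prod'
    intro q hq
    exact (Nat.prime_of_mem_primeFactors hq).two_le
  have h2 := Nat.le_of_dvd (Nat.pos_of_ne_zero hn) (Nat.prod_primeFactors_dvd n)
  exact (Nat.pow_le_pow_iff_right (by norm_num)).mp ((h1.trans h2).trans h)

lemma orderOf_zmod_pos (p : ℕ) [Fact p.Prime] (α : ZMod p) (h : α ≠ 0) : 0 < orderOf α := by
  rw [orderOf_pos_iff, isOfFinOrder_iff_pow_eq_one]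
  exact ⟨p - 1, by have := (Fact.out : p.Prime).two_le; omega, ZMod.pow_card_sub_one_eq_one h⟩

/-- The integers detecting small ranks. -/
def NN (a b : ℤ) (st : ℤ × ℤ) : ℤ :=
  a ^ st.1.toNat * b ^ st.2.toNat - a ^ (-st.1).toNat * b ^ (-st.2).toNat

lemma NN_ne (a b : ℤ) (ha : a ≠ 0) (hb : b ≠ 0)
    (hind : ∀ m n : ℤ, (a : ℚ) ^ m * (b : ℚ) ^ n = 1 → m = 0 ∧ n = 0) (s t : ℤ) (h : ¬ (s = 0 ∧ t = 0)) :
    NN a b (s, t) ≠ 0 := by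
  intro h0
  apply h
  apply hind
  have ha' : (a:ℚ) ≠ 0 := by exact_mod_cast ha
  have hb' : (b:ℚ) ≠ 0 := by exact_mod_cast hb
  unfold NN at h0
  rw [sub_eq_zero] at h0
  have h1 : (a:ℚ) ^ s.toNat * (b:ℚ) ^ t.toNat = (a:ℚ) ^ (-s).toNat * (b:ℚ) ^ (-t).toNat := by exact_mod_cast h0
  have es : s = (s.toNat : ℤ) - ((-s).toNat : ℤ) := by omega
  have et : t = (t.toNat : ℤ) - ((-t).toNat : ℤ) := by omega
  rw [es, et, zpow_sub₀ ha', zpow_sub₀ hb']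
  simp only [zpow_natCast]
  rw [div_mul_div_comm, h1, div_self (by positivity)]

lemma NN_abs (a b : ℤ) (ha : a ≠ 0) (hb : b ≠ 0) (M c : ℕ) (hM : 1 ≤ M) (hc : 2 * (a.natAbs * b.natAbs) ≤ 2 ^ c)
    (s t : ℤ) (hs : s.natAbs ≤ M) (ht : t.natAbs ≤ M) : (NN a b (s, t)).natAbs ≤ 2 ^ (c * M) := by
  have hA : 1 ≤ a.natAbs := Int.natAbs_pos.mpr ha
  have hB : 1 ≤ b.natAbs := Int.natAbs_pos.mpr hb
  have key : ∀ i j : ℕ, i ≤ M → j ≤ M → (a ^ i * b ^ j).natAbs ≤ (a.natAbs * b.natAbs) ^ M := by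
    intro i j hi hj
    rw [Int.natAbs_mul, Int.natAbs_pow, Int.natAbs_pow, mul_pow]
    gcongr
  unfold NN
  calc _ ≤ (a.natAbs * b.natAbs) ^ M + (a.natAbs * b.natAbs) ^ M := by
        refine (Int.natAbs_sub_le _ _).trans ?_
        apply add_le_add <;> apply key <;> simp only <;> omega
    _ = 2 ^ 1 * (a.natAbs * b.natAbs) ^ M := by ring
    _ ≤ 2 ^ M * (a.natAbs * b.natAbs) ^ M := by gcongr; norm_num
    _ = (2 * (a.natAbs * b.natAbs)) ^ M := (mul_pow _ _ _).symm
    _ ≤ (2 ^ c) ^ M := by gcongr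
    _ = _ := by rw [pow_mul]

lemma pigeon (a b : ℤ) (p : ℕ) (hp : p.Prime) (hpa : ¬ (p:ℤ) ∣ a) (hpb : ¬ (p:ℤ) ∣ b) (M : ℕ)
    (hM : Nat.lcm (orderOf (a : ZMod p)) (orderOf (b : ZMod p)) < (M + 1) ^ 2) :
    ∃ s t : ℤ, ¬ (s = 0 ∧ t = 0) ∧ s.natAbs ≤ M ∧ t.natAbs ≤ M ∧ (p : ℤ) ∣ NN a b (s, t) := by
  classical
  have : Fact p.Prime := ⟨hp⟩
  have ha : (a : ZMod p) ≠ 0 := by rwa [Ne, ZMod.intCast_zmod_eq_zero_iff_dvd]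
  have hb : (b : ZMod p) ≠ 0 := by rwa [Ne, ZMod.intCast_zmod_eq_zero_iff_dvd]
  set h := Nat.lcm (orderOf (a : ZMod p)) (orderOf (b : ZMod p)) with hh
  have hpos : 0 < h := Nat.lcm_pos (orderOf_zmod_pos p _ ha) (orderOf_zmod_pos p _ hb)
  set D := (Finset.range (M+1)) ×ˢ (Finset.range (M+1)) with hD
  set R := (Polynomial.nthRoots h (1 : ZMod p)).toFinset with hR
  have hRc : R.card ≤ h := (Multiset.toFinset_card_le _).trans (Polynomial.card_nthRoots h 1)
  have hDc : D.card = (M+1)^2 := by rw [hD, Finset.card_product, Finset.card_range, sq]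
  obtain ⟨u, hu, v, hv, huv, he⟩ := Finset.exists_ne_map_eq_of_card_lt_of_maps_to (s := D) (t := R)
    (f := fun u => (a : ZMod p) ^ u.1 * (b : ZMod p) ^ u.2) (by omega) (by
      intro u hu
      simp only [hR, Multiset.mem_toFinset, Finset.mem_coe]
      rw [Polynomial.mem_nthRoots hpos, mul_pow, ← pow_mul, ← pow_mul, mul_comm u.1, mul_comm u.2, pow_mul, pow_mul,
        orderOf_dvd_iff_pow_eq_one.mp (Nat.dvd_lcm_left _ _), orderOf_dvd_iff_pow_eq_one.mp (Nat.dvd_lcm_right _ _)]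
      simp)
  obtain ⟨i, j⟩ := u
  obtain ⟨i', j'⟩ := v
  simp only [hD, Finset.mem_product, Finset.mem_range] at hu hv
  simp only at he
  refine ⟨(i:ℤ) - i', (j:ℤ) - j', ?_, by omega, by omega, ?_⟩
  · rintro ⟨h1, h2⟩
    apply huv
    ext <;> simp <;> omega
  · rw [← ZMod.intCast_zmod_eq_zero_iff_dvd]
    unfold NN
    push_cast
    rw [sub_eq_zero]
    have hc : (a : ZMod p) ^ (min i i') * (b : ZMod p) ^ (min j j') ≠ 0 := mul_ne_zero (pow_ne_zero _ ha) (pow_ne_zero _ hb)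
    apply mul_right_cancel₀ hc
    have e1 : ((i:ℤ) - i').toNat + min i i' = i := by omega
    have e2 : ((j:ℤ) - j').toNat + min j j' = j := by omega
    have e3 : (-((i:ℤ) - i')).toNat + min i i' = i' := by omega
    have e4 : (-((j:ℤ) - j')).toNat + min j j' = j' := by omega
    rw [mul_mul_mul_comm, ← pow_add, ← pow_add, e1, e2, he, mul_mul_mul_comm, ← pow_add, ← pow_add, e3, e4]

open scoped Classical in
lemma T0 (a b : ℤ) (ha : a ≠ 0) (hb : b ≠ 0)
    (hind : ∀ m n : ℤ, (a : ℚ) ^ m * (b : ℚ) ^ n = 1 → m = 0 ∧ n = 0) :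
    ∃ C : ℕ, ∀ M : ℕ, 1 ≤ M → ∀ x : ℝ, 0 ≤ x → ((pset x).filter (fun p : ℕ => ¬ (p:ℤ) ∣ a ∧ ¬ (p:ℤ) ∣ b ∧
      Nat.lcm (orderOf (a : ZMod p)) (orderOf (b : ZMod p)) < (M + 1) ^ 2)).card ≤ C * M ^ 3 := by
  obtain ⟨c, hc⟩ : ∃ c : ℕ, 2 * (a.natAbs * b.natAbs) ≤ 2 ^ c := ⟨_, Nat.lt_two_pow_self.le⟩
  refine ⟨9 * c, ?_⟩
  intro M hM x hx
  set I := (Finset.Icc (-(M:ℤ)) M) with hI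
  set D := (I ×ˢ I).filter (fun st => ¬ (st.1 = 0 ∧ st.2 = 0)) with hD
  have h1 : ((pset x).filter (fun p : ℕ => ¬ (p:ℤ) ∣ a ∧ ¬ (p:ℤ) ∣ b ∧
      Nat.lcm (orderOf (a : ZMod p)) (orderOf (b : ZMod p)) < (M + 1) ^ 2)) ⊆ D.biUnion (fun st => (NN a b st).natAbs.primeFactors) := by
    intro p hp
    rw [Finset.mem_filter, mem_pset hx] at hp
    obtain ⟨hp, hpa, hpb, hl⟩ := hp
    obtain ⟨s, t, hst, hs, ht, hd⟩ := pigeon a b p hp.1 hpa hpb M hl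
    rw [Finset.mem_biUnion]
    refine ⟨(s, t), ?_, ?_⟩
    · rw [hD, Finset.mem_filter, Finset.mem_product, hI, Finset.mem_Icc, Finset.mem_Icc]
      refine ⟨⟨⟨?_, ?_⟩, ?_, ?_⟩, hst⟩ <;> simp only <;> omega
    · rw [Nat.mem_primeFactors]
      exact ⟨hp.1, Int.natCast_dvd.mp hd, Int.natAbs_ne_zero.mpr (NN_ne a b ha hb hind s t hst)⟩
  refine (Finset.card_le_card h1).trans (Finset.card_biUnion_le.trans ?_)
  have h2 : ∑ st ∈ D, (NN a b st).natAbs.primeFactors.card ≤ D.card * (c * M) := by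
    rw [← smul_eq_mul]
    apply Finset.sum_le_card_nsmul
    rintro ⟨s, t⟩ hst
    rw [hD, Finset.mem_filter, Finset.mem_product, hI, Finset.mem_Icc, Finset.mem_Icc] at hst
    simp only at hst
    apply omega_le _ _ (Int.natAbs_ne_zero.mpr (NN_ne a b ha hb hind s t hst.2))
    apply NN_abs a b ha hb M c hM hc s t <;> omega
  have h3 : D.card ≤ (2 * M + 1) ^ 2 := by
    refine (Finset.card_filter_le _ _).trans ?_
    rw [Finset.card_product, hI, Int.card_Icc, sq]
    apply le_of_eq
    congr 1 <;> omega
  calc _ ≤ _ := h2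
    _ ≤ (2 * M + 1) ^ 2 * (c * M) := by gcongr
    _ ≤ (3 * M) ^ 2 * (c * M) := by gcongr; omega
    _ = _ := by ring

lemma ord_key {G : Type*} [CommGroup G] (α β : G) (h : ℕ) (hpos : 0 < h)
    (hh : h = Nat.lcm (orderOf α) (orderOf β)) (q : ℕ) (hq : q.Prime) (v w : ℕ × ℕ)
    (hdet : ¬ (q : ℤ) ∣ (v.1 : ℤ) * w.2 - v.2 * w.1)
    (h1 : q ∣ h / orderOf (α ^ v.1 * β ^ v.2)) (h2 : q ∣ h / orderOf (α ^ w.1 * β ^ w.2)) : False := by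
  have hα : α ^ h = 1 := orderOf_dvd_iff_pow_eq_one.mp (hh ▸ Nat.dvd_lcm_left _ _)
  have hβ : β ^ h = 1 := orderOf_dvd_iff_pow_eq_one.mp (hh ▸ Nat.dvd_lcm_right _ _)
  have hl : ∀ v : ℕ × ℕ, orderOf (α ^ v.1 * β ^ v.2) ∣ h := by
    intro v
    rw [orderOf_dvd_iff_pow_eq_one, mul_pow, ← pow_mul, ← pow_mul, mul_comm v.1, mul_comm v.2, pow_mul, pow_mul, hα, hβ]
    simp
  have hk : ∀ v : ℕ × ℕ, q ∣ h / orderOf (α ^ v.1 * β ^ v.2) → q ∣ h ∧ (α ^ (h/q)) ^ v.1 * (β ^ (h/q)) ^ v.2 = 1 := by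
    intro v hv
    obtain ⟨m, hm⟩ := hl v
    have hlp : 0 < orderOf (α ^ v.1 * β ^ v.2) := by
      rcases Nat.eq_zero_or_pos (orderOf (α ^ v.1 * β ^ v.2)) with h0 | h0
      · rw [h0, zero_mul] at hm; omega
      · exact h0
    have hm2 : h / orderOf (α ^ v.1 * β ^ v.2) = m := Nat.div_eq_of_eq_mul_right hlp hm
    rw [hm2] at hv
    obtain ⟨e, rfl⟩ := hv
    have hqh : h / q = orderOf (α ^ v.1 * β ^ v.2) * e := by
      apply Nat.div_eq_of_eq_mul_right hq.pos
      rw [hm]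
      conv_lhs => rw [← hm]
      rw [hm]; ring
    refine ⟨⟨orderOf (α ^ v.1 * β ^ v.2) * e, ?_⟩, ?_⟩
    · conv_lhs => rw [hm]
      ring
    · rw [← pow_mul, ← pow_mul, mul_comm _ v.1, mul_comm _ v.2, pow_mul, pow_mul, ← mul_pow, hqh, pow_mul, pow_orderOf_eq_one, one_pow]
  obtain ⟨hqh, k1⟩ := hk v h1
  obtain ⟨_, k2⟩ := hk w h2
  set A := α ^ (h/q) with hA
  set B := β ^ (h/q) with hB
  have hAq : A ^ q = 1 := by rw [hA, ← pow_mul, Nat.div_mul_cancel hqh, hα]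
  have hBq : B ^ q = 1 := by rw [hB, ← pow_mul, Nat.div_mul_cancel hqh, hβ]
  have hcop : IsCoprime (q:ℤ) ((v.1 : ℤ) * w.2 - v.2 * w.1) := (Nat.prime_iff_prime_int.mp hq).coprime_iff_not_dvd.mpr hdet
  obtain ⟨r, s, hrs⟩ := hcop
  have k1' : A ^ (v.1:ℤ) * B ^ (v.2:ℤ) = 1 := by exact_mod_cast k1
  have k2' : A ^ (w.1:ℤ) * B ^ (w.2:ℤ) = 1 := by exact_mod_cast k2
  have hAd : A ^ ((v.1 : ℤ) * w.2 - v.2 * w.1) = 1 := by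
    have : A ^ ((v.1 : ℤ) * w.2 - v.2 * w.1) = (A ^ (v.1:ℤ) * B ^ (v.2:ℤ)) ^ (w.2:ℤ) * ((A ^ (w.1:ℤ) * B ^ (w.2:ℤ)) ^ (v.2:ℤ))⁻¹ := by
      rw [mul_zpow, mul_zpow, ← zpow_mul, ← zpow_mul, ← zpow_mul, ← zpow_mul, zpow_sub, mul_inv, mul_comm (w.2:ℤ) v.2, mul_comm (w.1:ℤ) v.2,
        mul_comm ((A ^ _)⁻¹), mul_mul_mul_comm]
      rw [← mul_assoc, mul_assoc (A ^ _), inv_mul_cancel, mul_one]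
    rw [this, k1', k2']
    simp
  have hBd : B ^ ((v.1 : ℤ) * w.2 - v.2 * w.1) = 1 := by
    have : B ^ ((v.1 : ℤ) * w.2 - v.2 * w.1) = (A ^ (w.1:ℤ) * B ^ (w.2:ℤ)) ^ (v.1:ℤ) * ((A ^ (v.1:ℤ) * B ^ (v.2:ℤ)) ^ (w.1:ℤ))⁻¹ := by
      rw [mul_zpow, mul_zpow, ← zpow_mul, ← zpow_mul, ← zpow_mul, ← zpow_mul, zpow_sub, mul_inv, mul_comm (w.2:ℤ) v.1, mul_comm (w.1:ℤ) v.1,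
        mul_mul_mul_comm, mul_inv_cancel, one_mul]
    rw [this, k1', k2']
    simp
  have fin : ∀ X : G, X ^ q = 1 → X ^ ((v.1 : ℤ) * w.2 - v.2 * w.1) = 1 → X = 1 := by
    intro X h1 h2
    calc X = X ^ (r * q + s * ((v.1 : ℤ) * w.2 - v.2 * w.1)) := by rw [hrs, zpow_one]
      _ = 1 := by
        rw [zpow_add, mul_comm r, mul_comm s, zpow_mul, zpow_mul, h2, zpow_natCast, h1]
        simp
  have d1 : orderOf α ∣ h / q := orderOf_dvd_iff_pow_eq_one.mpr (fin A hAq hAd)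
  have d2 : orderOf β ∣ h / q := orderOf_dvd_iff_pow_eq_one.mpr (fin B hBq hBd)
  have d3 : h ∣ h / q := by
    conv_lhs => rw [hh]
    exact Nat.lcm_dvd d1 d2
  have := Nat.le_of_dvd (Nat.div_pos (Nat.le_of_dvd hpos hqh) hq.pos) d3
  have := Nat.div_lt_self hpos hq.one_lt
  omega

/-- The five exponent vectors. -/
def vv : Fin 5 → ℕ × ℕ := ![(1, 0), (0, 1), (1, 1), (2, 1), (1, 2)]

lemma vv_det (i j : Fin 5) (hij : i ≠ j) (q : ℕ) (hq : 3 < q) :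
    ¬ (q : ℤ) ∣ ((vv i).1 : ℤ) * (vv j).2 - (vv i).2 * (vv j).1 := by
  have h : ((vv i).1 : ℤ) * (vv j).2 - (vv i).2 * (vv j).1 ≠ 0 ∧
      |((vv i).1 : ℤ) * (vv j).2 - (vv i).2 * (vv j).1| ≤ 3 := by
    revert i j
    decide
  intro hd
  have := Int.le_of_dvd (abs_pos.mpr h.1) ((dvd_abs _ _).mpr hd)
  omega

lemma rough_split (z : ℝ) (n u : ℕ) (hn : n ≠ 0) (hu : u ∣ n)
    (hsq : ∀ q : ℕ, q.Prime → z < q → ¬ q ^ 2 ∣ n) :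
    u ≤ sm z n * ∏ q ∈ u.primeFactors.filter (fun q : ℕ => z < q), q := by
  have hu0 : u ≠ 0 := fun h => hn (by rw [h] at hu; exact Nat.eq_zero_of_zero_dvd hu)
  have h1 : u = ∏ q ∈ u.primeFactors, q ^ u.factorization q := by
    conv_lhs => rw [← Nat.prod_factorization_pow_eq_self hu0]
    rfl
  have h2 := Finset.prod_filter_mul_prod_filter_not u.primeFactors (fun q : ℕ => (q:ℝ) ≤ z) (fun q => q ^ u.factorization q)
  have hf : u.factorization ≤ n.factorization := (Nat.factorization_le_iff_dvd hu0 hn).mpr hu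
  calc u = _ := h1
    _ = _ := h2.symm
    _ ≤ _ := by
      apply Nat.mul_le_mul
      · unfold sm
        calc _ ≤ ∏ q ∈ u.primeFactors.filter (fun q : ℕ => (q : ℝ) ≤ z), q ^ n.factorization q := by
              apply Finset.prod_le_prod'
              intro q hq
              rw [Finset.mem_filter, Nat.mem_primeFactors] at hq
              exact Nat.pow_le_pow_right hq.1.1.pos (hf q)
          _ ≤ _ := by
              apply Finset.prod_le_prod_of_subset_of_one_le'
              · apply Finset.filter_subset_filter
                exact Nat.primeFactors_mono hu hn
              · intro q hq _
                rw [Finset.mem_filter, Nat.mem_primeFactors] at hq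
                exact Nat.one_le_pow _ _ hq.1.1.pos
      · simp only [not_le]
        apply Finset.prod_le_prod'
        intro q hq
        rw [Finset.mem_filter, Nat.mem_primeFactors] at hq
        have : u.factorization q ≤ 1 := by
          by_contra hcon
          apply hsq q hq.1.1 hq.2
          exact ((hq.1.1.pow_dvd_iff_le_factorization hu0).mpr (by omega)).trans hu
        calc q ^ u.factorization q ≤ q ^ 1 := Nat.pow_le_pow_right hq.1.1.pos this
          _ = q := pow_one q

lemma perp (a b : ℤ) (p : ℕ) (hp : p.Prime) (hpa : ¬ (p:ℤ) ∣ a) (hpb : ¬ (p:ℤ) ∣ b)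
    (z Lb U s : ℝ) (hz : 3 ≤ z) (hLb : 0 < Lb) (hs : 0 < s)
    (hsq : ∀ q : ℕ, q.Prime → z < q → ¬ q ^ 2 ∣ p - 1)
    (hH : Lb ≤ (Nat.lcm (orderOf (a : ZMod p)) (orderOf (b : ZMod p)) : ℕ))
    (hU : ∀ i, (orderOf ((a : ZMod p) ^ (vv i).1 * (b : ZMod p) ^ (vv i).2) : ℝ) ≤ U)
    (hsm : (sm z (p - 1) : ℝ) ≤ s) :
    ∃ S : Fin 5 → Finset ℕ, (∀ i, S i ⊆ (p-1).primeFactors.filter (fun q : ℕ => z < q)) ∧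
      (∀ i j, i ≠ j → Disjoint (S i) (S j)) ∧
      (∀ i, Lb / (U * s) ≤ ((∏ q ∈ S i, q : ℕ) : ℝ) ∧ ((∏ q ∈ S i, q : ℕ) : ℝ) ≤ (U * s) ^ 4 / Lb ^ 3) := by
  have : Fact p.Prime := ⟨hp⟩
  have ha : (a : ZMod p) ≠ 0 := by rwa [Ne, ZMod.intCast_zmod_eq_zero_iff_dvd]
  have hb : (b : ZMod p) ≠ 0 := by rwa [Ne, ZMod.intCast_zmod_eq_zero_iff_dvd]
  set n := p - 1 with hn
  have hn0 : n ≠ 0 := by have := hp.two_le; omega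
  set α : (ZMod p)ˣ := Units.mk0 _ ha with hα
  set β : (ZMod p)ˣ := Units.mk0 _ hb with hβ
  have oα : orderOf (a : ZMod p) = orderOf α := by rw [← orderOf_units]; rfl
  have oβ : orderOf (b : ZMod p) = orderOf β := by rw [← orderOf_units]; rfl
  have ov : ∀ i, orderOf ((a : ZMod p) ^ (vv i).1 * (b : ZMod p) ^ (vv i).2) = orderOf (α ^ (vv i).1 * β ^ (vv i).2) := by
    intro i
    rw [← orderOf_units]
    push_cast
    rfl
  rw [oα, oβ] at hH
  simp only [ov] at hU
  set H := Nat.lcm (orderOf α) (orderOf β) with hHdef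
  have hHn : H ∣ n := by
    apply Nat.lcm_dvd
    · rw [← oα]; exact orderOf_dvd_iff_pow_eq_one.mpr (ZMod.pow_card_sub_one_eq_one ha)
    · rw [← oβ]; exact orderOf_dvd_iff_pow_eq_one.mpr (ZMod.pow_card_sub_one_eq_one hb)
  have hH0 : 0 < H := Nat.pos_of_ne_zero (fun h => hn0 (by rw [h] at hHn; exact Nat.eq_zero_of_zero_dvd hHn))
  set l : Fin 5 → ℕ := fun i => orderOf (α ^ (vv i).1 * β ^ (vv i).2) with hl
  have hα1 : α ^ H = 1 := orderOf_dvd_iff_pow_eq_one.mp (Nat.dvd_lcm_left _ _)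
  have hβ1 : β ^ H = 1 := orderOf_dvd_iff_pow_eq_one.mp (Nat.dvd_lcm_right _ _)
  have hlH : ∀ i, l i ∣ H := by
    intro i
    rw [hl]
    simp only
    rw [orderOf_dvd_iff_pow_eq_one, mul_pow, ← pow_mul, ← pow_mul, mul_comm (vv i).1, mul_comm (vv i).2, pow_mul, pow_mul, hα1, hβ1]
    simp
  have hl0 : ∀ i, 0 < l i := fun i => Nat.pos_of_dvd_of_pos (hlH i) hH0
  set u : Fin 5 → ℕ := fun i => H / l i with hu
  have huH : ∀ i, u i ∣ H := fun i => Nat.div_dvd_of_dvd (hlH i)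
  have hu0 : ∀ i, u i ≠ 0 := fun i => (Nat.pos_of_dvd_of_pos (huH i) hH0).ne'
  set S : Fin 5 → Finset ℕ := fun i => (u i).primeFactors.filter (fun q : ℕ => z < q) with hS
  have hSp : ∀ i, ∀ q ∈ S i, q.Prime ∧ q ∣ u i ∧ z < q := by
    intro i q hq
    simp only [hS, Finset.mem_filter, Nat.mem_primeFactors] at hq
    exact ⟨hq.1.1, hq.1.2.1, hq.2⟩
  have hdisj : ∀ i j, i ≠ j → Disjoint (S i) (S j) := by
    intro i j hij
    rw [Finset.disjoint_left]
    intro q hi hj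
    obtain ⟨h1, h2, h3⟩ := hSp i q hi
    obtain ⟨_, h4, _⟩ := hSp j q hj
    have hq3 : 3 < q := by
      have : (3:ℝ) < q := by linarith
      exact_mod_cast this
    exact ord_key α β H hH0 rfl q h1 (vv i) (vv j) (vv_det i j hij q hq3) h2 h4
  have hprod : ∏ i, ((∏ q ∈ S i, q : ℕ) : ℝ) ≤ H := by
    have e : ∏ q ∈ (Finset.univ : Finset (Fin 5)).biUnion S, q = ∏ i, ∏ q ∈ S i, q := by
      apply Finset.prod_biUnion
      intro i _ j _ hij
      exact hdisj i j hij
    have : (∏ i, ∏ q ∈ S i, q) ∣ H := by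
      rw [← e]
      apply prod_dvd_of
      · intro q hq
        rw [Finset.mem_biUnion] at hq
        obtain ⟨i, _, hi⟩ := hq
        exact (hSp i q hi).1
      · intro q hq
        rw [Finset.mem_biUnion] at hq
        obtain ⟨i, _, hi⟩ := hq
        exact (hSp i q hi).2.1.trans (huH i)
    exact_mod_cast Nat.le_of_dvd hH0 this
  have hHr : (0:ℝ) < H := by exact_mod_cast hH0
  have hU0 : 0 < U := lt_of_lt_of_le (by exact_mod_cast hl0 0) (hU 0)
  have hlow : ∀ i, (H:ℝ) / (U * s) ≤ ((∏ q ∈ S i, q : ℕ) : ℝ) := by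
    intro i
    have h1 := rough_split z n (u i) hn0 ((huH i).trans hHn) hsq
    have h2 : (u i : ℝ) ≤ s * ((∏ q ∈ S i, q : ℕ) : ℝ) := by
      calc (u i : ℝ) ≤ (sm z n : ℝ) * ((∏ q ∈ S i, q : ℕ) : ℝ) := by exact_mod_cast h1
        _ ≤ _ := by gcongr
    have h3 : (H:ℝ) = l i * u i := by
      have : l i * u i = H := Nat.mul_div_cancel' (hlH i)
      exact_mod_cast this.symm
    rw [div_le_iff₀ (by positivity), h3]
    calc (l i : ℝ) * u i ≤ U * (s * ((∏ q ∈ S i, q : ℕ) : ℝ)) := by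
          apply mul_le_mul (hU i) h2 (by positivity) hU0.le
      _ = _ := by ring
  refine ⟨S, ?_, hdisj, ?_⟩
  · intro i
    apply Finset.filter_subset_filter
    exact Nat.primeFactors_mono ((huH i).trans hHn) hn0
  · intro i
    refine ⟨le_trans (by gcongr) (hlow i), ?_⟩
    set r := (H:ℝ) / (U * s) with hr
    have hr0 : 0 < r := by positivity
    set d : Fin 5 → ℝ := fun i => ((∏ q ∈ S i, q : ℕ) : ℝ) with hd
    have h1 : d i * r ^ 4 ≤ H := by
      calc d i * r ^ 4 = d i * ∏ j ∈ Finset.univ.erase i, r := by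
            rw [Finset.prod_const, Finset.card_erase_of_mem (Finset.mem_univ _)]
            simp
        _ ≤ d i * ∏ j ∈ Finset.univ.erase i, d j := by
            apply mul_le_mul_of_nonneg_left _ (Nat.cast_nonneg _)
            apply Finset.prod_le_prod
            · intros; exact hr0.le
            · intro j _; exact hlow j
        _ = ∏ j, d j := Finset.mul_prod_erase _ _ (Finset.mem_univ i)
        _ ≤ H := hprod
    have h2 : d i ≤ H / r ^ 4 := by rw [le_div_iff₀ (by positivity)]; exact h1
    calc d i ≤ H / r ^ 4 := h2
      _ = (U * s) ^ 4 / H ^ 3 := by rw [hr]; field_simp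
      _ ≤ _ := by gcongr

lemma gw_quarter (S : Finset ℕ) : gw (1/4) S = (1/4:ℝ) ^ S.card * gw 1 S := by
  unfold gw
  rw [← Finset.prod_const, ← Finset.prod_mul_distrib]
  apply Finset.prod_congr rfl
  intros
  ring

open scoped Classical in
lemma mainCount (x B z lo hi : ℝ) (R : ℕ) (hx : 0 ≤ x) (hB : 0 ≤ B)
    (hBT : ∀ d : ℕ, 0 < d → (d : ℝ) ≤ x ^ (9/10 : ℝ) → (pc x d : ℝ) ≤ B * (1 / Nat.totient d))
    (hhx : hi ^ 5 ≤ x ^ (9/10 : ℝ)) (P : Finset ℕ) (hP : P = (pset x).filter (fun q : ℕ => z < q)) :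
    (((pset x).filter (fun p => ((p-1).primeFactors.filter (fun q : ℕ => z < q)).card ≤ R ∧
      ∃ S : Fin 5 → Finset ℕ, (∀ i, S i ⊆ (p-1).primeFactors.filter (fun q : ℕ => z < q)) ∧
      (∀ i j, i ≠ j → Disjoint (S i) (S j)) ∧
      (∀ i, lo ≤ ((∏ q ∈ S i, q : ℕ) : ℝ) ∧ ((∏ q ∈ S i, q : ℕ) : ℝ) ≤ hi))).card : ℝ) ≤
    4 ^ R * B * (∑ S ∈ P.powerset.filter (fun S => lo ≤ ((∏ q ∈ S, q : ℕ) : ℝ) ∧ ((∏ q ∈ S, q : ℕ) : ℝ) ≤ hi), gw (1/4) S) ^ 5 := by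
  set 𝒟 := P.powerset.filter (fun S => lo ≤ ((∏ q ∈ S, q : ℕ) : ℝ) ∧ ((∏ q ∈ S, q : ℕ) : ℝ) ≤ hi) with hD
  set F := (pset x).filter (fun p => ((p-1).primeFactors.filter (fun q : ℕ => z < q)).card ≤ R ∧
      ∃ S : Fin 5 → Finset ℕ, (∀ i, S i ⊆ (p-1).primeFactors.filter (fun q : ℕ => z < q)) ∧
      (∀ i j, i ≠ j → Disjoint (S i) (S j)) ∧
      (∀ i, lo ≤ ((∏ q ∈ S i, q : ℕ) : ℝ) ∧ ((∏ q ∈ S i, q : ℕ) : ℝ) ≤ hi)) with hF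
  have hPp : ∀ q ∈ P, q.Prime := by
    intro q hq
    rw [hP, Finset.mem_filter, mem_pset hx] at hq
    exact hq.1.1
  set TT := (Fintype.piFinset (fun _ : Fin 5 => 𝒟)).filter (fun S => ∀ i j, i ≠ j → Disjoint (S i) (S j)) with hTT
  set wt : (Fin 5 → Finset ℕ) → ℝ := fun S => 4 ^ R * ∏ i, (1/4:ℝ) ^ (S i).card with hwt
  have hwt0 : ∀ S, 0 ≤ wt S := by intro S; rw [hwt]; positivity
  have h1 : ∀ p ∈ F, 1 ≤ ∑ S ∈ TT, if (∏ i, ∏ q ∈ S i, q) ∣ p - 1 then wt S else 0 := by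
    intro p hp
    rw [hF, Finset.mem_filter, mem_pset hx] at hp
    obtain ⟨hp, hR, S, hS1, hS2, hS3⟩ := hp
    have hn0 : p - 1 ≠ 0 := by have := hp.1.two_le; omega
    have hS4 : ∀ i, ∀ q ∈ S i, q.Prime ∧ q ∣ p - 1 ∧ z < q := by
      intro i q hq
      have := hS1 i hq
      simp only [Finset.mem_filter, Nat.mem_primeFactors] at this
      exact ⟨this.1.1, this.1.2.1, this.2⟩
    have hmem : S ∈ TT := by
      rw [hTT, Finset.mem_filter, Fintype.mem_piFinset]
      refine ⟨?_, hS2⟩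
      intro i
      rw [hD, Finset.mem_filter, Finset.mem_powerset]
      refine ⟨?_, hS3 i⟩
      intro q hq
      obtain ⟨h1, h2, h3⟩ := hS4 i q hq
      rw [hP, Finset.mem_filter, mem_pset hx]
      refine ⟨⟨h1, le_trans ?_ hp.2⟩, h3⟩
      have := Nat.le_of_dvd (by omega) h2
      exact_mod_cast this.trans (Nat.sub_le _ _)
    have e : ∏ q ∈ (Finset.univ : Finset (Fin 5)).biUnion S, q = ∏ i, ∏ q ∈ S i, q := by
      apply Finset.prod_biUnion
      intro i _ j _ hij
      exact hS2 i j hij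
    have hdv : (∏ i, ∏ q ∈ S i, q) ∣ p - 1 := by
      rw [← e]
      apply prod_dvd_of
      · intro q hq
        rw [Finset.mem_biUnion] at hq
        obtain ⟨i, _, hi⟩ := hq
        exact (hS4 i q hi).1
      · intro q hq
        rw [Finset.mem_biUnion] at hq
        obtain ⟨i, _, hi⟩ := hq
        exact (hS4 i q hi).2.1
    have hcard : ∑ i, (S i).card ≤ R := by
      rw [← Finset.card_biUnion (fun i _ j _ hij => hS2 i j hij)]
      refine le_trans (Finset.card_le_card ?_) hR
      intro q hq
      rw [Finset.mem_biUnion] at hq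
      obtain ⟨i, _, hi⟩ := hq
      exact hS1 i hi
    have hw1 : 1 ≤ wt S := by
      simp only [hwt]
      rw [Finset.prod_pow_eq_pow_sum, one_div, inv_pow, ← div_eq_mul_inv, one_le_div (by positivity)]
      exact pow_le_pow_right₀ (by norm_num) hcard
    have := Finset.single_le_sum (f := fun S => if (∏ i, ∏ q ∈ S i, q) ∣ p - 1 then wt S else 0) (s := TT) (by
      intro S _
      split_ifs
      · exact hwt0 S
      · rfl) hmem
    simp only [hdv, if_true] at this
    exact hw1.trans this
  calc (F.card : ℝ) ≤ ∑ p ∈ F, ∑ S ∈ TT, (if (∏ i, ∏ q ∈ S i, q) ∣ p - 1 then wt S else 0) := by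
        have := Finset.card_nsmul_le_sum F (fun p => ∑ S ∈ TT, if (∏ i, ∏ q ∈ S i, q) ∣ p - 1 then wt S else 0) 1 h1
        simpa using this
    _ ≤ ∑ p ∈ pset x, ∑ S ∈ TT, (if (∏ i, ∏ q ∈ S i, q) ∣ p - 1 then wt S else 0) := by
        apply Finset.sum_le_sum_of_subset_of_nonneg (Finset.filter_subset _ _)
        intro p _ _
        apply Finset.sum_nonneg
        intro S _
        split_ifs
        · exact hwt0 S
        · rfl
    _ = ∑ S ∈ TT, wt S * pc x (∏ i, ∏ q ∈ S i, q) := by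
        rw [Finset.sum_comm]
        apply Finset.sum_congr rfl
        intro S _
        rw [← Finset.sum_filter, Finset.sum_const, nsmul_eq_mul, mul_comm]
        unfold pc
        congr!
    _ ≤ ∑ S ∈ TT, 4 ^ R * B * ∏ i, gw (1/4) (S i) := by
        apply Finset.sum_le_sum
        intro S hS
        rw [hTT, Finset.mem_filter, Fintype.mem_piFinset] at hS
        have hS5 : ∀ i, S i ⊆ P ∧ ((∏ q ∈ S i, q : ℕ) : ℝ) ≤ hi := by
          intro i
          have := hS.1 i
          rw [hD, Finset.mem_filter, Finset.mem_powerset] at this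
          exact ⟨this.1, this.2.2⟩
        have e : ∏ q ∈ (Finset.univ : Finset (Fin 5)).biUnion S, q = ∏ i, ∏ q ∈ S i, q := by
          apply Finset.prod_biUnion
          intro i _ j _ hij
          exact hS.2 i j hij
        have e2 : gw 1 ((Finset.univ : Finset (Fin 5)).biUnion S) = ∏ i, gw 1 (S i) := by
          unfold gw
          apply Finset.prod_biUnion
          intro i _ j _ hij
          exact hS.2 i j hij
        have hb := hBT (∏ i, ∏ q ∈ S i, q) (Finset.prod_pos (fun i _ => Finset.prod_pos (fun q hq => (hPp q ((hS5 i).1 hq)).pos))) (by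
          refine le_trans ?_ hhx
          push_cast
          calc ∏ i, ∏ q ∈ S i, (q:ℝ) ≤ ∏ i : Fin 5, hi := by
                apply Finset.prod_le_prod
                · intros; positivity
                · intro i _
                  have := (hS5 i).2
                  push_cast at this
                  exact this
            _ = hi ^ 5 := by simp)
        rw [← e, tot_primes _ (by
          intro q hq
          rw [Finset.mem_biUnion] at hq
          obtain ⟨i, _, hi⟩ := hq
          exact hPp q ((hS5 i).1 hi)), e2, e] at hb
        calc _ ≤ wt S * (B * ∏ i, gw 1 (S i)) := mul_le_mul_of_nonneg_left hb (hwt0 S)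
          _ = _ := by
            simp only [hwt, gw_quarter, Finset.prod_mul_distrib]
            ring
    _ ≤ ∑ S ∈ Fintype.piFinset (fun _ : Fin 5 => 𝒟), 4 ^ R * B * ∏ i, gw (1/4) (S i) := by
        apply Finset.sum_le_sum_of_subset_of_nonneg (Finset.filter_subset _ _)
        intro S hS _
        rw [Fintype.mem_piFinset] at hS
        have : 0 ≤ ∏ i, gw (1/4) (S i) := by
          apply Finset.prod_nonneg
          intro i _
          apply gw_nonneg _ (by norm_num)
          intro q hq
          have := hS i
          rw [hD, Finset.mem_filter, Finset.mem_powerset] at this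
          exact hPp q (this.1 hq)
        positivity
    _ = _ := by
        rw [← Finset.mul_sum, Finset.sum_pow']

lemma small_pow (θ c e : ℝ) (hθ : θ < 1) (hc : 0 < c) (he : 0 < e) :
    ∀ᶠ x : ℝ in atTop, c * x ^ θ ≤ e * (x / Real.log x) := by
  have h := (isLittleO_log_rpow_atTop (show 0 < 1 - θ by linarith)).bound (show 0 < e / c by positivity)
  filter_upwards [h, eventually_gt_atTop 1] with x hx hx1
  have hx0 : 0 < x := by linarith
  have hl : 0 < Real.log x := Real.log_pos hx1
  rw [Real.norm_of_nonneg hl.le, Real.norm_of_nonneg (by positivity), Real.rpow_sub hx0, Real.rpow_one] at hx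
  have hp : 0 < x ^ θ := by positivity
  rw [← mul_div_assoc, le_div_iff₀ hl]
  calc c * x ^ θ * Real.log x ≤ c * x ^ θ * (e / c * (x / x ^ θ)) := by gcongr
    _ = _ := by field_simp

lemma log4_lt : Real.log 4 < 1.3864 := by
  have : Real.log 4 = 2 * Real.log 2 := by
    rw [show (4:ℝ) = 2 ^ 2 by norm_num, Real.log_pow]; norm_num
  rw [this]
  linarith [Real.log_two_lt_d9]

lemma omega_split (x z w : ℝ) (k : ℕ) (hx : 0 ≤ x) (hw : 1 < w) (hwx : x ≤ w ^ (2 * k)) (p : ℕ) (hp : p ∈ pset x) :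
    ((p-1).primeFactors.filter (fun q : ℕ => z < q)).card ≤
      (((pset w).filter (fun q : ℕ => z < q)).filter (fun q => q ∣ p - 1)).card + 2 * k := by
  classical
  rw [mem_pset hx] at hp
  have hn0 : 0 < p - 1 := by have := hp.1.two_le; omega
  set J := (p-1).primeFactors.filter (fun q : ℕ => w < q) with hJ
  have hJc : J.card ≤ 2 * k := by
    have h1 : (∏ q ∈ J, q) ≤ p - 1 := by
      apply Nat.le_of_dvd hn0
      apply prod_dvd_of
      · intro q hq
        rw [hJ, Finset.mem_filter, Nat.mem_primeFactors] at hq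
        exact hq.1.1
      · intro q hq
        rw [hJ, Finset.mem_filter, Nat.mem_primeFactors] at hq
        exact hq.1.2.1
    have h2 : w ^ J.card ≤ ∏ q ∈ J, (q:ℝ) := by
      rw [← Finset.prod_const]
      apply Finset.prod_le_prod
      · intros; linarith
      · intro q hq
        rw [hJ, Finset.mem_filter] at hq
        exact hq.2.le
    have h3 : ((∏ q ∈ J, q : ℕ) : ℝ) ≤ p := by exact_mod_cast h1.trans (Nat.sub_le _ _)
    push_cast at h3
    have h4 : w ^ J.card ≤ w ^ (2 * k) := by linarith [hp.2]
    exact (pow_le_pow_iff_right₀ hw).mp h4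
  have hsub : (p-1).primeFactors.filter (fun q : ℕ => z < q) ⊆
      (((pset w).filter (fun q : ℕ => z < q)).filter (fun q => q ∣ p - 1)) ∪ J := by
    intro q hq
    rw [Finset.mem_filter, Nat.mem_primeFactors] at hq
    rw [Finset.mem_union, Finset.mem_filter, Finset.mem_filter, mem_pset (by linarith), hJ, Finset.mem_filter, Nat.mem_primeFactors]
    by_cases h : (q:ℝ) ≤ w
    · left; exact ⟨⟨⟨hq.1.1, h⟩, hq.2⟩, hq.1.2.1⟩
    · right; exact ⟨hq.1, not_le.mp h⟩
  have := (Finset.card_le_card hsub).trans (Finset.card_union_le _ _)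
  omega

lemma N1 (x δ B : ℝ) (k : ℕ) (hk : 1 ≤ k) (hδ : 0 < δ) (hL : 25 + 7 * (k:ℝ) ≤ Real.log (1/δ))
    (hδk : δ * (2 * k) ≤ 1) (hx : 1 < x) (hz : 4 ≤ x ^ δ) (hB : 0 ≤ B)
    (hBT : ∀ d : ℕ, 0 < d → (d : ℝ) ≤ x ^ (9/10 : ℝ) → (pc x d : ℝ) ≤ B * (1 / Nat.totient d)) :
    (((pset x).filter (fun p => ⌈2 * Real.log (1/δ)⌉₊ ≤
      (((pset (x ^ (1 / (2 * (k:ℝ))))).filter (fun q : ℕ => x ^ δ < q)).filter (fun q => q ∣ p - 1)).card)).card : ℝ) ≤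
      B * (3/4) ^ k := by
  set w := x ^ (1 / (2 * (k:ℝ))) with hw
  set z := x ^ δ with hzd
  set P := (pset w).filter (fun q : ℕ => z < q) with hP
  set Lg := Real.log (1/δ) with hLg
  set t := ⌈2 * Lg⌉₊ with ht
  have hk0 : (1:ℝ) ≤ k := by exact_mod_cast hk
  have hx0 : 0 < x := by linarith
  have hlx : 0 < Real.log x := Real.log_pos hx
  have hw0 : 0 < w := by positivity
  have hzw : z ≤ w := by
    rw [hw, hzd]
    apply Real.rpow_le_rpow_of_exponent_le hx.le
    rw [le_div_iff₀ (by positivity)]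
    exact hδk
  have hwk : w ^ k ≤ x ^ (9/10:ℝ) := by
    rw [hw, ← Real.rpow_mul_natCast hx0.le]
    apply Real.rpow_le_rpow_of_exponent_le hx.le
    have : 1 / (2 * (k:ℝ)) * k = 1/2 := by field_simp
    rw [this]; norm_num
  have hPp : ∀ q ∈ P, q.Prime ∧ z < q ∧ (q:ℝ) ≤ w := by
    intro q hq
    rw [hP, Finset.mem_filter, mem_pset hw0.le] at hq
    exact ⟨hq.1.1, hq.2, hq.1.2⟩
  have h1 := T1 x B w hBT hB P (fun q hq => (hPp q hq).1) (fun q hq => (hPp q hq).2.2) k t hwk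
  have h2 := M2 z w hz hzw P hPp
  have h3 : Real.log (Real.log w / Real.log z) ≤ Lg := by
    rw [hw, hzd, Real.log_rpow hx0, Real.log_rpow hx0, mul_div_mul_right _ _ hlx.ne']
    rw [hLg]
    apply Real.log_le_log (by positivity)
    gcongr
    rw [div_le_one (by positivity)]
    linarith
  have h4 := log4_lt
  have h40 := log4_pos
  set Λ := ∑ q ∈ P, 1 / ((q:ℝ) - 1) with hΛ
  have h5 : Λ ≤ (3/4) * (2 * Lg - k) := by
    calc Λ ≤ Real.log 4 * (Lg + 2) := h2.trans (by gcongr)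
      _ ≤ 1.3864 * (Lg + 2) := by gcongr; linarith
      _ ≤ _ := by linarith
  have hΛ0 : 0 ≤ Λ := by
    apply Finset.sum_nonneg
    intro q hq
    have : (1:ℝ) ≤ q := by exact_mod_cast (hPp q hq).1.one_lt.le
    apply div_nonneg zero_le_one; linarith
  have h6 : 2 * Lg - k ≤ ((t + 1 - k : ℕ) : ℝ) := by
    have h7 : 2 * Lg ≤ t := Nat.le_ceil _
    have h8 : t ≤ (t + 1 - k) + k := by omega
    have h9 : (t:ℝ) ≤ ((t + 1 - k : ℕ) : ℝ) + k := by exact_mod_cast h8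
    linarith
  have h7 : 0 < 2 * Lg - k := by linarith
  set Y := (((t + 1 - k : ℕ) : ℝ)) with hY
  have hY0 : 0 < Y := by linarith
  have h8 : Λ ≤ (3/4) * Y := h5.trans (by linarith)
  have h9 : Λ ^ k ≤ (3/4) ^ k * Y ^ k := by
    rw [← mul_pow]
    gcongr
  have h10 : 0 < Y ^ k := by positivity
  have h11 : B * Λ ^ k ≤ B * (3/4)^k * Y ^ k := by
    rw [mul_assoc]
    gcongr
  exact le_of_mul_le_mul_right (h1.trans h11) h10

lemma N2 (x δ lo hi K : ℝ) (hδ : 0 < δ) (hδ1 : δ ≤ 1) (hx : 1 < x) (hz : 4 ≤ x ^ δ) (hxl : 2 ≤ δ * Real.log x) (hK : 0 ≤ K)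
    (hlo : lo = x ^ (2/15 - (K+2) * δ)) (hhi : hi = x ^ (2/15 + (4 * K + 7) * δ)) (hKδ : (K + 2) * δ ≤ 1/30)
    (P : Finset ℕ) (hP : P = (pset x).filter (fun q : ℕ => x ^ δ < q)) :
    ∑ S ∈ P.powerset.filter (fun S => lo ≤ ((∏ q ∈ S, q : ℕ) : ℝ) ∧ ((∏ q ∈ S, q : ℕ) : ℝ) ≤ hi), gw (1/4) S ≤
      (50 * (K + 2) * Real.exp 1) * δ ^ (1 - Real.log 4 / 4) := by
  have hx0 : 0 < x := by linarith
  have hlx : 0 < Real.log x := Real.log_pos hx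
  have hPp : ∀ q ∈ P, q.Prime ∧ x ^ δ < q ∧ (q:ℝ) ≤ x := by
    intro q hq
    rw [hP, Finset.mem_filter, mem_pset hx0.le] at hq
    exact ⟨hq.1.1, hq.2, hq.1.2⟩
  have hlo1 : 1 < lo := by
    rw [hlo]
    apply Real.one_lt_rpow hx
    linarith
  have hKp : 0 ≤ K * δ := by positivity
  have hlh : lo ≤ hi := by
    rw [hlo, hhi]
    apply Real.rpow_le_rpow_of_exponent_le hx.le
    nlinarith
  have h1 := T2 (1/4) lo hi (by norm_num) hlo1 hlh P (fun q hq => (hPp q hq).1)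
  have h2 := M2 (x ^ δ) x hz (by
    conv_rhs => rw [← Real.rpow_one x]
    exact Real.rpow_le_rpow_of_exponent_le hx.le hδ1) P hPp
  rw [Real.log_rpow hx0, div_mul_cancel_right₀ hlx.ne', Real.log_inv] at h2
  have h4 := log4_lt
  have h40 := log4_pos
  have h3 : Real.exp (1/4 * ∑ q ∈ P, 1 / ((q:ℝ) - 1)) ≤ Real.exp 1 * δ ^ (- (Real.log 4 / 4)) := by
    rw [Real.rpow_def_of_pos hδ, ← Real.exp_add]
    apply Real.exp_le_exp.mpr
    nlinarith
  have hlhi : Real.log (hi / lo) = (5 * K + 9) * δ * Real.log x := by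
    rw [hlo, hhi, ← Real.rpow_sub hx0, Real.log_rpow hx0]
    ring
  have hllo : (1/10) * Real.log x ≤ Real.log lo := by
    rw [hlo, Real.log_rpow hx0]
    gcongr
    linarith
  have hllo0 : 0 < Real.log lo := Real.log_pos hlo1
  have h5 : (1 / Real.log lo) * (2 * (1/4) * (Real.log 4 * (Real.log (hi / lo) + 2))) ≤ 50 * (K + 2) * δ := by
    rw [hlhi, one_div_mul_eq_div, div_le_iff₀ hllo0]
    calc 2 * (1/4) * (Real.log 4 * ((5 * K + 9) * δ * Real.log x + 2)) ≤ 2 * (1/4) * (2 * ((5 * K + 9) * δ * Real.log x + δ * Real.log x)) := by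
          gcongr
          linarith
      _ = 50 * (K+2) * δ * ((1/10) * Real.log x) := by ring
      _ ≤ _ := by gcongr
  refine h1.trans ?_
  calc _ ≤ 50 * (K + 2) * δ * (Real.exp 1 * δ ^ (- (Real.log 4 / 4))) := by gcongr
    _ = _ := by
      rw [sub_eq_add_neg, Real.rpow_add hδ, Real.rpow_one]
      ring

lemma N3 (δ c : ℝ) (k : ℕ) (hδ : 0 < δ) (hδ1 : δ ≤ 1) (hc : 0 ≤ c) :
    (4:ℝ) ^ (⌈2 * Real.log (1/δ)⌉₊ + 2 * k) * (c * δ ^ (1 - Real.log 4 / 4)) ^ 5 ≤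
      4 * 16 ^ k * c ^ 5 * δ ^ (5 - 13 / 4 * Real.log 4) := by
  have hL : 0 ≤ Real.log (1/δ) := Real.log_nonneg (by rw [le_div_iff₀ hδ]; linarith)
  have h1 : (4:ℝ) ^ (⌈2 * Real.log (1/δ)⌉₊) ≤ 4 * δ ^ (-(2 * Real.log 4)) := by
    rw [← Real.rpow_natCast]
    calc (4:ℝ) ^ (⌈2 * Real.log (1/δ)⌉₊ : ℝ) ≤ (4:ℝ) ^ (2 * Real.log (1/δ) + 1) := by
          apply Real.rpow_le_rpow_of_exponent_le (by norm_num)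
          exact (Nat.ceil_lt_add_one (by positivity)).le
      _ = 4 * δ ^ (-(2 * Real.log 4)) := by
          rw [Real.rpow_add (by norm_num), Real.rpow_one, mul_comm, Real.rpow_def_of_pos (by norm_num), Real.rpow_def_of_pos hδ,
            one_div, Real.log_inv]
          congr 2
          ring
  have h2 : (c * δ ^ (1 - Real.log 4 / 4)) ^ 5 = c ^ 5 * δ ^ (5 - 5/4 * Real.log 4) := by
    rw [mul_pow, ← Real.rpow_mul_natCast hδ.le]
    congr 2
    push_cast
    ring
  have h3 : (5 - 13 / 4 * Real.log 4) = -(2 * Real.log 4) + (5 - 5/4 * Real.log 4) := by ring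
  rw [h2, h3, Real.rpow_add hδ, pow_add, pow_mul, show (4:ℝ)^2 = 16 by norm_num]
  calc _ ≤ (4 * δ ^ (-(2 * Real.log 4))) * 16 ^ k * (c ^ 5 * δ ^ (5 - 5/4 * Real.log 4)) := by gcongr
    _ = _ := by ring

lemma N4 (D e K : ℝ) (k : ℕ) (he : 0 < e) (hK : 0 < K) (hk : 1 ≤ k) :
    ∃ δ : ℝ, 0 < δ ∧ δ ≤ 1/10 ∧ 25 + 7 * (k:ℝ) ≤ Real.log (1/δ) ∧ δ * (2 * k) ≤ 1 ∧ (K + 2) * δ ≤ 1/30 ∧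
      (4 * K + 7) * δ ≤ 7/150 ∧ D * δ ^ (5 - 13 / 4 * Real.log 4) ≤ e := by
  have hk0 : (1:ℝ) ≤ k := by exact_mod_cast hk
  have h4 := log4_lt
  have hθ : 0 < 5 - 13 / 4 * Real.log 4 := by linarith
  have h1 : Tendsto (fun δ : ℝ => D * δ ^ (5 - 13 / 4 * Real.log 4)) (nhdsWithin 0 (Set.Ioi 0)) (nhds 0) := by
    have := (Real.continuousAt_rpow_const 0 (5 - 13 / 4 * Real.log 4) (Or.inr hθ.le)).tendsto
    rw [Real.zero_rpow hθ.ne'] at this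
    have := (this.const_mul D).mono_left (nhdsWithin_le_nhds (s := Set.Ioi 0))
    rwa [mul_zero] at this
  have h2 : ∀ᶠ δ in nhdsWithin (0:ℝ) (Set.Ioi 0), D * δ ^ (5 - 13 / 4 * Real.log 4) ≤ e :=
    (h1.eventually_lt_const he).mono (fun _ h => h.le)
  have h3 : ∀ c : ℝ, 0 < c → ∀ᶠ δ in nhdsWithin (0:ℝ) (Set.Ioi 0), δ ≤ c ∧ 0 < δ := by
    intro c hc
    filter_upwards [Ioo_mem_nhdsGT hc] with δ hδ
    exact ⟨hδ.2.le, hδ.1⟩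
  obtain ⟨δ, g1, g2, g3, g4, g5, g6⟩ := (h2.and ((h3 (1/10) (by norm_num)).and ((h3 (Real.exp (-(25 + 7 * (k:ℝ)))) (Real.exp_pos _)).and
    ((h3 (1/(2*k)) (by positivity)).and ((h3 (1/30/(K+2)) (by positivity)).and (h3 (7/150/(4*K+7)) (by positivity))))))).exists
  refine ⟨δ, g2.2, g2.1, ?_, ?_, ?_, ?_, g1⟩
  · rw [one_div, Real.log_inv]
    have := Real.log_le_log g2.2 g3.1
    rw [Real.log_exp] at this
    linarith
  · have := g4.1
    rwa [le_div_iff₀ (by positivity)] at this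
  · have := g5.1
    rw [le_div_iff₀ (by positivity)] at this
    linarith
  · have := g6.1
    rw [le_div_iff₀ (by positivity)] at this
    linarith

set_option maxHeartbeats 8000000 in
open scoped Classical in
lemma core (ε : ℝ → ℝ) (hεlim : Tendsto ε atTop (nhds 0))
    (a b : ℤ) (ha : a ≠ 0) (hb : b ≠ 0)
    (hind : ∀ m n : ℤ, (a : ℚ) ^ m * (b : ℚ) ^ n = 1 → m = 0 ∧ n = 0) (η : ℝ) (hη : 0 < η) :
    ∀ᶠ x : ℝ in atTop, (((pset x).filter (fun p : ℕ => ∀ i, (orderOf ((a : ZMod p) ^ (vv i).1 * (b : ZMod p) ^ (vv i).2) : ℝ) ≤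
      (p:ℝ) ^ ((8 : ℝ) / 15 + ε p))).card : ℝ) ≤ η * (x / Real.log x) := by
  obtain ⟨C0, hC0, hBT0⟩ := BT
  obtain ⟨C1, hC1⟩ := T0 a b ha hb hind
  -- choose the moment
  obtain ⟨k, hk1, hk⟩ : ∃ k : ℕ, 1 ≤ k ∧ C0 * (3/4:ℝ) ^ k ≤ η / 8 := by
    have h1 : Tendsto (fun k : ℕ => C0 * (3/4:ℝ) ^ k) atTop (nhds 0) := by
      have := (tendsto_pow_atTop_nhds_zero_of_lt_one (r := (3/4:ℝ)) (by norm_num) (by norm_num)).const_mul C0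
      rwa [mul_zero] at this
    obtain ⟨k, h⟩ := ((h1.eventually_lt_const (show 0 < η / 8 by positivity)).and (eventually_ge_atTop 1)).exists
    exact ⟨k, h.2, h.1.le⟩
  obtain ⟨K, hK0, hK⟩ : ∃ K : ℝ, 0 < K ∧ 16 * C0 / K ≤ η / 8 := by
    refine ⟨128 * C0 / η, by positivity, le_of_eq ?_⟩
    field_simp
    norm_num
  set cK := 50 * (K + 2) * Real.exp 1 with hcK
  have hcK0 : 0 < cK := by positivity
  obtain ⟨δ, hδ, hδ1, hδL, hδk, hδK1, hδK2, hδm⟩ := N4 (C0 * (4 * 16 ^ k * cK ^ 5)) (η/8) K k (by positivity) hK0 hk1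
  obtain ⟨P0, hP0⟩ := eventually_atTop.mp (hεlim.eventually_lt_const hδ)
  set N0 : ℕ := max ⌈P0⌉₊ (max a.natAbs b.natAbs) with hN0
  have e1 := small_pow 0 (N0 + 1) (η/8) (by norm_num) (by positivity) (by positivity)
  have e2 := small_pow (1 - 3/2 * δ) (C1 + 1) (η/8) (by linarith) (by positivity) (by positivity)
  have e3 := small_pow (1 - δ) 2 (η/8) (by linarith) (by positivity) (by positivity)
  have e4 := small_pow (1/10 + δ) 1 (η/8) (by linarith) (by positivity) (by positivity)
  have e5 : ∀ᶠ x : ℝ in atTop, 4 ≤ x ^ δ := (tendsto_rpow_atTop hδ).eventually_ge_atTop 4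
  have e6 : ∀ᶠ x : ℝ in atTop, 2 ≤ δ * Real.log x := (Real.tendsto_log_atTop.const_mul_atTop hδ).eventually_ge_atTop 2
  filter_upwards [hBT0, e1, e2, e3, e4, e5, e6, eventually_gt_atTop 1] with x hBT1 e1 e2 e3 e4 hz hxl hx
  have hx0 : 0 < x := by linarith
  have hlx : 0 < Real.log x := Real.log_pos hx
  set Y := x / Real.log x with hY
  have hY0 : 0 < Y := by positivity
  set B := C0 * Y with hB
  have hB0 : 0 < B := by positivity
  set z := x ^ δ with hzd
  set w := x ^ (1 / (2 * (k:ℝ))) with hw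
  set t := ⌈2 * Real.log (1/δ)⌉₊ with ht
  set Lb := x ^ (2/3 - δ) with hLb
  set U := x ^ (8/15 + δ) with hU
  set s := x ^ (K * δ) with hs
  set lo := x ^ (2/15 - (K+2) * δ) with hlo
  set hi := x ^ (2/15 + (4 * K + 7) * δ) with hhi
  set M := ⌊x ^ (1/3 - δ/2)⌋₊ with hM
  set P := (pset x).filter (fun q : ℕ => z < q) with hP
  have hk0 : (1:ℝ) ≤ k := by exact_mod_cast hk1
  have elo : Lb / (U * s) = lo := by
    rw [hLb, hU, hs, hlo, ← Real.rpow_add hx0, ← Real.rpow_sub hx0]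
    congr 1
    ring
  have ehi : (U * s) ^ 4 / Lb ^ 3 = hi := by
    rw [hLb, hU, hs, hhi, ← Real.rpow_add hx0, ← Real.rpow_mul_natCast hx0.le, ← Real.rpow_mul_natCast hx0.le, ← Real.rpow_sub hx0]
    congr 1
    push_cast
    ring
  have hhx : hi ^ 5 ≤ x ^ (9/10:ℝ) := by
    rw [hhi, ← Real.rpow_mul_natCast hx0.le]
    apply Real.rpow_le_rpow_of_exponent_le hx.le
    push_cast
    linarith
  -- the exceptional sets
  set F0 := Finset.range (N0 + 1) with hF0
  set F1 := (pset x).filter (fun p : ℕ => ¬ (p:ℤ) ∣ a ∧ ¬ (p:ℤ) ∣ b ∧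
      Nat.lcm (orderOf (a : ZMod p)) (orderOf (b : ZMod p)) < (M + 1) ^ 2) with hF1
  set F2 := (pset x).filter (fun p => ∃ q : ℕ, q.Prime ∧ z < q ∧ q ^ 2 ∣ p - 1) with hF2
  set F3 := (pset x).filter (fun p => Real.exp (K * δ * Real.log x) < sm z (p - 1)) with hF3
  set F4 := (pset x).filter (fun p => t ≤ (((pset w).filter (fun q : ℕ => z < q)).filter (fun q => q ∣ p - 1)).card) with hF4
  set F5 := (pset x).filter (fun p => ((p-1).primeFactors.filter (fun q : ℕ => z < q)).card ≤ t + 2 * k ∧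
      ∃ S : Fin 5 → Finset ℕ, (∀ i, S i ⊆ (p-1).primeFactors.filter (fun q : ℕ => z < q)) ∧
      (∀ i j, i ≠ j → Disjoint (S i) (S j)) ∧
      (∀ i, lo ≤ ((∏ q ∈ S i, q : ℕ) : ℝ) ∧ ((∏ q ∈ S i, q : ℕ) : ℝ) ≤ hi)) with hF5
  have c0 : (F0.card : ℝ) ≤ η / 8 * Y := by
    rw [hF0, Finset.card_range]
    rw [Real.rpow_zero, mul_one] at e1
    exact_mod_cast e1
  have hM1 : 1 ≤ M := by
    rw [hM]
    apply Nat.le_floor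
    push_cast
    apply Real.one_le_rpow hx.le
    linarith
  have c1 : (F1.card : ℝ) ≤ η / 8 * Y := by
    have h1 := hC1 M hM1 x hx0.le
    have h2 : (F1.card : ℝ) ≤ C1 * (M:ℝ) ^ 3 := by exact_mod_cast h1
    have h3 : (M:ℝ) ≤ x ^ (1/3 - δ/2) := Nat.floor_le (by positivity)
    calc (F1.card : ℝ) ≤ C1 * (M:ℝ) ^ 3 := h2
      _ ≤ C1 * (x ^ (1/3 - δ/2)) ^ 3 := by gcongr
      _ = C1 * x ^ (1 - 3/2 * δ) := by
        rw [← Real.rpow_mul_natCast hx0.le]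
        congr 2
        push_cast
        ring
      _ ≤ (C1 + 1) * x ^ (1 - 3/2 * δ) := by gcongr; linarith
      _ ≤ _ := e2
  have c2 : (F2.card : ℝ) ≤ η / 8 * Y := by
    have h1 := T4 x z hx0.le (by linarith)
    refine h1.trans (le_trans (le_of_eq ?_) e3)
    rw [hzd, Real.rpow_sub hx0, Real.rpow_one]
    ring
  have c3 : (F3.card : ℝ) ≤ η / 8 * Y + η / 8 * Y := by
    have h1 := T3 x B z (K * δ * Real.log x) hBT1 hB0.le hx.le (by linarith) (by positivity)
    refine h1.trans (add_le_add ?_ ?_)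
    · refine le_trans (le_of_eq ?_) e4
      rw [hzd, one_mul, ← Real.rpow_one_sub' hx0.le (by norm_num), ← Real.rpow_add hx0]
      congr 1
      norm_num
      ring
    · rw [hzd, Real.log_rpow hx0]
      calc 4 * B * (Real.log 4 * (δ * Real.log x + 2)) / (K * δ * Real.log x) ≤
            4 * B * (2 * (δ * Real.log x + δ * Real.log x)) / (K * δ * Real.log x) := by
            have := log4_lt
            gcongr
            linarith
        _ = (16 * C0 / K) * Y := by
            rw [hB]
            field_simp
            norm_num
        _ ≤ _ := by gcongr
  have c4 : (F4.card : ℝ) ≤ η / 8 * Y := by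
    have h1 := N1 x δ B k hk1 hδ hδL hδk hx hz hB0.le hBT1
    calc (F4.card : ℝ) ≤ _ := h1
      _ = (C0 * (3/4:ℝ)^k) * Y := by rw [hB]; ring
      _ ≤ _ := by gcongr
  have c5 : (F5.card : ℝ) ≤ η / 8 * Y := by
    have h1 := mainCount x B z lo hi (t + 2 * k) hx0.le hB0.le hBT1 hhx P hP
    have h2 := N2 x δ lo hi K hδ (by linarith) hx hz hxl hK0.le hlo hhi hδK1 P hP
    have h3 := N3 δ cK k hδ (by linarith) hcK0.le
    have h4 : 0 ≤ ∑ S ∈ P.powerset.filter (fun S => lo ≤ ((∏ q ∈ S, q : ℕ) : ℝ) ∧ ((∏ q ∈ S, q : ℕ) : ℝ) ≤ hi), gw (1/4) S := by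
      apply Finset.sum_nonneg
      intro S hS
      rw [Finset.mem_filter, Finset.mem_powerset] at hS
      apply gw_nonneg _ (by norm_num)
      intro q hq
      have := hS.1 hq
      rw [hP, Finset.mem_filter, mem_pset hx0.le] at this
      exact this.1.1
    calc (F5.card : ℝ) ≤ _ := h1
      _ ≤ 4 ^ (t + 2 * k) * B * (cK * δ ^ (1 - Real.log 4 / 4)) ^ 5 := by gcongr
      _ = B * (4 ^ (t + 2 * k) * (cK * δ ^ (1 - Real.log 4 / 4)) ^ 5) := by ring
      _ ≤ B * (4 * 16 ^ k * cK ^ 5 * δ ^ (5 - 13 / 4 * Real.log 4)) := by gcongr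
      _ = (C0 * (4 * 16 ^ k * cK ^ 5) * δ ^ (5 - 13 / 4 * Real.log 4)) * Y := by rw [hB]; ring
      _ ≤ _ := by gcongr
  have hcov : ((pset x).filter (fun p : ℕ => ∀ i, (orderOf ((a : ZMod p) ^ (vv i).1 * (b : ZMod p) ^ (vv i).2) : ℝ) ≤
      (p:ℝ) ^ ((8 : ℝ) / 15 + ε p))) ⊆ F0 ∪ (F1 ∪ (F2 ∪ (F3 ∪ (F4 ∪ F5)))) := by
    intro p hp
    rw [Finset.mem_filter] at hp
    obtain ⟨hpx, hord⟩ := hp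
    by_contra hcon
    simp only [Finset.mem_union, not_or] at hcon
    obtain ⟨n0, n1, n2, n3, n4, n5⟩ := hcon
    have hp' := (mem_pset hx0.le).mp hpx
    obtain ⟨hpp, hple⟩ := hp'
    have hpN : N0 < p := by
      rw [hF0, Finset.mem_range] at n0
      omega
    have hnd : ∀ c : ℤ, c ≠ 0 → c.natAbs ≤ N0 → ¬ (p:ℤ) ∣ c := by
      intro c hc hcN hd
      have := Nat.le_of_dvd (Int.natAbs_pos.mpr hc) (Int.natCast_dvd.mp hd)
      omega
    have hpa := hnd a ha ((le_max_left _ _).trans (le_max_right _ _))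
    have hpb := hnd b hb ((le_max_right _ _).trans (le_max_right _ _))
    have hεp : ε p < δ := by
      apply hP0
      calc P0 ≤ ⌈P0⌉₊ := Nat.le_ceil _
        _ ≤ (N0:ℝ) := by exact_mod_cast le_max_left _ _
        _ ≤ p := by exact_mod_cast hpN.le
    have hp1 : (1:ℝ) ≤ p := by exact_mod_cast hpp.one_lt.le
    have hUi : ∀ i, (orderOf ((a : ZMod p) ^ (vv i).1 * (b : ZMod p) ^ (vv i).2) : ℝ) ≤ U := by
      intro i
      calc _ ≤ _ := hord i
        _ ≤ (p:ℝ) ^ ((8 : ℝ) / 15 + δ) := Real.rpow_le_rpow_of_exponent_le hp1 (by linarith)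
        _ ≤ U := by
          rw [hU]
          exact Real.rpow_le_rpow (by linarith) hple (by linarith)
    have hH : Lb ≤ (Nat.lcm (orderOf (a : ZMod p)) (orderOf (b : ZMod p)) : ℕ) := by
      by_contra hlt
      apply n1
      rw [hF1, Finset.mem_filter]
      refine ⟨hpx, hpa, hpb, ?_⟩
      have h1 : x ^ (1/3 - δ/2) < M + 1 := Nat.lt_floor_add_one _
      have h2 : Lb = (x ^ (1/3 - δ/2)) ^ 2 := by
        rw [hLb, ← Real.rpow_mul_natCast hx0.le]
        congr 1
        push_cast
        ring
      have h3 : Lb < ((M:ℝ) + 1) ^ 2 := by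
        rw [h2]
        gcongr
      have h4 := lt_trans (not_le.mp hlt) h3
      exact_mod_cast h4
    have hsq : ∀ q : ℕ, q.Prime → z < q → ¬ q ^ 2 ∣ p - 1 := by
      intro q h1 h2 h3
      apply n2
      rw [hF2, Finset.mem_filter]
      exact ⟨hpx, q, h1, h2, h3⟩
    have hsm : (sm z (p - 1) : ℝ) ≤ s := by
      by_contra hlt
      apply n3
      rw [hF3, Finset.mem_filter]
      refine ⟨hpx, ?_⟩
      have : Real.exp (K * δ * Real.log x) = s := by
        rw [hs, Real.rpow_def_of_pos hx0, mul_comm (Real.log x)]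
      rw [this]
      exact not_le.mp hlt
    have hom : ((p-1).primeFactors.filter (fun q : ℕ => z < q)).card ≤ t + 2 * k := by
      have hw1 : 1 < w := by
        rw [hw]
        exact Real.one_lt_rpow hx (by positivity)
      have hwx : x ≤ w ^ (2 * k) := by
        rw [hw, ← Real.rpow_mul_natCast hx0.le]
        push_cast
        rw [one_div_mul_cancel (by positivity), Real.rpow_one]
      have h1 := omega_split x z w k hx0.le hw1 hwx p hpx
      rw [hF4, Finset.mem_filter, not_and, not_le] at n4
      have := n4 hpx
      omega
    have hper := perp a b p hpp hpa hpb z Lb U s (by linarith) (by positivity) (by positivity) hsq hH hUi hsm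
    rw [elo, ehi] at hper
    apply n5
    rw [hF5, Finset.mem_filter]
    exact ⟨hpx, hom, hper⟩
  have hle : (((pset x).filter (fun p : ℕ => ∀ i, (orderOf ((a : ZMod p) ^ (vv i).1 * (b : ZMod p) ^ (vv i).2) : ℝ) ≤
      (p:ℝ) ^ ((8 : ℝ) / 15 + ε p))).card : ℝ) ≤ F0.card + (F1.card + (F2.card + (F3.card + (F4.card + F5.card)))) := by
    have h1 := Finset.card_le_card hcov
    have h2 : (F0 ∪ (F1 ∪ (F2 ∪ (F3 ∪ (F4 ∪ F5))))).card ≤ F0.card + (F1.card + (F2.card + (F3.card + (F4.card + F5.card)))) := by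
      refine (Finset.card_union_le _ _).trans (Nat.add_le_add_left ?_ _)
      refine (Finset.card_union_le _ _).trans (Nat.add_le_add_left ?_ _)
      refine (Finset.card_union_le _ _).trans (Nat.add_le_add_left ?_ _)
      refine (Finset.card_union_le _ _).trans (Nat.add_le_add_left ?_ _)
      exact Finset.card_union_le _ _
    exact_mod_cast h1.trans h2
  have : 0 ≤ η / 8 * Y := by positivity
  refine le_trans (by convert hle) ?_
  have h8 : η * Y = 8 * (η / 8 * Y) := by ring
  rw [h8]
  linarith only [this, c0, c1, c2, c3, c4, c5]

/-- **Theorem 1′.** Let `ε(x)` be a positive-valued function of `x ≥ 2` tending to `0`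
as `x → ∞`, and let `a, b` be nonzero, multiplicatively independent integers. Then for
almost all primes `p`, at least one of `a, b, ab, a²b, ab²` has multiplicative order
mod `p` exceeding `p^(8/15 + ε(p))`. -/
theorem stmt_1 (ε : ℝ → ℝ) (hεpos : ∀ x : ℝ, 2 ≤ x → 0 < ε x)
    (hεlim : Tendsto ε atTop (nhds 0))
    (a b : ℤ) (ha : a ≠ 0) (hb : b ≠ 0)
    (hind : ∀ m n : ℤ, (a : ℚ) ^ m * (b : ℚ) ^ n = 1 → m = 0 ∧ n = 0) :
    (fun x : ℝ => (Nat.card {p : ℕ |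
        Nat.Prime p ∧ (p : ℝ) ≤ x ∧
        (max (max (max (max (orderOf ((a : ZMod p)))
            (orderOf ((b : ZMod p))))
            (orderOf (((a * b : ℤ) : ZMod p))))
            (orderOf (((a ^ 2 * b : ℤ) : ZMod p))))
            (orderOf (((a * b ^ 2 : ℤ) : ZMod p))) : ℝ)
          ≤ (p : ℝ) ^ ((8 : ℝ) / 15 + ε p)} : ℝ))
      =o[atTop] (fun x : ℝ => x / Real.log x) := by
  classical
  rw [isLittleO_iff]
  intro η hη
  filter_upwards [core ε hεlim a b ha hb hind η hη, eventually_gt_atTop 1] with x hx hx1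
  have hx0 : 0 < x := by linarith
  have hlx : 0 < Real.log x := Real.log_pos hx1
  rw [Real.norm_of_nonneg (Nat.cast_nonneg _), Real.norm_of_nonneg (by positivity)]
  refine le_trans ?_ hx
  rw [Nat.cast_le, Nat.card_coe_set_eq, ← Set.ncard_coe_finset]
  apply Set.ncard_le_ncard _ (Finset.finite_toSet _)
  rintro p ⟨hp, hpx, hm⟩
  simp only [max_le_iff] at hm
  obtain ⟨⟨⟨⟨h1, h2⟩, h3⟩, h4⟩, h5⟩ := hm
  push_cast at h1 h2 h3 h4 h5
  rw [Finset.mem_coe, Finset.mem_filter, mem_pset hx0.le]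
  refine ⟨⟨hp, hpx⟩, ?_⟩
  intro i
  fin_cases i
  · simpa [vv] using h1
  · simpa [vv] using h2
  · simpa [vv] using h3
  · simpa [vv] using h4
  · simpa [vv] using h5
end
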